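/- Let G and G' be two finitely generated co-Hopfian virtually free groups whose outer automorphism groups Out(G) and Out(G') are finite. Then the following are equivalent: (1) G and G' are ∃-equivalent; (2) G and G' are elementarily equivalent; (3) G and G' are isomorphic. -/

import Mathlib

open FirstOrder Language

/-- Function symbols of the first-order language of groups:
a binary multiplication, a unary inverse and a constant for the identity. -/
inductive GroupFunc : ℕ → Type
  | mul : GroupFunc 2
  | inv : GroupFunc 1
  | one : GroupFunc 0

/-- The first-order language of groups. -/
def groupLang : FirstOrder.Language :=
  { Functions := GroupFunc
    Relations := fun _ => Empty }

/-- Every group is a structure for the language of groups in the natural way. -/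
instance groupLangStructure (G : Type*) [Group G] : groupLang.Structure G where
  funMap {n} f v :=
    match f with
    | .mul => v 0 * v 1
    | .inv => (v 0)⁻¹
    | .one => 1
  RelMap {n} r _ := r.elim

/-- Existential formulas: iterated existential quantifications of a
quantifier-free formula. -/
inductive IsExistentialQF {α : Type*} : ∀ {n : ℕ}, groupLang.BoundedFormula α n → Prop
  | of_isQF {n : ℕ} {φ : groupLang.BoundedFormula α n} (h : φ.IsQF) : IsExistentialQF φ
  | ex {n : ℕ} {φ : groupLang.BoundedFormula α (n + 1)} (h : IsExistentialQF φ) :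
      IsExistentialQF φ.ex

/-- Universal formulas: iterated universal quantifications of a
quantifier-free formula. -/
inductive IsUniversalQF {α : Type*} : ∀ {n : ℕ}, groupLang.BoundedFormula α n → Prop
  | of_isQF {n : ℕ} {φ : groupLang.BoundedFormula α n} (h : φ.IsQF) : IsUniversalQF φ
  | all {n : ℕ} {φ : groupLang.BoundedFormula α (n + 1)} (h : IsUniversalQF φ) :
      IsUniversalQF φ.all

/-- ∀∃-formulas: iterated universal quantifications of an existential formula. -/
inductive IsAE {α : Type*} : ∀ {n : ℕ}, groupLang.BoundedFormula α n → Prop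
  | of_existential {n : ℕ} {φ : groupLang.BoundedFormula α n} (h : IsExistentialQF φ) : IsAE φ
  | all {n : ℕ} {φ : groupLang.BoundedFormula α (n + 1)} (h : IsAE φ) : IsAE φ.all

/-- A group is virtually free if it has a free subgroup of finite index. -/
def VirtuallyFree (G : Type*) [Group G] : Prop :=
  ∃ H : Subgroup G, H.FiniteIndex ∧ Nonempty (IsFreeGroup H)

/-- A group is co-Hopfian if every injective endomorphism is surjective. -/
def CoHopfian (G : Type*) [Group G] : Prop :=
  ∀ φ : G →* G, Function.Injective φ → Function.Surjective φ

/-- Two homomorphisms `φ, φ' : G → G'` are equivalent if they coincide up to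
conjugation on every finite subgroup of `G`. -/
def HomEquiv {G G' : Type*} [Group G] [Group G'] (φ φ' : G →* G') : Prop :=
  ∀ H : Subgroup G, (H : Set G).Finite →
    ∃ g' : G', ∀ h ∈ H, φ' h = g' * φ h * g'⁻¹

/-- Two groups are ∀∃-equivalent if they satisfy the same ∀∃-sentences. -/
def AEEquivalent (G : Type*) (G' : Type*) [Group G] [Group G'] : Prop :=
  ∀ φ : groupLang.Sentence, IsAE φ → (G ⊨ φ ↔ G' ⊨ φ)

/-- Two groups are ∃-equivalent if they satisfy the same existential sentences. -/
def ExistentiallyEquivalent (G : Type*) (G' : Type*) [Group G] [Group G'] : Prop :=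
  ∀ φ : groupLang.Sentence, IsExistentialQF φ → (G ⊨ φ ↔ G' ⊨ φ)

/-- An endomorphism is rigid-testing: `G` is rigid if every endomorphism
equivalent to the identity is an automorphism. -/
def Rigid (G : Type*) [Group G] : Prop :=
  ∀ φ : G →* G, HomEquiv φ (MonoidHom.id G) → Function.Bijective φ

/-- `Out G` is finite, expressed as: the inner automorphisms form a finite index
subgroup of `Aut G`. -/
def OutFinite (G : Type*) [Group G] : Prop :=
  (MulAut.conj : G →* MulAut G).range.FiniteIndex

/-- Iterated composition of an endomorphism. -/
def homPow {G : Type*} [Group G] (φ : G →* G) : ℕ → (G →* G)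
  | 0 => MonoidHom.id G
  | n + 1 => φ.comp (homPow φ n)

/-- An endomorphism `φ` of `G` is class-permuting if some positive power of `φ`
is equivalent to the identity of `G`. -/
def ClassPermuting {G : Type*} [Group G] (φ : G →* G) : Prop :=
  ∃ n : ℕ, 1 ≤ n ∧ HomEquiv (homPow φ n) (MonoidHom.id G)

/-- A maximal finite subgroup: a finite subgroup maximal with respect to
inclusion among finite subgroups. -/
def MaximalFiniteSubgroup {G : Type*} [Group G] (A : Subgroup G) : Prop :=
  (A : Set G).Finite ∧ ∀ B : Subgroup G, (B : Set G).Finite → A ≤ B → A = B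

/-- Two subgroups are conjugate. -/
def SubgroupConj {G : Type*} [Group G] (A B : Subgroup G) : Prop :=
  ∃ g : G, B = A.map (MulAut.conj g).toMonoidHom

/-- A group is strongly co-Hopfian if there is a finite subset `F` of
`G \ {1}` such that every endomorphism whose kernel misses `F` is an
automorphism. -/
def StronglyCoHopfian (G : Type*) [Group G] : Prop :=
  ∃ F : Finset G, (1 : G) ∉ F ∧
    ∀ φ : G →* G, (∀ f ∈ F, φ f ≠ 1) → Function.Bijective φ

/-- A group is finitely presented. -/
def GroupFinitelyPresented (G : Type*) [Group G] : Prop :=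
  ∃ (n : ℕ) (rels : Finset (FreeGroup (Fin n))),
    Nonempty (PresentedGroup (rels : Set (FreeGroup (Fin n))) ≃* G)

/-!
Let `F ≤ G` be a normal free subgroup of finite index.

*A tree.* In a Cayley graph of `G`, a set with finite edge boundary separating the two ends of the
axis of an element of `F`, with boundary as small as possible and then crossing as few other such
minimal cuts as possible, is nested with all its translates. These cuts are the edges of a tree on
which `G` acts with finitely many orbits and `F` acts freely.

*Presentations.* If `F` acts freely and cofinitely on a graph whose cohomology with coefficients
in every group is trivial, the elements moving a connected transversal `Y` of `F` to a set meeting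
or adjacent to `Y` form a finite set `X` presenting `G` by its multiplication table: every map from
`X` to a group respecting the products that stay in `X` extends to `G`. The size of `X` is bounded
in terms of `F` alone, because an Euler characteristic count involving only `F →* ℤ/2` bounds the
number of edges leaving `Y`.

*Detecting kernels.* There are finitely many multiplication tables of bounded size, and two
presenting sets with the same table differ by an automorphism. As `Out G` is finite, a finite set
`D ∌ 1` detects nontrivial kernel elements of bounded length over any such `X`.

*Folding.* Any endomorphism `θ` is covered by an equivariant map from the tree to its subdivision,
hence by a folding map from a larger tree. If `θ` kills no element of `D`, vertex stabilizers stay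
finite under folding, and each fold preserves triviality of the cohomology while decreasing the
number of `F`-orbits. At the end the map is locally injective, hence injective as the target is a
tree, and then so is `θ`. Thus every endomorphism killing no element of `D` is injective.

*Logic.* By the presentation, existence of a homomorphism `G → G'` killing no element of a given
finite set is an existential sentence. If `G` and `G'` are `∃`-equivalent, a composition
`G → G' → G` killing no element of `D` is injective, so each group embeds in the other, and
co-Hopficity turns the embedding of `G'` in `G` into an isomorphism.
-/

namespace VirtuallyFree

open scoped Pointwise

section Cuts

open Set

variable {V : Type*} {Γ : SimpleGraph V} {A C D : Set V} {x y : V}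

/-- The edge boundary (coboundary) of a set of vertices. -/
def edgeBoundary (Γ : SimpleGraph V) (C : Set V) : Set (Sym2 V) :=
  {e | ∃ x y, Γ.Adj x y ∧ x ∈ C ∧ y ∉ C ∧ e = s(x, y)}

theorem mk_mem_edgeBoundary : s(x, y) ∈ edgeBoundary Γ C ↔ Γ.Adj x y ∧ ¬(x ∈ C ↔ y ∈ C) := by
  constructor
  · rintro ⟨a, b, hab, ha, hb, he⟩
    rcases Sym2.eq_iff.1 he with ⟨rfl, rfl⟩ | ⟨rfl, rfl⟩
    · exact ⟨hab, by tauto⟩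
    · exact ⟨hab.symm, by tauto⟩
  · rintro ⟨hxy, hn⟩
    by_cases hx : x ∈ C
    · exact ⟨x, y, hxy, hx, by tauto, rfl⟩
    · exact ⟨y, x, hxy.symm, by tauto, hx, Sym2.eq_swap⟩

theorem edgeBoundary_compl (Γ : SimpleGraph V) (C : Set V) :
    edgeBoundary Γ Cᶜ = edgeBoundary Γ C := by
  ext e
  induction e with | _ x y
  simp only [mk_mem_edgeBoundary, mem_compl_iff]
  tauto

theorem edgeBoundary_inter_finite (hC : (edgeBoundary Γ C).Finite)
    (hD : (edgeBoundary Γ D).Finite) : (edgeBoundary Γ (C ∩ D)).Finite := by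
  refine (hC.union hD).subset fun e => ?_
  induction e with | _ x y
  simp only [mem_union, mk_mem_edgeBoundary, mem_inter_iff]
  tauto

theorem finite_endpoints_edgeBoundary (hC : (edgeBoundary Γ C).Finite) :
    {x | ∃ y, s(x, y) ∈ edgeBoundary Γ C}.Finite := by
  refine (hC.biUnion (t := fun e => {x | x ∈ e}) fun e _ => ?_).subset ?_
  · induction e with | _ a b
    exact (toFinite {a, b}).subset fun x hx => by simpa using hx
  · rintro x ⟨y, hy⟩
    exact mem_biUnion hy (Sym2.mem_mk_left x y)

theorem exists_adj_of_mem_of_notMem (hΓ : Γ.Preconnected) (hx : x ∈ C) (hy : y ∉ C) :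
    ∃ u v, Γ.Adj u v ∧ u ∈ C ∧ v ∉ C := by
  obtain ⟨p⟩ := hΓ x y
  obtain ⟨d, -, hu, hv⟩ := p.exists_boundary_dart C hx hy
  exact ⟨d.fst, d.snd, d.adj, hu, hv⟩

theorem edgeBoundary_ssubset (hΓ : Γ.Preconnected) (hAC : A ⊆ C) (hA : A.Nonempty)
    (hCA : (C \ A).Nonempty) (hsep : ∀ x ∈ A, ∀ y ∈ C \ A, ¬Γ.Adj x y) :
    edgeBoundary Γ A ⊂ edgeBoundary Γ C := by
  obtain ⟨a, ha⟩ := hA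
  obtain ⟨z, hz⟩ := hCA
  obtain ⟨u, v, huv, hu, hv⟩ := exists_adj_of_mem_of_notMem hΓ hz fun h => h.2 ha
  have hvA : v ∉ A := fun h => hsep v h u hu huv.symm
  have hvC : v ∉ C := fun h => hv ⟨h, hvA⟩
  refine ⟨?_, fun h => ?_⟩
  · rintro _ ⟨x, y, hxy, hx, hy, rfl⟩
    exact ⟨x, y, hxy, hAC hx, fun h => hsep x hx y ⟨h, hy⟩ hxy, rfl⟩
  · have huvA := h (mk_mem_edgeBoundary.2 ⟨huv, fun h => hvC (h.1 hu.1)⟩)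
    exact (mk_mem_edgeBoundary.1 huvA).2 (iff_of_false hu.2 hvA)

theorem induce_preconnected_of_forall_exists_adj
    (h : ∀ A ⊆ C, A.Nonempty → (C \ A).Nonempty → ∃ x ∈ A, ∃ y ∈ C \ A, Γ.Adj x y) :
    (Γ.induce C).Preconnected := by
  rintro ⟨a, ha⟩ ⟨b, hb⟩
  by_contra hab
  obtain ⟨x, ⟨hxC, hx⟩, y, ⟨hyC, hy⟩, hxy⟩ :=
    h {z | ∃ hz : z ∈ C, (Γ.induce C).Reachable ⟨a, ha⟩ ⟨z, hz⟩} (fun z hz => hz.1)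
      ⟨a, ha, .rfl⟩ ⟨b, hb, fun hb' => hab hb'.2⟩
  exact hy ⟨hyC, hx.trans (SimpleGraph.Adj.reachable (G := Γ.induce C) hxy)⟩

theorem exists_mem_edgeBoundary_of_inter_nonempty (hD : (Γ.induce D).Preconnected)
    (h₁ : (D ∩ C).Nonempty) (h₂ : (D ∩ Cᶜ).Nonempty) :
    ∃ x ∈ D, ∃ y, s(x, y) ∈ edgeBoundary Γ C := by
  obtain ⟨a, haD, haC⟩ := h₁
  obtain ⟨b, hbD, hbC⟩ := h₂
  obtain ⟨x, y, hxy, hx, hy⟩ := exists_adj_of_mem_of_notMem (C := {z : D | z.1 ∈ C}) hD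
    (x := ⟨a, haD⟩) (y := ⟨b, hbD⟩) haC hbC
  exact ⟨x, x.2, y, mk_mem_edgeBoundary.2 ⟨hxy, fun h => hy (h.1 hx)⟩⟩

/-- A tight cut: a set of vertices with finite edge boundary such that it and its complement
are connected. -/
structure IsTightCut (Γ : SimpleGraph V) (C : Set V) : Prop where
  preconnected : (Γ.induce C).Preconnected
  preconnected_compl : (Γ.induce Cᶜ).Preconnected
  finite : (edgeBoundary Γ C).Finite

theorem subset_reachable_deleteEdges {E : Set (Sym2 V)} (hC : (Γ.induce C).Preconnected)
    (hE : E ⊆ edgeBoundary Γ C) (hx : x ∈ C) : C ⊆ {z | (Γ.deleteEdges E).Reachable x z} := by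
  intro z hz
  let f : Γ.induce C →g Γ.deleteEdges E :=
    { toFun := Subtype.val
      map_rel' := fun {u v} huv => SimpleGraph.deleteEdges_adj.2
        ⟨huv, fun h => (mk_mem_edgeBoundary.1 (hE h)).2 (iff_of_true u.2 v.2)⟩ }
  exact (hC ⟨x, hx⟩ ⟨z, hz⟩).map f

theorem IsTightCut.eq_setOf_reachable {E : Set (Sym2 V)} (hC : IsTightCut Γ C)
    (hE : E ⊆ edgeBoundary Γ C) (hx : x ∈ C) (hy : y ∉ C)
    (hxy : ¬(Γ.deleteEdges E).Reachable x y) : C = {z | (Γ.deleteEdges E).Reachable x z} := by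
  refine (subset_reachable_deleteEdges hC.preconnected hE hx).antisymm fun z hz => ?_
  by_contra hzC
  have hyz := subset_reachable_deleteEdges hC.preconnected_compl
    (hE.trans (edgeBoundary_compl Γ C).ge) hy hzC
  exact hxy (hz.trans hyz.symm)

theorem exists_edge_mem_edgeBoundary_diff {E : Set (Sym2 V)} (p : (Γ.deleteEdges E).Walk x y)
    (hx : x ∈ C) (hy : y ∉ C) : ∃ e ∈ p.edges, e ∈ edgeBoundary Γ C \ E := by
  obtain ⟨d, hd, hd₁, hd₂⟩ := p.exists_boundary_dart C hx hy
  obtain ⟨hadj, hdE⟩ := SimpleGraph.deleteEdges_adj.1 d.adj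
  exact ⟨d.edge, List.mem_map_of_mem hd,
    mk_mem_edgeBoundary.2 ⟨hadj, fun h => hd₂ (h.1 hd₁)⟩, hdE⟩

theorem finite_tightCuts_of_subset_edgeBoundary (Γ : SimpleGraph V) (x y : V)
    (E : Set (Sym2 V)) (k : ℕ) :
    {C | IsTightCut Γ C ∧ x ∈ C ∧ y ∉ C ∧ E ⊆ edgeBoundary Γ C ∧
      (edgeBoundary Γ C \ E).ncard ≤ k}.Finite := by
  induction k generalizing E with
  | zero =>
    refine (finite_singleton {z | (Γ.deleteEdges E).Reachable x z}).subset ?_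
    rintro C ⟨hC, hx, hy, hE, hk⟩
    refine hC.eq_setOf_reachable hE hx hy ?_
    rintro ⟨p⟩
    obtain ⟨e, -, he⟩ := exists_edge_mem_edgeBoundary_diff p hx hy
    exact (ncard_pos (hC.finite.subset sdiff_subset)).2 ⟨e, he⟩ |>.not_ge hk
  | succ k ih =>
    by_cases hr : (Γ.deleteEdges E).Reachable x y
    · obtain ⟨p⟩ := hr
      refine (p.edges.finite_toSet.biUnion fun e _ => ih (insert e E)).subset ?_
      rintro C ⟨hC, hx, hy, hE, hk⟩
      obtain ⟨e, hep, he⟩ := exists_edge_mem_edgeBoundary_diff p hx hy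
      refine mem_biUnion hep ⟨hC, hx, hy, insert_subset he.1 hE, ?_⟩
      have hlt := ncard_sdiff_singleton_lt_of_mem he (hC.finite.subset sdiff_subset)
      rw [sdiff_sdiff, union_singleton] at hlt
      omega
    · refine (finite_singleton {z | (Γ.deleteEdges E).Reachable x z}).subset ?_
      rintro C ⟨hC, hx, hy, hE, -⟩
      exact hC.eq_setOf_reachable hE hx hy hr

theorem finite_tightCuts (Γ : SimpleGraph V) (x y : V) (k : ℕ) :
    {C | IsTightCut Γ C ∧ x ∈ C ∧ y ∉ C ∧ (edgeBoundary Γ C).ncard ≤ k}.Finite := by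
  simpa only [empty_subset, sdiff_empty, true_and] using
    finite_tightCuts_of_subset_edgeBoundary Γ x y ∅ k

section Counting

variable {α : Type*} {A B P Q : Set α}

theorem ncard_add_ncard_le_of_union_inter_subset (hP : P.Finite) (hQ : Q.Finite)
    (hunion : A ∪ B ⊆ P ∪ Q) (hinter : A ∩ B ⊆ P ∩ Q) :
    A.ncard + B.ncard ≤ P.ncard + Q.ncard := by
  have hfin : (A ∪ B).Finite := (hP.union hQ).subset hunion
  rw [← ncard_union_add_ncard_inter A B (hfin.subset subset_union_left)
    (hfin.subset subset_union_right), ← ncard_union_add_ncard_inter P Q hP hQ]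
  exact Nat.add_le_add (ncard_le_ncard hunion (hP.union hQ))
    (ncard_le_ncard hinter (hP.subset inter_subset_left))

theorem ncard_add_ncard_lt_of_union_ssubset (hP : P.Finite) (hQ : Q.Finite)
    (hunion : A ∪ B ⊂ P ∪ Q) (hinter : A ∩ B ⊆ P ∩ Q) :
    A.ncard + B.ncard < P.ncard + Q.ncard := by
  have hfin : (A ∪ B).Finite := (hP.union hQ).subset hunion.subset
  rw [← ncard_union_add_ncard_inter A B (hfin.subset subset_union_left)
    (hfin.subset subset_union_right), ← ncard_union_add_ncard_inter P Q hP hQ]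
  exact Nat.add_lt_add_of_lt_of_le (ncard_lt_ncard hunion (hP.union hQ))
    (ncard_le_ncard hinter (hP.subset inter_subset_left))

end Counting

theorem ncard_edgeBoundary_corner_add_le (hC : (edgeBoundary Γ C).Finite)
    (hD : (edgeBoundary Γ D).Finite) :
    (edgeBoundary Γ (C ∩ D)).ncard + (edgeBoundary Γ (Cᶜ ∩ Dᶜ)).ncard ≤
      (edgeBoundary Γ C).ncard + (edgeBoundary Γ D).ncard := by
  apply ncard_add_ncard_le_of_union_inter_subset hC hD
  · intro e
    induction e with | _ x y
    simp only [mem_union, mk_mem_edgeBoundary, mem_inter_iff, mem_compl_iff]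
    tauto
  · intro e
    induction e with | _ x y
    simp only [mk_mem_edgeBoundary, mem_inter_iff, mem_compl_iff]
    tauto

end Cuts

section NestedCuts

open Set Filter

variable {V : Type*} {Γ : SimpleGraph V} {𝒜 : Set (Filter V × Filter V)} {k : ℕ}
  {C D E F : Set V} {p : Filter V} {α β : Filter V × Filter V}

/-- The set `C` separates the two filters of a pair, in either direction. -/
def Separates (C : Set V) (α : Filter V × Filter V) : Prop :=
  (C ∈ α.1 ∧ Cᶜ ∈ α.2) ∨ (Cᶜ ∈ α.1 ∧ C ∈ α.2)

theorem Separates.compl (h : Separates C α) : Separates Cᶜ α := by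
  simpa only [Separates, _root_.compl_compl, or_comm] using h

/-- A filter behaving like an end of the graph: it lies on one side of every cut with finite
edge boundary. -/
def IsEndFilter (Γ : SimpleGraph V) (p : Filter V) : Prop :=
  p.NeBot ∧ ∀ C : Set V, (edgeBoundary Γ C).Finite → C ∈ p ∨ Cᶜ ∈ p

/-- Both filters of a pair are end filters. -/
def IsEndPair (Γ : SimpleGraph V) (α : Filter V × Filter V) : Prop :=
  IsEndFilter Γ α.1 ∧ IsEndFilter Γ α.2

theorem Separates.nonempty (h : Separates C α) (hα : IsEndPair Γ α) : C.Nonempty := by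
  have := hα.1.1
  have := hα.2.1
  exact h.elim (fun h => nonempty_of_mem h.1) fun h => nonempty_of_mem h.2

theorem compl_inter_mem_left (h : Cᶜ ∈ p) : (C ∩ D)ᶜ ∈ p :=
  mem_of_superset h (compl_subset_compl.2 inter_subset_left)

theorem Separates.inter_of_mem (h : Separates C α) (h₁ : D ∈ α.1) (h₂ : D ∈ α.2) :
    Separates (C ∩ D) α :=
  h.imp (fun h => ⟨inter_mem h.1 h₁, compl_inter_mem_left h.2⟩)
    fun h => ⟨compl_inter_mem_left h.1, inter_mem h.2 h₂⟩

theorem Separates.inter_or_diff (h : Separates C α) (hα : IsEndPair Γ α)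
    (hD : (edgeBoundary Γ D).Finite) : Separates (C ∩ D) α ∨ Separates (C ∩ Dᶜ) α := by
  rcases h with ⟨h₁, h₂⟩ | ⟨h₁, h₂⟩
  · exact (hα.1.2 D hD).imp (fun h => .inl ⟨inter_mem h₁ h, compl_inter_mem_left h₂⟩)
      fun h => .inl ⟨inter_mem h₁ h, compl_inter_mem_left h₂⟩
  · exact (hα.2.2 D hD).imp (fun h => .inr ⟨compl_inter_mem_left h₁, inter_mem h₂ h⟩)
      fun h => .inr ⟨compl_inter_mem_left h₁, inter_mem h₂ h⟩

theorem Separates.diagonal (hC : Separates C α) (hD : Separates D α) :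
    (Separates (C ∩ D) α ∧ Separates (Cᶜ ∩ Dᶜ) α) ∨
      (Separates (C ∩ Dᶜ) α ∧ Separates (Cᶜ ∩ D) α) := by
  have corner : ∀ {A B : Set V}, (A ∈ α.1 ∧ Aᶜ ∈ α.2) → B ∈ α.1 → Separates (A ∩ B) α :=
    fun hA hB => .inl ⟨inter_mem hA.1 hB, compl_inter_mem_left hA.2⟩
  have corner' : ∀ {A B : Set V}, (Aᶜ ∈ α.1 ∧ A ∈ α.2) → B ∈ α.2 → Separates (A ∩ B) α :=
    fun hA hB => .inr ⟨compl_inter_mem_left hA.1, inter_mem hA.2 hB⟩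
  have swap : ∀ {A : Set V} {p q : Filter V}, A ∈ p ∧ Aᶜ ∈ q → Aᶜᶜ ∈ p ∧ Aᶜ ∈ q :=
    fun h => ⟨by rw [_root_.compl_compl]; exact h.1, h.2⟩
  have swap' : ∀ {A : Set V} {p q : Filter V}, Aᶜ ∈ p ∧ A ∈ q → Aᶜ ∈ p ∧ Aᶜᶜ ∈ q :=
    fun h => ⟨h.1, by rw [_root_.compl_compl]; exact h.2⟩
  rcases hC with hC | hC <;> rcases hD with hD | hD
  · exact .inl ⟨corner hC hD.1, corner' (swap hC) hD.2⟩
  · exact .inr ⟨corner hC hD.1, corner' (swap hC) hD.2⟩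
  · exact .inr ⟨corner' hC hD.2, corner (swap' hC) hD.1⟩
  · exact .inl ⟨corner' hC hD.2, corner (swap' hC) hD.1⟩

/-- The sets separating a pair of filters whose edge boundary is as small as possible. -/
def minimalCuts (Γ : SimpleGraph V) (α : Filter V × Filter V) : Set (Set V) :=
  {C | (edgeBoundary Γ C).Finite ∧ Separates C α ∧
    ∀ D, (edgeBoundary Γ D).Finite → Separates D α →
      (edgeBoundary Γ C).ncard ≤ (edgeBoundary Γ D).ncard}

theorem compl_mem_minimalCuts (h : C ∈ minimalCuts Γ α) : Cᶜ ∈ minimalCuts Γ α := by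
  refine ⟨?_, h.2.1.compl, ?_⟩ <;> rw [edgeBoundary_compl]
  exacts [h.1, h.2.2]

theorem mem_minimalCuts_of_ncard_le (hC : C ∈ minimalCuts Γ α) (hD : (edgeBoundary Γ D).Finite)
    (hDα : Separates D α) (hle : (edgeBoundary Γ D).ncard ≤ (edgeBoundary Γ C).ncard) :
    D ∈ minimalCuts Γ α :=
  ⟨hD, hDα, fun E hE hEα => hle.trans (hC.2.2 E hE hEα)⟩

theorem exists_forall_le_of_nonempty {ι : Type*} {s : Set ι} (hs : s.Nonempty) (f : ι → ℕ) :
    ∃ a ∈ s, ∀ b ∈ s, f a ≤ f b := by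
  obtain ⟨a, ha, hmin⟩ := exists_minimalFor_of_wellFoundedLT (· ∈ s) f hs
  exact ⟨a, ha, fun b hb => (le_total (f b) (f a)).elim (hmin hb) id⟩

theorem minimalCuts_nonempty (hC : (edgeBoundary Γ C).Finite) (hα : Separates C α) :
    (minimalCuts Γ α).Nonempty := by
  obtain ⟨D, hD, hmin⟩ := exists_forall_le_of_nonempty
    (s := {C | (edgeBoundary Γ C).Finite ∧ Separates C α}) ⟨C, hC, hα⟩
    fun C => (edgeBoundary Γ C).ncard
  exact ⟨D, hD.1, hD.2, fun E hE hEα => hmin E ⟨hE, hEα⟩⟩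

theorem preconnected_of_mem_minimalCuts (hΓ : Γ.Preconnected) (hα : IsEndPair Γ α)
    (h : C ∈ minimalCuts Γ α) : (Γ.induce C).Preconnected := by
  refine induce_preconnected_of_forall_exists_adj fun A hAC hA hCA => ?_
  by_contra! hsep
  have hsep' : ∀ x ∈ C \ A, ∀ y ∈ C \ (C \ A), ¬Γ.Adj x y := fun x hx y hy hxy =>
    hsep y (sdiff_sdiff_cancel_left hAC ▸ hy) x hx hxy.symm
  have hA' := edgeBoundary_ssubset hΓ hAC hA hCA hsep
  have hCA' := edgeBoundary_ssubset hΓ sdiff_subset hCA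
    (by rwa [sdiff_sdiff_cancel_left hAC]) hsep'
  have hmin : ∀ B, edgeBoundary Γ B ⊂ edgeBoundary Γ C → ¬Separates B α := fun B hB hBα =>
    (ncard_lt_ncard hB h.1).not_ge (h.2.2 B (h.1.subset hB.subset) hBα)
  rcases h.2.1.inter_or_diff hα (h.1.subset hA'.subset) with hAα | hAα
  · exact hmin A hA' (inter_eq_right.2 hAC ▸ hAα)
  · exact hmin (C \ A) hCA' hAα

theorem isTightCut_of_mem_minimalCuts (hΓ : Γ.Preconnected) (hα : IsEndPair Γ α)
    (h : C ∈ minimalCuts Γ α) : IsTightCut Γ C :=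
  ⟨preconnected_of_mem_minimalCuts hΓ hα h,
    preconnected_of_mem_minimalCuts hΓ hα (compl_mem_minimalCuts h), h.1⟩

/-- Two sets of vertices cross if all four corners are nonempty. -/
def Crosses (F C : Set V) : Prop :=
  (F ∩ C).Nonempty ∧ (F ∩ Cᶜ).Nonempty ∧ (Fᶜ ∩ C).Nonempty ∧ (Fᶜ ∩ Cᶜ).Nonempty

theorem Crosses.symm (h : Crosses F C) : Crosses C F := by
  unfold Crosses at *
  simp only [inter_comm C, inter_comm Cᶜ]
  tauto

theorem crosses_compl_right : Crosses F Cᶜ ↔ Crosses F C := by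
  unfold Crosses
  simp only [_root_.compl_compl]
  tauto

theorem Crosses.compl_left (h : Crosses F C) : Crosses Fᶜ C :=
  (crosses_compl_right.2 h.symm).symm

theorem Crosses.left_or_right_of_inter (h : Crosses F (C ∩ D)) (hCD : (Cᶜ ∩ Dᶜ).Nonempty) :
    Crosses F C ∨ Crosses F D := by
  simp only [Crosses, Set.Nonempty, mem_inter_iff, mem_compl_iff] at *
  grind

theorem Crosses.left_and_right_of_inter (h : Crosses F (C ∩ D)) (h' : Crosses F (Cᶜ ∩ Dᶜ)) :
    Crosses F C ∧ Crosses F D := by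
  simp only [Crosses, Set.Nonempty, mem_inter_iff, mem_compl_iff] at *
  grind

theorem not_crosses_inter_self : ¬Crosses C (C ∩ D) := by
  rintro ⟨-, -, ⟨a, ha, ha'⟩, -⟩
  exact ha ha'.1

/-- The minimal cuts of all the pairs in a family. -/
def allMinimalCuts (Γ : SimpleGraph V) (𝒜 : Set (Filter V × Filter V)) : Set (Set V) :=
  {C | ∃ α ∈ 𝒜, C ∈ minimalCuts Γ α}

/-- The minimal cuts of a family crossing a given set. -/
def crossingCuts (Γ : SimpleGraph V) (𝒜 : Set (Filter V × Filter V)) (C : Set V) : Set (Set V) :=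
  {F | F ∈ allMinimalCuts Γ 𝒜 ∧ Crosses F C}

/-- A family of pairs of ends of a connected graph which can all be separated by cuts with at
most `k` edges. -/
structure IsSeparableFamily (Γ : SimpleGraph V) (𝒜 : Set (Filter V × Filter V)) (k : ℕ) :
    Prop where
  preconnected : Γ.Preconnected
  isEndPair : ∀ α ∈ 𝒜, IsEndPair Γ α
  exists_separates : ∀ α ∈ 𝒜, ∃ C : Set V,
    (edgeBoundary Γ C).Finite ∧ (edgeBoundary Γ C).ncard ≤ k ∧ Separates C α

theorem IsSeparableFamily.isTightCut (h : IsSeparableFamily Γ 𝒜 k)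
    (hC : C ∈ allMinimalCuts Γ 𝒜) : IsTightCut Γ C :=
  let ⟨α, hα, hCα⟩ := hC
  isTightCut_of_mem_minimalCuts h.preconnected (h.isEndPair α hα) hCα

theorem IsSeparableFamily.ncard_edgeBoundary_le (h : IsSeparableFamily Γ 𝒜 k)
    (hC : C ∈ allMinimalCuts Γ 𝒜) : (edgeBoundary Γ C).ncard ≤ k := by
  obtain ⟨α, hα, hCα⟩ := hC
  obtain ⟨D, hD, hDk, hDα⟩ := h.exists_separates α hα
  exact (hCα.2.2 D hD hDα).trans hDk

theorem IsSeparableFamily.finite_allMinimalCuts_between (h : IsSeparableFamily Γ 𝒜 k)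
    (x y : V) : {C | C ∈ allMinimalCuts Γ 𝒜 ∧ x ∈ C ∧ y ∉ C}.Finite :=
  (finite_tightCuts Γ x y k).subset fun _ ⟨hC, hx, hy⟩ =>
    ⟨h.isTightCut hC, hx, hy, h.ncard_edgeBoundary_le hC⟩

theorem IsSeparableFamily.finite_crossingCuts (h : IsSeparableFamily Γ 𝒜 k)
    (hC : (edgeBoundary Γ C).Finite) : (crossingCuts Γ 𝒜 C).Finite := by
  have hfin := finite_endpoints_edgeBoundary hC
  refine ((hfin.prod hfin).biUnion
    fun xy _ => h.finite_allMinimalCuts_between xy.1 xy.2).subset ?_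
  rintro F ⟨hF, hFC⟩
  have hcut := h.isTightCut hF
  obtain ⟨x, hx, hxC⟩ :=
    exists_mem_edgeBoundary_of_inter_nonempty hcut.preconnected hFC.1 hFC.2.1
  obtain ⟨y, hy, hyC⟩ :=
    exists_mem_edgeBoundary_of_inter_nonempty hcut.preconnected_compl hFC.2.2.1 hFC.2.2.2
  exact mem_biUnion (x := (x, y)) ⟨hxC, hyC⟩ ⟨hF, hx, hy⟩

theorem crossingCuts_compl (C : Set V) : crossingCuts Γ 𝒜 Cᶜ = crossingCuts Γ 𝒜 C := by
  simp only [crossingCuts, crosses_compl_right]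

theorem IsSeparableFamily.ncard_crossingCuts_corner_add_lt (h : IsSeparableFamily Γ 𝒜 k)
    (hC : C ∈ allMinimalCuts Γ 𝒜) (hD : D ∈ allMinimalCuts Γ 𝒜) (hCD : Crosses C D) :
    (crossingCuts Γ 𝒜 (C ∩ D)).ncard + (crossingCuts Γ 𝒜 (Cᶜ ∩ Dᶜ)).ncard <
      (crossingCuts Γ 𝒜 C).ncard + (crossingCuts Γ 𝒜 D).ncard := by
  have corner : ∀ C D : Set V, (Cᶜ ∩ Dᶜ).Nonempty →
      crossingCuts Γ 𝒜 (C ∩ D) ⊆ crossingCuts Γ 𝒜 C ∪ crossingCuts Γ 𝒜 D :=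
    fun C D hne F hF => (hF.2.left_or_right_of_inter hne).imp (.intro hF.1) (.intro hF.1)
  refine ncard_add_ncard_lt_of_union_ssubset (h.finite_crossingCuts (h.isTightCut hC).finite)
    (h.finite_crossingCuts (h.isTightCut hD).finite) ⟨?_, fun hsub => ?_⟩ fun F hF => ?_
  · have hcompl := corner Cᶜ Dᶜ (by simpa only [_root_.compl_compl] using hCD.1)
    rw [crossingCuts_compl, crossingCuts_compl] at hcompl
    exact union_subset (corner C D hCD.2.2.2) hcompl
  · rcases hsub (.inr ⟨hC, hCD⟩) with hC' | hC'
    · exact not_crosses_inter_self hC'.2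
    · have := hC'.2.compl_left
      exact not_crosses_inter_self this
  · have := hF.1.2.left_and_right_of_inter hF.2.2
    exact ⟨⟨hF.1.1, this.1⟩, ⟨hF.1.1, this.2⟩⟩

/-- The minimal cuts of a pair in `𝒜` which are crossed by as few minimal cuts as possible. -/
def optimalCuts (Γ : SimpleGraph V) (𝒜 : Set (Filter V × Filter V)) (α : Filter V × Filter V) :
    Set (Set V) :=
  {C | C ∈ minimalCuts Γ α ∧
    ∀ D ∈ minimalCuts Γ α, (crossingCuts Γ 𝒜 C).ncard ≤ (crossingCuts Γ 𝒜 D).ncard}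

theorem compl_mem_optimalCuts (h : C ∈ optimalCuts Γ 𝒜 α) : Cᶜ ∈ optimalCuts Γ 𝒜 α :=
  ⟨compl_mem_minimalCuts h.1, by rw [crossingCuts_compl]; exact h.2⟩

theorem ncard_lt_or_le_of_mem_optimalCuts (hC : C ∈ optimalCuts Γ 𝒜 α)
    (hE : (edgeBoundary Γ E).Finite) (hEα : Separates E α) :
    (edgeBoundary Γ C).ncard < (edgeBoundary Γ E).ncard ∨
      ((edgeBoundary Γ C).ncard = (edgeBoundary Γ E).ncard ∧
        (crossingCuts Γ 𝒜 C).ncard ≤ (crossingCuts Γ 𝒜 E).ncard) := by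
  rcases (hC.1.2.2 E hE hEα).lt_or_eq with hlt | heq
  · exact .inl hlt
  · exact .inr ⟨heq, hC.2 E (mem_minimalCuts_of_ncard_le hC.1 hE hEα heq.ge)⟩

section Corners

variable (h : IsSeparableFamily Γ 𝒜 k) (hα : α ∈ 𝒜) (hβ : β ∈ 𝒜)
  (hC : C ∈ optimalCuts Γ 𝒜 α) (hD : D ∈ optimalCuts Γ 𝒜 β) (hCD : Crosses C D)
include h hα hβ hC hD hCD

theorem not_separates_opposite_corners (hα' : Separates (C ∩ D) α) :
    ¬Separates (Cᶜ ∩ Dᶜ) β := by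
  intro hβ'
  have hedges := ncard_edgeBoundary_corner_add_le hC.1.1 hD.1.1
  have hcross := h.ncard_crossingCuts_corner_add_lt ⟨α, hα, hC.1⟩ ⟨β, hβ, hD.1⟩ hCD
  have h₁ := ncard_lt_or_le_of_mem_optimalCuts hC (edgeBoundary_inter_finite hC.1.1 hD.1.1) hα'
  have h₂ := ncard_lt_or_le_of_mem_optimalCuts hD (edgeBoundary_inter_finite
    (compl_mem_minimalCuts hC.1).1 (compl_mem_minimalCuts hD.1).1) hβ'
  omega

/-- The contradiction comes from adding up the corner inequalities of both diagonals. -/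
theorem not_separates_different_diagonals
    (hα' : Separates (C ∩ D) α ∧ Separates (Cᶜ ∩ Dᶜ) α) :
    ¬(Separates (C ∩ Dᶜ) β ∧ Separates (Cᶜ ∩ D) β) := by
  intro hβ'
  have hC' := compl_mem_minimalCuts hC.1
  have hD' := compl_mem_minimalCuts hD.1
  have hedges := ncard_edgeBoundary_corner_add_le hC.1.1 hD.1.1
  have hcross := h.ncard_crossingCuts_corner_add_lt ⟨α, hα, hC.1⟩ ⟨β, hβ, hD.1⟩ hCD
  have hedges' := ncard_edgeBoundary_corner_add_le hC.1.1 hD'.1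
  have hcross' := h.ncard_crossingCuts_corner_add_lt ⟨α, hα, hC.1⟩ ⟨β, hβ, hD'⟩
    (crosses_compl_right.2 hCD)
  rw [_root_.compl_compl] at hedges' hcross'
  rw [edgeBoundary_compl] at hedges'
  rw [crossingCuts_compl D] at hcross'
  have h₁ := ncard_lt_or_le_of_mem_optimalCuts hC (edgeBoundary_inter_finite hC.1.1 hD.1.1) hα'.1
  have h₂ := ncard_lt_or_le_of_mem_optimalCuts hC (edgeBoundary_inter_finite hC'.1 hD'.1) hα'.2
  have h₃ := ncard_lt_or_le_of_mem_optimalCuts hD (edgeBoundary_inter_finite hC.1.1 hD'.1) hβ'.1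
  have h₄ := ncard_lt_or_le_of_mem_optimalCuts hD (edgeBoundary_inter_finite hC'.1 hD.1.1) hβ'.2
  omega

theorem not_mem_both_of_crosses : ¬(D ∈ α.1 ∧ D ∈ α.2) := by
  rintro ⟨h₁, h₂⟩
  have hCα := hC.1.2.1
  have hC' := compl_mem_optimalCuts hC
  rcases hD.1.2.1.compl.inter_or_diff (h.isEndPair β hβ) hC.1.1 with hβ' | hβ'
  · refine not_separates_opposite_corners h hα hβ hC' hD hCD.compl_left
      (hCα.compl.inter_of_mem h₁ h₂) ?_
    rwa [_root_.compl_compl, inter_comm]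
  · refine not_separates_opposite_corners h hα hβ hC hD hCD (hCα.inter_of_mem h₁ h₂) ?_
    rwa [inter_comm]

theorem separates_of_crosses : Separates D α := by
  have hα' := h.isEndPair α hα
  have hD₁ := not_mem_both_of_crosses h hα hβ hC hD hCD
  have hD₂ := not_mem_both_of_crosses h hα hβ hC (compl_mem_optimalCuts hD)
    (crosses_compl_right.2 hCD)
  rcases hα'.1.2 D hD.1.1 with h₁ | h₁ <;> rcases hα'.2.2 D hD.1.1 with h₂ | h₂
  · exact (hD₁ ⟨h₁, h₂⟩).elim
  · exact .inl ⟨h₁, h₂⟩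
  · exact .inr ⟨h₁, h₂⟩
  · exact (hD₂ ⟨h₁, h₂⟩).elim

end Corners

theorem IsSeparableFamily.not_crosses (h : IsSeparableFamily Γ 𝒜 k) (hα : α ∈ 𝒜) (hβ : β ∈ 𝒜)
    (hC : C ∈ optimalCuts Γ 𝒜 α) (hD : D ∈ optimalCuts Γ 𝒜 β) : ¬Crosses C D := by
  intro hCD
  have hD' := compl_mem_optimalCuts hD
  have hCD' : Crosses C Dᶜ := crosses_compl_right.2 hCD
  have diagα := hC.1.2.1.diagonal (separates_of_crosses h hα hβ hC hD hCD)
  have diagβ := (separates_of_crosses h hβ hα hD hC hCD.symm).diagonal hD.1.2.1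
  rcases diagα with hα' | hα' <;> rcases diagβ with hβ' | hβ'
  · exact not_separates_opposite_corners h hα hβ hC hD hCD hα'.1 hβ'.2
  · exact not_separates_different_diagonals h hα hβ hC hD hCD hα' hβ'
  · refine not_separates_different_diagonals h hα hβ hC hD' hCD' ?_ ?_ <;>
      rwa [_root_.compl_compl]
  · refine not_separates_opposite_corners h hα hβ hC hD' hCD' hα'.1 ?_
    rw [_root_.compl_compl]
    exact hβ'.2

/-- The optimal cuts of all the pairs in a family. -/
def optimalCutSystem (Γ : SimpleGraph V) (𝒜 : Set (Filter V × Filter V)) : Set (Set V) :=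
  {C | ∃ α ∈ 𝒜, C ∈ optimalCuts Γ 𝒜 α}

theorem compl_mem_optimalCutSystem (h : C ∈ optimalCutSystem Γ 𝒜) :
    Cᶜ ∈ optimalCutSystem Γ 𝒜 :=
  h.imp fun _ hα => hα.imp_right compl_mem_optimalCuts

theorem optimalCutSystem_subset_allMinimalCuts :
    optimalCutSystem Γ 𝒜 ⊆ allMinimalCuts Γ 𝒜 :=
  fun _ ⟨α, hα, hC⟩ => ⟨α, hα, hC.1⟩

theorem IsSeparableFamily.nonempty_of_mem_optimalCutSystem (h : IsSeparableFamily Γ 𝒜 k)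
    (hC : C ∈ optimalCutSystem Γ 𝒜) : C.Nonempty :=
  let ⟨α, hα, hCα⟩ := hC
  hCα.1.2.1.nonempty (h.isEndPair α hα)

theorem IsSeparableFamily.exists_mem_optimalCutSystem_separates
    (h : IsSeparableFamily Γ 𝒜 k) (hα : α ∈ 𝒜) : ∃ C ∈ optimalCutSystem Γ 𝒜, Separates C α := by
  obtain ⟨C, hC, -, hCα⟩ := h.exists_separates α hα
  obtain ⟨D, hD, hmin⟩ := exists_forall_le_of_nonempty (minimalCuts_nonempty hC hCα)
    fun C => (crossingCuts Γ 𝒜 C).ncard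
  exact ⟨D, ⟨α, hα, hD, hmin⟩, hD.2.1⟩

end NestedCuts

section Invariance

open Set Filter

variable {G V : Type*} [Group G] [MulAction G V] {Γ : SimpleGraph V}
  {𝒜 : Set (Filter V × Filter V)} {C F : Set V} {α : Filter V × Filter V}

/-- The graph is invariant under the action of `G` on its vertices. -/
def IsInvariant (G : Type*) {V : Type*} [Group G] [MulAction G V] (Γ : SimpleGraph V) : Prop :=
  ∀ (g : G) (x y : V), Γ.Adj x y → Γ.Adj (g • x) (g • y)

theorem IsInvariant.adj_smul_iff (hΓ : IsInvariant G Γ) (g : G) {x y : V} :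
    Γ.Adj (g • x) (g • y) ↔ Γ.Adj x y :=
  ⟨fun h => by simpa only [inv_smul_smul] using hΓ g⁻¹ _ _ h, hΓ g x y⟩

theorem IsInvariant.edgeBoundary_smul (hΓ : IsInvariant G Γ) (g : G) (C : Set V) :
    edgeBoundary Γ (g • C) = Sym2.map (g • ·) '' edgeBoundary Γ C := by
  ext e
  constructor
  · rintro ⟨x, y, hxy, hx, hy, rfl⟩
    rw [mem_smul_set_iff_inv_smul_mem] at hx hy
    exact ⟨s(g⁻¹ • x, g⁻¹ • y), ⟨_, _, hΓ g⁻¹ x y hxy, hx, hy, rfl⟩, by simp⟩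
  · rintro ⟨_, ⟨x, y, hxy, hx, hy, rfl⟩, rfl⟩
    exact ⟨g • x, g • y, hΓ g x y hxy, smul_mem_smul_set hx, by rwa [smul_mem_smul_set_iff],
      Sym2.map_mk ..⟩

theorem IsInvariant.edgeBoundary_smul_finite (hΓ : IsInvariant G Γ) (g : G)
    (hC : (edgeBoundary Γ C).Finite) : (edgeBoundary Γ (g • C)).Finite := by
  rw [hΓ.edgeBoundary_smul]
  exact hC.image _

theorem IsInvariant.ncard_edgeBoundary_smul (hΓ : IsInvariant G Γ) (g : G) (C : Set V) :
    (edgeBoundary Γ (g • C)).ncard = (edgeBoundary Γ C).ncard := by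
  rw [hΓ.edgeBoundary_smul]
  exact ncard_image_of_injective _ (Sym2.map.injective (MulAction.injective g))

theorem Separates.smul (g : G) (h : Separates C α) : Separates (g • C) (g • α) := by
  simp only [Separates, ← smul_set_compl]
  exact h.imp (.imp smul_set_mem_smul_filter smul_set_mem_smul_filter)
    (.imp smul_set_mem_smul_filter smul_set_mem_smul_filter)

theorem IsInvariant.smul_mem_minimalCuts (hΓ : IsInvariant G Γ) (g : G)
    (h : C ∈ minimalCuts Γ α) : g • C ∈ minimalCuts Γ (g • α) := by
  refine ⟨hΓ.edgeBoundary_smul_finite g h.1, h.2.1.smul g, fun D hD hDα => ?_⟩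
  have hle := h.2.2 (g⁻¹ • D) (hΓ.edgeBoundary_smul_finite _ hD)
    (by simpa only [inv_smul_smul] using hDα.smul g⁻¹)
  rwa [hΓ.ncard_edgeBoundary_smul] at hle ⊢

theorem Crosses.smul (g : G) (h : Crosses F C) : Crosses (g • F) (g • C) := by
  simpa only [Crosses, ← smul_set_compl, ← smul_set_inter, smul_set_nonempty] using h

theorem IsInvariant.smul_crossingCuts_subset (hΓ : IsInvariant G Γ)
    (h𝒜 : ∀ (g : G), ∀ α ∈ 𝒜, g • α ∈ 𝒜) (g : G) (C : Set V) :
    g • crossingCuts Γ 𝒜 C ⊆ crossingCuts Γ 𝒜 (g • C) := by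
  rintro _ ⟨F, ⟨⟨α, hα, hF⟩, hFC⟩, rfl⟩
  exact ⟨⟨g • α, h𝒜 g α hα, hΓ.smul_mem_minimalCuts g hF⟩, hFC.smul g⟩

theorem IsInvariant.ncard_crossingCuts_smul (hΓ : IsInvariant G Γ)
    (h𝒜 : ∀ (g : G), ∀ α ∈ 𝒜, g • α ∈ 𝒜) (g : G) (C : Set V) :
    (crossingCuts Γ 𝒜 (g • C)).ncard = (crossingCuts Γ 𝒜 C).ncard := by
  have hsub := hΓ.smul_crossingCuts_subset h𝒜 g⁻¹ (g • C)
  rw [inv_smul_smul, smul_set_subset_iff_subset_inv_smul_set, inv_inv] at hsub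
  rw [hsub.antisymm (hΓ.smul_crossingCuts_subset h𝒜 g C), ncard_smul_set]

theorem IsInvariant.smul_mem_optimalCutSystem (hΓ : IsInvariant G Γ)
    (h𝒜 : ∀ (g : G), ∀ α ∈ 𝒜, g • α ∈ 𝒜) (g : G) (h : C ∈ optimalCutSystem Γ 𝒜) :
    g • C ∈ optimalCutSystem Γ 𝒜 := by
  obtain ⟨α, hα, hC, hmin⟩ := h
  refine ⟨g • α, h𝒜 g α hα, hΓ.smul_mem_minimalCuts g hC, fun D hD => ?_⟩
  have hle := hmin (g⁻¹ • D) (by simpa only [inv_smul_smul] using hΓ.smul_mem_minimalCuts g⁻¹ hD)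
  rwa [hΓ.ncard_crossingCuts_smul h𝒜] at hle ⊢

end Invariance

section FirstLetter

open Set Filter

variable {ι : Type*} [DecidableEq ι]

/-- The inverse of the first letter of a reduced word, read off as the last letter of the inverse
word; `none` for the empty word. -/
def firstLetterInv (f : FreeGroup ι) : Option (ι × Bool) := f⁻¹.toWord.getLast?

theorem getLast?_reduce_cons {x : ι × Bool} {L : List (ι × Bool)} (hL : FreeGroup.IsReduced L)
    (hne : L ≠ []) (hx : L ≠ [(x.1, !x.2)]) :
    (FreeGroup.reduce (x :: L)).getLast? = L.getLast? := by
  rw [FreeGroup.reduce.cons, hL.reduce_eq]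
  rcases L with _ | ⟨y, _ | ⟨z, L⟩⟩
  · exact absurd rfl hne
  · have hc : ¬(x.1 = y.1 ∧ x.2 = !y.2) := by
      rintro ⟨h₁, h₂⟩
      exact hx (by simp [h₁, h₂])
    simp [hc]
  · by_cases hc : x.1 = y.1 ∧ x.2 = !y.2 <;> simp [hc, List.getLast?_cons_cons]

theorem finite_firstLetterInv_ne_mul_inv_letter (x : ι × Bool) :
    {f : FreeGroup ι | firstLetterInv f ≠ firstLetterInv (f * (FreeGroup.mk [x])⁻¹)}.Finite := by
  refine (toFinite {1, FreeGroup.mk [x]}).subset fun f hf => ?_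
  by_contra hfx
  simp only [mem_insert_iff, mem_singleton_iff, not_or] at hfx
  refine hf ?_
  have hword : (f * (FreeGroup.mk [x])⁻¹)⁻¹.toWord = FreeGroup.reduce (x :: f⁻¹.toWord) := by
    rw [mul_inv_rev, inv_inv, FreeGroup.toWord_mul, FreeGroup.toWord_mk]
    rfl
  rw [firstLetterInv, firstLetterInv, hword,
    getLast?_reduce_cons FreeGroup.isReduced_toWord]
  · simpa only [ne_eq, FreeGroup.toWord_eq_nil_iff, inv_eq_one] using hfx.1
  · intro h
    refine hfx.2 (inv_injective ?_)
    rw [← FreeGroup.mk_toWord (x := f⁻¹), h]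
    rfl

theorem finite_firstLetterInv_ne_mul (c : FreeGroup ι) :
    {f : FreeGroup ι | firstLetterInv f ≠ firstLetterInv (f * c)}.Finite := by
  induction c using FreeGroup.induction_on with
  | C1 => simp
  | of a => exact finite_firstLetterInv_ne_mul_inv_letter (a, false)
  | inv_of a _ => exact finite_firstLetterInv_ne_mul_inv_letter (a, true)
  | mul c d hc hd =>
    refine (hc.union (hd.preimage (mul_left_injective c).injOn)).subset fun f hf => ?_
    by_contra hcon
    simp only [mem_union, mem_preimage, mem_ofPred_eq, not_or, ne_eq, not_not] at hcon
    exact hf (by rw [hcon.1, hcon.2, mul_assoc])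

theorem exists_conj_firstLetterInv_pow_eq {h : FreeGroup ι} (hh : h ≠ 1) :
    ∃ u c b b', h = u * c * u⁻¹ ∧ c ≠ 1 ∧ b ≠ b' ∧
      (∀ i : ℕ, firstLetterInv (c ^ (i + 1)) = b) ∧
      ∀ i : ℕ, firstLetterInv (c⁻¹ ^ (i + 1)) = b' := by
  set L := FreeGroup.reduceCyclically h.toWord
  have hL : FreeGroup.IsCyclicallyReduced L :=
    FreeGroup.reduceCyclically.isCyclicallyReduced FreeGroup.isReduced_toWord
  set u := FreeGroup.mk (FreeGroup.reduceCyclically.conjugator h.toWord)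
  have hconj : h = u * FreeGroup.mk L * u⁻¹ := by
    conv_lhs => rw [← FreeGroup.mk_toWord (x := h),
      ← FreeGroup.reduceCyclically.conj_conjugator_reduceCyclically h.toWord]
    simp only [← FreeGroup.mul_mk, ← FreeGroup.inv_mk]
    rfl
  have hc : FreeGroup.mk L ≠ 1 := fun h1 => hh (by rw [hconj, h1]; group)
  have hne : L ≠ [] := fun h0 => hc (by rw [h0, FreeGroup.one_eq_mk])
  have hpow (i : ℕ) : (FreeGroup.mk L ^ (i + 1)).toWord = (List.replicate (i + 1) L).flatten := by
    rw [FreeGroup.pow_mk, FreeGroup.toWord_mk]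
    exact (hL.flatten_replicate _).isReduced.reduce_eq
  refine ⟨u, FreeGroup.mk L, L.head?.map fun x => (x.1, !x.2), L.getLast?, hconj, hc, ?_, ?_, ?_⟩
  · have hlast := List.getLast?_eq_some_getLast hne
    have hhead := List.head?_eq_some_head hne
    intro heq
    have hcyc := hL.2 _ hlast _ hhead
    rw [hhead, hlast, Option.map_some, Option.some.injEq] at heq
    simp [← heq] at hcyc
  · intro i
    rw [firstLetterInv, FreeGroup.toWord_inv, hpow, FreeGroup.invRev, List.getLast?_reverse,
      List.head?_map, List.head?_flatten_replicate i.succ_ne_zero]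
  · intro i
    rw [firstLetterInv, ← inv_pow, inv_inv, hpow, List.getLast?_flatten_replicate i.succ_ne_zero]

theorem eventually_notMem_pow_of_finite {M : Type*} [LeftCancelMonoid M] {c : M}
    (hc : ¬IsOfFinOrder c) {s : Set M} (hs : s.Finite) : ∀ᶠ i : ℕ in atTop, c ^ i ∉ s := by
  rw [← Nat.cofinite_eq_atTop]
  exact (hs.preimage (injective_pow_iff_not_isOfFinOrder.2 hc).injOn).eventually_cofinite_notMem

theorem eventually_firstLetterInv_pow_mul {c : FreeGroup ι} (hc : c ≠ 1)
    {b : Option (ι × Bool)} (hb : ∀ i : ℕ, firstLetterInv (c ^ (i + 1)) = b) (w : FreeGroup ι) :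
    ∀ᶠ i : ℕ in atTop, firstLetterInv (c ^ i * w) = b := by
  filter_upwards [eventually_notMem_pow_of_finite (not_isOfFinOrder_of_isMulTorsionFree hc)
    (finite_firstLetterInv_ne_mul w), eventually_ge_atTop 1] with i hi hi1
  rw [not_ne_iff] at hi
  obtain ⟨j, rfl⟩ := Nat.exists_eq_add_of_le' hi1
  rw [← hi, hb]

end FirstLetter

section Cayley

open Set Filter SimpleGraph

variable {G : Type*} [Group G] {S C : Set G}

theorem isInvariant_mulCayley (S : Set G) : IsInvariant G (mulCayley S) :=
  fun _ _ _ => mulCayley_adj_mul_iff_right.2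

theorem reachable_mulCayley_mul {s : G} (hs : s ∈ S) (x : G) :
    (mulCayley S).Reachable x (x * s) := by
  by_cases h : x = x * s
  · rw [← h]
  · exact Adj.reachable ((mulCayley_adj' ..).2 ⟨h, s, hs, .inl rfl⟩)

theorem preconnected_mulCayley (hS : Subgroup.closure S = ⊤) : (mulCayley S).Preconnected := by
  have reachable (g : G) : ∀ x, (mulCayley S).Reachable x (x * g) := by
    have hg : g ∈ Subgroup.closure S := hS ▸ Subgroup.mem_top g
    induction hg using Subgroup.closure_induction with
    | mem s hs => exact reachable_mulCayley_mul hs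
    | one => intro x; rw [mul_one]
    | mul a b _ _ ha hb => intro x; rw [← mul_assoc]; exact (ha x).trans (hb _)
    | inv a _ ha =>
      intro x
      simpa only [inv_mul_cancel_right] using (ha (x * a⁻¹)).symm
  intro x y
  simpa only [mul_inv_cancel_left] using reachable (x⁻¹ * y) x

theorem finite_mem_iff_mul_mem_not (hS : Subgroup.closure S = ⊤)
    (hC : (edgeBoundary (mulCayley S) C).Finite) (h : G) : {x | ¬(x ∈ C ↔ x * h ∈ C)}.Finite := by
  have hh : h ∈ Subgroup.closure S := hS ▸ Subgroup.mem_top h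
  induction hh using Subgroup.closure_induction with
  | mem s hs =>
    refine (finite_endpoints_edgeBoundary hC).subset fun x hx => ⟨x * s, ?_⟩
    refine mk_mem_edgeBoundary.2 ⟨(mulCayley_adj' ..).2 ⟨fun h => ?_, s, hs, .inl rfl⟩, hx⟩
    rw [mem_ofPred_eq, ← h] at hx
    exact hx Iff.rfl
  | one => simp
  | mul a b _ _ ha hb =>
    refine (ha.union (hb.preimage (mul_left_injective a).injOn)).subset fun x hx => ?_
    simp only [mem_union, mem_preimage, mem_ofPred_eq, ← mul_assoc] at hx ⊢
    tauto
  | inv a _ ha =>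
    refine (ha.preimage (mul_left_injective a⁻¹).injOn).subset fun x hx => ?_
    simp only [mem_preimage, mem_ofPred_eq, inv_mul_cancel_right] at hx ⊢
    tauto

theorem finite_iUnion_edgeBoundary_fiber {β : Type*} (hS : S.Finite) {f : G → β}
    (hf : ∀ s ∈ S, {x | f x ≠ f (x * s)}.Finite) :
    (⋃ b, edgeBoundary (mulCayley S) {x | f x = b}).Finite := by
  refine (hS.biUnion fun s hs => (hf s hs).image fun x => s(x, x * s)).subset ?_
  simp only [iUnion_subset_iff]
  rintro b _ ⟨x, y, hxy, hx, hy, rfl⟩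
  obtain ⟨-, s, hs, rfl | rfl⟩ := (mulCayley_adj' ..).1 hxy
  · exact mem_biUnion hs ⟨x, fun h => hy (h.symm.trans hx), rfl⟩
  · exact mem_biUnion hs ⟨y, fun h => hy (h.trans hx), Sym2.eq_swap⟩

theorem eventually_or_eventually_not_of_iff_succ {P : ℕ → Prop}
    (h : ∀ᶠ i in atTop, (P i ↔ P (i + 1))) : (∀ᶠ i in atTop, P i) ∨ ∀ᶠ i in atTop, ¬P i := by
  obtain ⟨N, hN⟩ := eventually_atTop.1 h
  have hP : ∀ i ≥ N, (P i ↔ P N) := fun i hi => by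
    induction i, hi using Nat.le_induction with
    | base => rfl
    | succ i hi ih => exact (hN i hi).symm.trans ih
  exact (em (P N)).imp (fun h => eventually_atTop.2 ⟨N, fun i hi => (hP i hi).2 h⟩)
    fun h => eventually_atTop.2 ⟨N, fun i hi => mt (hP i hi).1 h⟩

/-- The filter on `G` generated by the tails of the ray `g, g h, g h², …`; when `h` has infinite
order it stands for the end of the Cayley graph to which the ray converges. -/
def rayFilter (g h : G) : Filter G := map (fun i : ℕ => g * h ^ i) atTop

theorem smul_rayFilter (k g h : G) : k • rayFilter g h = rayFilter (k * g) h := by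
  rw [rayFilter, ← Filter.map_smul, Filter.map_map]
  simp only [rayFilter, Function.comp_def, smul_eq_mul, mul_assoc]

theorem isEndFilter_rayFilter (hS : Subgroup.closure S = ⊤) (g : G) {h : G}
    (hh : ¬IsOfFinOrder h) : IsEndFilter (mulCayley S) (rayFilter g h) := by
  refine ⟨map_neBot, fun C hC => eventually_or_eventually_not_of_iff_succ ?_⟩
  have hfin := (finite_mem_iff_mul_mem_not hS hC h).preimage (mul_right_injective g).injOn
  filter_upwards [eventually_notMem_pow_of_finite hh hfin] with i hi
  simpa only [mem_preimage, mem_ofPred_eq, not_not, pow_succ, ← mul_assoc] using hi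

/-- The pairs of opposite ends of the translates of the axes of nontrivial elements of `F`. -/
def axisEndPairs (F : Subgroup G) : Set (Filter G × Filter G) :=
  {α | ∃ g, ∃ h ∈ F, h ≠ 1 ∧ α = (rayFilter g h, rayFilter g h⁻¹)}

theorem smul_mem_axisEndPairs {F : Subgroup G} (k : G) {α : Filter G × Filter G}
    (hα : α ∈ axisEndPairs F) : k • α ∈ axisEndPairs F := by
  obtain ⟨g, h, hF, hh, rfl⟩ := hα
  exact ⟨k * g, h, hF, hh, by rw [Prod.smul_mk, smul_rayFilter, smul_rayFilter]⟩

end Cayley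

section CosetLabel

open Set Filter SimpleGraph

variable {G : Type*} [Group G] {ι : Type*} [DecidableEq ι] (F : Subgroup G)

/-- The component of `x` in `F` when `x` is written as an element of `F` times the inverse of a
chosen representative of the left coset `x⁻¹ F`. -/
noncomputable def cosetPart (x : G) : F :=
  ⟨x * ((x⁻¹ : G) : G ⧸ F).out, by
    simpa only [inv_inv] using QuotientGroup.eq.1 (QuotientGroup.out_eq' ((x⁻¹ : G) : G ⧸ F)).symm⟩

theorem cosetPart_coe_mul (f : F) (x : G) : cosetPart F (f * x) = f * cosetPart F x := by
  have hcoset : (((f * x : G)⁻¹ : G) : G ⧸ F) = (x⁻¹ : G) := by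
    rw [eq_comm, QuotientGroup.eq]
    simp
  ext
  simp only [cosetPart, Subgroup.coe_mul]
  rw [hcoset, mul_assoc]

variable {F}

/-- The function on `G` extending `firstLetterInv` from a free subgroup; its fibres are the vertex
sets of cuts separating the ends of axes. -/
noncomputable def cosetLabel (e : F ≃* FreeGroup ι) (x : G) : Option (ι × Bool) :=
  firstLetterInv (e (cosetPart F x))

theorem finite_cosetLabel_ne_mul [F.FiniteIndex] (e : F ≃* FreeGroup ι) (s : G) :
    {x | cosetLabel e x ≠ cosetLabel e (x * s)}.Finite := by
  let r (q : G ⧸ F) : G := q.out⁻¹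
  refine (finite_iUnion fun q : G ⧸ F => (finite_firstLetterInv_ne_mul
    (e (cosetPart F (r q * s)))).image fun f => (e.symm f : G) * r q).subset fun x hx => ?_
  have hx_eq : (cosetPart F x : G) * r (x⁻¹ : G) = x := by simp [cosetPart, r]
  refine mem_iUnion.2 ⟨(x⁻¹ : G), e (cosetPart F x), ?_, by simpa using hx_eq⟩
  rw [mem_ofPred_eq, ← map_mul, ← cosetPart_coe_mul, ← mul_assoc, hx_eq]
  exact hx

theorem eventually_cosetLabel_mul_pow (e : F ≃* FreeGroup ι) {u c : FreeGroup ι} (hc : c ≠ 1)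
    {b : Option (ι × Bool)} (hb : ∀ i : ℕ, firstLetterInv (c ^ (i + 1)) = b)
    {h : F} (hh : e h = u * c * u⁻¹) :
    ∀ᶠ i : ℕ in atTop, cosetLabel e ((e.symm u⁻¹ : F) * (h : G) ^ i) = b := by
  filter_upwards [eventually_firstLetterInv_pow_mul hc hb (u⁻¹ * e (cosetPart F 1))] with i hi
  have hpow : ((e.symm u⁻¹ : F) * (h : G) ^ i) = (e.symm (c ^ i * u⁻¹) : F) * (1 : G) := by
    rw [← e.symm_apply_apply h, hh, ← Subgroup.coe_pow, ← map_pow, conj_pow, ← Subgroup.coe_mul,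
      ← map_mul, mul_one]
    group
  rw [cosetLabel, hpow, cosetPart_coe_mul, map_mul, e.apply_symm_apply, mul_assoc, hi]

theorem exists_separates_rayFilter_cosetLabel (e : F ≃* FreeGroup ι) {h : F} (hh : h ≠ 1) :
    ∃ x : G, ∃ b, Separates {y | cosetLabel e y = b} (rayFilter x (h : G), rayFilter x (h : G)⁻¹)
    := by
  obtain ⟨u, c, b, b', huc, hc, hbb', hb, hb'⟩ :=
    exists_conj_firstLetterInv_pow_eq (e.map_eq_one_iff.not.2 hh)
  refine ⟨(e.symm u⁻¹ : F), b, .inl ⟨eventually_cosetLabel_mul_pow e hc hb huc, ?_⟩⟩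
  have hinv : e h⁻¹ = u * c⁻¹ * u⁻¹ := by rw [map_inv, huc]; group
  exact (eventually_cosetLabel_mul_pow e (inv_ne_one.2 hc) hb' hinv).mono
    fun i hi hi' => hbb' (hi'.symm.trans hi)

omit [DecidableEq ι] in
theorem eq_one_of_isOfFinOrder (e : F ≃* FreeGroup ι) : ∀ h ∈ F, IsOfFinOrder h → h = 1 := by
  intro h hh hfin
  by_contra hne
  have hne' : (⟨h, hh⟩ : F) ≠ 1 := fun h1 => hne (congrArg Subtype.val h1)
  exact not_isOfFinOrder_of_isMulTorsionFree (e.map_eq_one_iff.not.2 hne')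
    (e.toMonoidHom.isOfFinOrder (Submonoid.isOfFinOrder_coe.1 hfin))

omit [DecidableEq ι] in
theorem isSeparableFamily_axisEndPairs {S : Set G} (hSfin : S.Finite)
    (hS : Subgroup.closure S = ⊤) [F.FiniteIndex] (e : F ≃* FreeGroup ι) :
    ∃ k, IsSeparableFamily (mulCayley S) (axisEndPairs F) k := by
  classical
  have hfin := finite_iUnion_edgeBoundary_fiber hSfin fun s _ => finite_cosetLabel_ne_mul e s
  refine ⟨(⋃ b, edgeBoundary (mulCayley S) {y | cosetLabel e y = b}).ncard,
    preconnected_mulCayley hS, ?_, ?_⟩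
  · rintro _ ⟨g, h, hF, hh, rfl⟩
    have hinf : ¬IsOfFinOrder h := fun hfin => hh (eq_one_of_isOfFinOrder e h hF hfin)
    exact ⟨isEndFilter_rayFilter hS g hinf,
      isEndFilter_rayFilter hS g (isOfFinOrder_inv_iff.not.2 hinf)⟩
  · rintro _ ⟨g, h, hF, hh, rfl⟩
    obtain ⟨x, b, hsep⟩ := exists_separates_rayFilter_cosetLabel e (h := ⟨h, hF⟩)
      fun h1 => hh (congr_arg Subtype.val h1)
    have hsub := subset_iUnion (fun b => edgeBoundary (mulCayley S) {y | cosetLabel e y = b}) b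
    refine ⟨(g * x⁻¹) • {y | cosetLabel e y = b},
      (isInvariant_mulCayley S).edgeBoundary_smul_finite _ (hfin.subset hsub), ?_, ?_⟩
    · rw [(isInvariant_mulCayley S).ncard_edgeBoundary_smul]
      exact ncard_le_ncard hsub hfin
    · simpa only [Prod.smul_mk, smul_rayFilter, inv_mul_cancel_right] using hsep.smul (g * x⁻¹)

end CosetLabel

section DualTree

open Set

variable {V : Type*} {𝓔 O O' P P' : Set (Set V)} {C D : Set V}

/-- A nested system of cuts, closed under complementation and with finitely many cuts between any
two points. -/
structure IsNestedCutSystem (𝓔 : Set (Set V)) : Prop where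
  compl_mem : ∀ C ∈ 𝓔, Cᶜ ∈ 𝓔
  nested : ∀ C ∈ 𝓔, ∀ D ∈ 𝓔, C ⊆ D ∨ C ⊆ Dᶜ ∨ Cᶜ ⊆ D ∨ Cᶜ ⊆ Dᶜ
  finite_between : ∀ x y, {C | C ∈ 𝓔 ∧ x ∈ C ∧ y ∉ C}.Finite
  nonempty : ∀ C ∈ 𝓔, C.Nonempty

/-- A choice of one side of every cut of `𝓔`, upward closed and containing all but finitely many
of the sides containing any given point. -/
structure IsOrientation (𝓔 O : Set (Set V)) : Prop where
  subset : O ⊆ 𝓔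
  compl_mem_iff : ∀ C ∈ 𝓔, (Cᶜ ∈ O ↔ C ∉ O)
  mem_of_subset : ∀ C ∈ O, ∀ D ∈ 𝓔, C ⊆ D → D ∈ O
  finite_notMem : ∀ x, {C | C ∈ O ∧ x ∉ C}.Finite

/-- The vertices of the dual tree of a nested cut system. -/
def DualVertex (𝓔 : Set (Set V)) : Type _ := {O : Set (Set V) // IsOrientation 𝓔 O}

theorem IsOrientation.sdiff_comm (hO : IsOrientation 𝓔 O) (hO' : IsOrientation 𝓔 O')
    (hC : O \ O' = {C}) : O' \ O = {Cᶜ} := by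
  have compl_mem {O O' : Set (Set V)} (hO : IsOrientation 𝓔 O) (hO' : IsOrientation 𝓔 O')
      {D : Set V} (hD : D ∈ O \ O') : Dᶜ ∈ O' \ O :=
    have hD𝓔 := hO.subset hD.1
    ⟨(hO'.compl_mem_iff D hD𝓔).2 hD.2, fun h => (hO.compl_mem_iff D hD𝓔).1 h hD.1⟩
  ext D
  rw [mem_singleton_iff, eq_compl_comm, eq_comm (a := C), ← mem_singleton_iff (b := C), ← hC]
  refine ⟨compl_mem hO' hO, fun hD => ?_⟩
  simpa only [_root_.compl_compl] using compl_mem hO hO' hD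

theorem IsOrientation.eq_of_sdiff_eq_empty (hO : IsOrientation 𝓔 O) (hO' : IsOrientation 𝓔 O')
    (h : O \ O' = ∅) : O = O' := by
  rw [sdiff_eq_empty] at h
  refine h.antisymm fun C hC => by_contra fun hCO => ?_
  have hC𝓔 := hO'.subset hC
  exact (hO'.compl_mem_iff C hC𝓔).1 (h ((hO.compl_mem_iff C hC𝓔).2 hCO)) hC

theorem IsOrientation.finite_sdiff [Nonempty V] (hO : IsOrientation 𝓔 O)
    (hO' : IsOrientation 𝓔 O') : (O \ O').Finite := by
  inhabit V
  refine ((hO.finite_notMem default).union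
    ((hO'.finite_notMem default).preimage compl_injective.injOn)).subset fun C hC => ?_
  by_cases hx : default ∈ C
  · exact .inr ⟨(hO'.compl_mem_iff C (hO.subset hC.1)).2 hC.2, fun h => h hx⟩
  · exact .inl ⟨hC.1, hx⟩

theorem isOrientation_principal (h : IsNestedCutSystem 𝓔) (x : V) :
    IsOrientation 𝓔 {C | C ∈ 𝓔 ∧ x ∈ C} where
  subset _ hC := hC.1
  compl_mem_iff C hC := by
    simp only [mem_ofPred_eq, h.compl_mem C hC, hC, mem_compl_iff, true_and]
  mem_of_subset C hC D hD hCD := ⟨hD, hCD hC.2⟩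
  finite_notMem y := (h.finite_between x y).subset fun _ ⟨⟨hC, hx⟩, hy⟩ => ⟨hC, hx, hy⟩

theorem IsOrientation.flip (h : IsNestedCutSystem 𝓔) (hO : IsOrientation 𝓔 O) (hC : C ∈ O)
    (hmin : ∀ D ∈ O, D ⊆ C → D = C) : IsOrientation 𝓔 (insert Cᶜ (O \ {C})) := by
  have hC𝓔 := hO.subset hC
  have hCc : Cᶜ ≠ C := by
    intro heq
    obtain ⟨z, hz⟩ := h.nonempty C hC𝓔
    exact (heq.symm ▸ hz : z ∈ Cᶜ) hz
  refine ⟨?_, fun D hD => ?_, ?_, fun x => ?_⟩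
  · rintro D (rfl | hD)
    · exact h.compl_mem C hC𝓔
    · exact hO.subset hD.1
  · by_cases hDC : D = C
    · subst hDC
      simp [hCc.symm]
    by_cases hDC' : D = Cᶜ
    · subst hDC'
      simpa using hCc.symm
    have hDC'' : Dᶜ ≠ C := fun heq => hDC' (by rw [← heq, _root_.compl_compl])
    simp only [mem_insert_iff, compl_inj_iff, Set.mem_sdiff, mem_singleton_iff, hDC, hDC', hDC'',
      hO.compl_mem_iff D hD]
    tauto
  · rintro D (rfl | ⟨hD, hDC⟩) E hE hDE
    · refine or_iff_not_imp_left.2 fun hEC => ⟨by_contra fun hEO => hEC ?_, ?_⟩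
      · have := hmin Eᶜ ((hO.compl_mem_iff E hE).2 hEO) (compl_subset_comm.1 hDE)
        rw [← this, _root_.compl_compl]
      · rintro rfl
        obtain ⟨z, hz⟩ := h.nonempty _ (h.compl_mem _ hE)
        exact hz (hDE hz)
    · refine .inr ⟨hO.mem_of_subset D hD E hE hDE, ?_⟩
      rintro rfl
      exact hDC (hmin D hD hDE)
  · refine ((hO.finite_notMem x).insert Cᶜ).subset ?_
    rintro D ⟨rfl | hD, hx⟩
    · exact mem_insert _ _
    · exact .inr ⟨hD.1, hx⟩

/-- The structure tree of a nested cut system: two orientations are adjacent when they differ on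
a single cut. -/
def dualTree (𝓔 : Set (Set V)) : SimpleGraph (DualVertex 𝓔) where
  Adj O O' := ∃ C, O.1 \ O'.1 = {C}
  symm := ⟨fun O O' ⟨C, hC⟩ => ⟨Cᶜ, O.2.sdiff_comm O'.2 hC⟩⟩
  loopless := ⟨fun O ⟨C, hC⟩ => singleton_ne_empty C (by rw [← hC, sdiff_self])⟩

theorem exists_dualTree_adj_ncard_sdiff_lt [Nonempty V] (h : IsNestedCutSystem 𝓔)
    {O O' : DualVertex 𝓔} (hne : (O.1 \ O'.1).Nonempty) :
    ∃ P, (dualTree 𝓔).Adj O P ∧ (P.1 \ O'.1).ncard < (O.1 \ O'.1).ncard := by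
  have hfin := O.2.finite_sdiff O'.2
  obtain ⟨C, ⟨hC, hCO'⟩, hCmin⟩ := hfin.exists_minimal hne
  have hmin : ∀ D ∈ O.1, D ⊆ C → D = C := fun D hD hDC => hDC.antisymm <|
    hCmin ⟨hD, fun hDO' => hCO' (O'.2.mem_of_subset D hDO' C (O.2.subset hC) hDC)⟩ hDC
  have hCcO : Cᶜ ∉ O.1 := fun h => (O.2.compl_mem_iff C (O.2.subset hC)).1 h hC
  have hCcO' : Cᶜ ∈ O'.1 := (O'.2.compl_mem_iff C (O.2.subset hC)).2 hCO'
  refine ⟨⟨_, O.2.flip h hC hmin⟩, ⟨C, ?_⟩, ?_⟩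
  · ext D
    simp only [Set.mem_sdiff, mem_insert_iff, mem_singleton_iff, not_or, not_and, not_not]
    refine ⟨fun hD => hD.2.2 hD.1, ?_⟩
    rintro rfl
    exact ⟨hC, fun heq => hCcO (heq ▸ hC), fun _ => rfl⟩
  · refine ncard_lt_ncard ⟨?_, fun hsub => ?_⟩ hfin
    · rintro D ⟨rfl | hD, hDO'⟩
      · exact absurd hCcO' hDO'
      · exact ⟨hD.1, hDO'⟩
    · rcases (hsub ⟨hC, hCO'⟩).1 with heq | hD
      · exact hCcO (heq ▸ hC)
      · exact hD.2 rfl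

theorem preconnected_dualTree [Nonempty V] (h : IsNestedCutSystem 𝓔) :
    (dualTree 𝓔).Preconnected := by
  intro O O'
  induction hn : (O.1 \ O'.1).ncard using Nat.strong_induction_on generalizing O with
  | _ n ih
  subst hn
  rcases (O.1 \ O'.1).eq_empty_or_nonempty with hempty | hne
  · rw [Subtype.ext (O.2.eq_of_sdiff_eq_empty O'.2 hempty)]
  · obtain ⟨P, hOP, hlt⟩ := exists_dualTree_adj_ncard_sdiff_lt h hne
    exact hOP.reachable.trans (ih _ hlt P rfl)

theorem IsNestedCutSystem.subset_of_sdiff_eq (h : IsNestedCutSystem 𝓔) (hO : IsOrientation 𝓔 O)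
    (hO' : IsOrientation 𝓔 O') (hP : IsOrientation 𝓔 P) (hP' : IsOrientation 𝓔 P')
    (hC : O \ O' = {C}) (hC' : P \ P' = {C}) : P ⊆ O := by
  intro D hD
  have hD𝓔 := hP.subset hD
  have hCO : C ∈ O \ O' := hC ▸ rfl
  have hCP : C ∈ P \ P' := hC' ▸ rfl
  have hO'O := hO.sdiff_comm hO' hC
  have hCcO' : Cᶜ ∈ O' \ O := hO'O ▸ rfl
  have hCcP' : Cᶜ ∈ P' \ P := hP.sdiff_comm hP' hC' ▸ rfl
  rcases h.nested C (hO.subset hCO.1) D hD𝓔 with hCD | hCD | hCD | hCD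
  · exact hO.mem_of_subset C hCO.1 D hD𝓔 hCD
  · have hDc := hP.mem_of_subset C hCP.1 _ (h.compl_mem D hD𝓔) hCD
    exact absurd hD ((hP.compl_mem_iff D hD𝓔).1 hDc)
  · by_contra hDO
    have hDC : D ∈ O' \ O := ⟨hO'.mem_of_subset _ hCcO'.1 D hD𝓔 hCD, hDO⟩
    rw [hO'O, mem_singleton_iff] at hDC
    exact hCcP'.2 (hDC ▸ hD)
  · have hDc := hP'.mem_of_subset _ hCcP'.1 _ (h.compl_mem D hD𝓔) hCD
    have hDC : D ∈ P \ P' := ⟨hD, (hP'.compl_mem_iff D hD𝓔).1 hDc⟩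
    rw [hC', mem_singleton_iff] at hDC
    exact hDC ▸ hCO.1

theorem IsNestedCutSystem.eq_and_eq_of_sdiff_eq (h : IsNestedCutSystem 𝓔)
    {O O' P P' : DualVertex 𝓔} (hC : O.1 \ O'.1 = {C}) (hC' : P.1 \ P'.1 = {C}) :
    P = O ∧ P' = O' := by
  have unique {O O' P P' : DualVertex 𝓔} {C : Set V} (hC : O.1 \ O'.1 = {C})
      (hC' : P.1 \ P'.1 = {C}) : P = O :=
    Subtype.ext <| (h.subset_of_sdiff_eq O.2 O'.2 P.2 P'.2 hC hC').antisymm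
      (h.subset_of_sdiff_eq P.2 P'.2 O.2 O'.2 hC' hC)
  exact ⟨unique hC hC', unique (O.2.sdiff_comm O'.2 hC) (P.2.sdiff_comm P'.2 hC')⟩

theorem isAcyclic_dualTree (h : IsNestedCutSystem 𝓔) : (dualTree 𝓔).IsAcyclic := by
  rw [SimpleGraph.isAcyclic_iff_forall_adj_isBridge]
  rintro O O' ⟨C, hC⟩
  rw [SimpleGraph.isBridge_iff_forall_walk_mem_edges]
  intro p
  have hCO : C ∈ O.1 \ O'.1 := hC ▸ rfl
  obtain ⟨d, hd, hfst, hsnd⟩ := p.exists_boundary_dart {P | C ∈ P.1} hCO.1 hCO.2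
  obtain ⟨D, hD⟩ := d.adj
  have hCD : C ∈ d.fst.1 \ d.snd.1 := ⟨hfst, hsnd⟩
  rw [hD, mem_singleton_iff] at hCD
  obtain ⟨hO, hO'⟩ := h.eq_and_eq_of_sdiff_eq hC (hCD ▸ hD)
  have hmem : s(d.fst, d.snd) ∈ p.edges := List.mem_map_of_mem (f := SimpleGraph.Dart.edge) hd
  rwa [hO, hO'] at hmem

theorem isTree_dualTree [Nonempty V] (h : IsNestedCutSystem 𝓔) : (dualTree 𝓔).IsTree :=
  have : Nonempty (DualVertex 𝓔) := ‹Nonempty V›.map fun x => ⟨_, isOrientation_principal h x⟩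
  ⟨⟨preconnected_dualTree h⟩, isAcyclic_dualTree h⟩

end DualTree

section DualTreeAction

open Set Filter

variable {G V : Type*} [Group G] [MulAction G V] {𝓔 O : Set (Set V)} {C : Set V}

theorem IsOrientation.smul (h𝓔 : ∀ g : G, ∀ C ∈ 𝓔, g • C ∈ 𝓔) (hO : IsOrientation 𝓔 O) (g : G) :
    IsOrientation 𝓔 (g • O) where
  subset := by
    rintro _ ⟨C, hC, rfl⟩
    exact h𝓔 g C (hO.subset hC)
  compl_mem_iff C hC := by
    rw [mem_smul_set_iff_inv_smul_mem, mem_smul_set_iff_inv_smul_mem, smul_set_compl]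
    exact hO.compl_mem_iff _ (h𝓔 g⁻¹ C hC)
  mem_of_subset C hC D hD hCD := by
    rw [mem_smul_set_iff_inv_smul_mem] at hC ⊢
    exact hO.mem_of_subset _ hC _ (h𝓔 g⁻¹ D hD) (smul_set_mono hCD)
  finite_notMem x := by
    refine ((hO.finite_notMem (g⁻¹ • x)).smul_set (a := g)).subset ?_
    rintro _ ⟨⟨C, hC, rfl⟩, hx⟩
    exact smul_mem_smul_set ⟨hC, fun h => hx (mem_smul_set_iff_inv_smul_mem.2 h)⟩

/-- The action on the dual tree of a group preserving the cut system. -/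
abbrev dualVertexMulAction (h𝓔 : ∀ g : G, ∀ C ∈ 𝓔, g • C ∈ 𝓔) :
    MulAction G (DualVertex 𝓔) where
  smul g O := ⟨g • O.1, O.2.smul h𝓔 g⟩
  one_smul O := Subtype.ext (one_smul G O.1)
  mul_smul g h O := Subtype.ext (mul_smul g h O.1)

theorem isInvariant_dualTree (h𝓔 : ∀ g : G, ∀ C ∈ 𝓔, g • C ∈ 𝓔) :
    letI := dualVertexMulAction h𝓔
    IsInvariant G (dualTree 𝓔) := by
  rintro g O O' ⟨C, hC⟩
  refine ⟨g • C, ?_⟩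
  rw [← smul_set_singleton, ← hC, smul_set_sdiff]
  rfl

theorem exists_finite_darts_dualTree (h : IsNestedCutSystem 𝓔)
    (h𝓔 : ∀ g : G, ∀ C ∈ 𝓔, g • C ∈ 𝓔) {𝓕 : Set (Set V)} (h𝓕 : 𝓕.Finite)
    (horb : ∀ C ∈ 𝓔, ∃ g : G, g • C ∈ 𝓕) :
    letI := dualVertexMulAction h𝓔
    ∃ D : Set (DualVertex 𝓔 × DualVertex 𝓔), D.Finite ∧
      ∀ O O', (dualTree 𝓔).Adj O O' → ∃ g : G, (g • O, g • O') ∈ D := by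
  let := dualVertexMulAction h𝓔
  refine ⟨{d | ∃ C ∈ 𝓕, d.1.1 \ d.2.1 = {C}}, ?_, ?_⟩
  · refine Finite.of_finite_image (f := fun d => d.1.1 \ d.2.1)
      ((h𝓕.image fun C => ({C} : Set (Set V))).subset ?_) ?_
    · rintro _ ⟨d, ⟨C, hC, hd⟩, rfl⟩
      exact ⟨C, hC, hd.symm⟩
    · rintro ⟨O, O'⟩ ⟨C, -, hC⟩ ⟨P, P'⟩ - heq
      obtain ⟨hP, hP'⟩ := h.eq_and_eq_of_sdiff_eq hC (heq.symm.trans hC)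
      exact Prod.ext hP.symm hP'.symm
  · rintro O O' ⟨C, hC⟩
    have hCO : C ∈ O.1 \ O'.1 := hC ▸ rfl
    obtain ⟨g, hg⟩ := horb C (O.2.subset hCO.1)
    refine ⟨g, g • C, hg, ?_⟩
    rw [← smul_set_singleton, ← hC, smul_set_sdiff]
    rfl

end DualTreeAction

section TreeOfVirtuallyFree

open Set Filter SimpleGraph

variable {G : Type*} [Group G]

theorem smul_ne_self_of_mem_rayFilter {C : Set G} {h : G} (hC : Cᶜ ∈ rayFilter 1 h)
    (hC' : C ∈ rayFilter 1 h⁻¹) {m : ℕ} (hm : m ≠ 0) : h ^ m • C ≠ C := by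
  intro hstab
  have hpow (N : ℕ) : (h ^ m) ^ N • C = C := by
    induction N with
    | zero => rw [pow_zero, one_smul]
    | succ N ih => rw [pow_succ, mul_smul, hstab, ih]
  have hconst (N : ℕ) : h⁻¹ ^ (m * N) ∈ C ↔ h ^ (m * N) ∈ C := by
    have h1 : h ^ (m * N) ∈ C ↔ (1 : G) ∈ C := by
      conv_lhs => rw [← hpow N, mem_smul_set_iff_inv_smul_mem]
      simp [pow_mul]
    rw [h1]
    conv_rhs => rw [← hpow N, mem_smul_set_iff_inv_smul_mem]
    simp [pow_mul]
  obtain ⟨a, ha⟩ := eventually_atTop.1 (mem_map.1 hC)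
  obtain ⟨b, hb⟩ := eventually_atTop.1 (mem_map.1 hC')
  have hle : a + b ≤ m * (a + b) := Nat.le_mul_of_pos_left _ (Nat.pos_of_ne_zero hm)
  have hnotMem := ha (m * (a + b)) (by omega)
  have hmem := hb (m * (a + b)) (by omega)
  rw [one_mul] at hnotMem hmem
  exact hnotMem ((hconst _).1 hmem)

theorem IsOrientation.notMem_rayFilter_inv {𝓔 O : Set (Set G)} (hO : IsOrientation 𝓔 O) {h : G}
    (hh : h • O = O) {C : Set G} (hCO : C ∈ O) (hC : Cᶜ ∈ rayFilter 1 h) :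
    C ∉ rayFilter 1 h⁻¹ := by
  intro hC'
  have hmem (j : ℕ) : h⁻¹ ^ j • C ∈ O := by
    rw [inv_pow, ← mem_smul_set_iff_inv_smul_mem]
    have hj : h ^ j ∈ MulAction.stabilizer G O := pow_mem hh j
    rwa [MulAction.mem_stabilizer_iff.1 hj]
  obtain ⟨a, ha⟩ := eventually_atTop.1 (mem_map.1 hC)
  have hsub : (fun j : ℕ => h⁻¹ ^ j • C) '' Ici a ⊆ {D | D ∈ O ∧ (1 : G) ∉ D} := by
    rintro _ ⟨j, hj, rfl⟩
    refine ⟨hmem j, fun h1 => ?_⟩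
    have hj' := ha j hj
    rw [one_mul] at hj'
    exact hj' (by simpa [mem_smul_set_iff_inv_smul_mem] using h1)
  obtain ⟨i, -, j, -, hij, heq⟩ := (Ici_infinite a).exists_ne_map_eq_of_mapsTo
    (mapsTo_iff_image_subset.2 hsub) (hO.finite_notMem 1)
  wlog hlt : i < j generalizing i j
  · exact this j i hij.symm heq.symm (by omega)
  refine smul_ne_self_of_mem_rayFilter hC hC' (m := j - i) (by omega) ?_
  obtain ⟨m, rfl⟩ := Nat.exists_eq_add_of_le hlt.le
  rw [Nat.add_sub_cancel_left]
  rw [pow_add, mul_smul, smul_left_cancel_iff, inv_pow, eq_inv_smul_iff] at heq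
  exact heq

theorem IsOrientation.smul_ne_self {𝓔 O : Set (Set G)} (hO : IsOrientation 𝓔 O) {h : G}
    {C : Set G} (hC : C ∈ 𝓔) (hsep : Separates C (rayFilter 1 h, rayFilter 1 h⁻¹)) :
    h • O ≠ O := by
  intro hh
  wlog hCO : C ∈ O generalizing C
  · have hCc := (hO.compl_mem_iff C hC).2 hCO
    exact this (hO.subset hCc) hsep.compl hCc
  rcases hsep with ⟨hC₁, hC₂⟩ | ⟨hC₁, hC₂⟩
  · refine hO.notMem_rayFilter_inv (inv_smul_eq_iff.2 hh.symm) hCO hC₂ ?_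
    rwa [inv_inv]
  · exact hO.notMem_rayFilter_inv hh hCO hC₁ hC₂

/-- A tree with an action of `G`, cofinite on vertices and on oriented edges, on which the
subgroup `F` acts freely. -/
structure IsCofiniteTree (F : Subgroup G) {T : Type*} [MulAction G T] (Γ : SimpleGraph T) :
    Prop where
  isTree : Γ.IsTree
  isInvariant : IsInvariant G Γ
  eq_one_of_smul_eq : ∀ h ∈ F, ∀ x : T, h • x = x → h = 1
  exists_finite_darts : ∃ D : Set (T × T), D.Finite ∧
    ∀ x y, Γ.Adj x y → ∃ g : G, (g • x, g • y) ∈ D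
  exists_finite_vertices : ∃ W : Set T, W.Finite ∧ ∀ x : T, ∃ g : G, g • x ∈ W

theorem exists_finite_vertices_of_darts {T : Type*} [MulAction G T] {Γ : SimpleGraph T}
    (hΓ : Γ.Connected) {D : Set (T × T)} (hD : D.Finite)
    (hcover : ∀ x y, Γ.Adj x y → ∃ g : G, (g • x, g • y) ∈ D) :
    ∃ W : Set T, W.Finite ∧ ∀ x : T, ∃ g : G, g • x ∈ W := by
  obtain ⟨o⟩ := hΓ.nonempty
  refine ⟨insert o (Prod.fst '' D), (hD.image _).insert o, fun x => ?_⟩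
  by_cases hx : x = o
  · exact ⟨1, .inl (by rw [one_smul, hx])⟩
  · have : Nontrivial T := ⟨x, o, hx⟩
    obtain ⟨y, hxy⟩ := hΓ.preconnected.exists_adj_of_nontrivial x
    obtain ⟨g, hg⟩ := hcover x y hxy
    exact ⟨g, .inr ⟨_, hg, rfl⟩⟩

theorem IsSeparableFamily.isNestedCutSystem {V : Type*} {Γ : SimpleGraph V}
    {𝒜 : Set (Filter V × Filter V)} {k : ℕ} (h : IsSeparableFamily Γ 𝒜 k) :
    IsNestedCutSystem (optimalCutSystem Γ 𝒜) where
  compl_mem _ hC := compl_mem_optimalCutSystem hC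
  nested C hC D hD := by
    obtain ⟨α, hα, hC⟩ := hC
    obtain ⟨β, hβ, hD⟩ := hD
    by_contra! hcross
    obtain ⟨h₁, h₂, h₃, h₄⟩ := hcross
    refine h.not_crosses hα hβ hC hD ?_
    simp only [← inter_compl_nonempty_iff, _root_.compl_compl] at h₁ h₂ h₃ h₄
    exact ⟨h₂, h₁, h₄, h₃⟩
  finite_between x y := (h.finite_allMinimalCuts_between x y).subset
    fun _ hC => ⟨optimalCutSystem_subset_allMinimalCuts hC.1, hC.2⟩
  nonempty _ hC := h.nonempty_of_mem_optimalCutSystem hC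

theorem exists_finite_cuts_smul_mem {S : Set G} (hSfin : S.Finite)
    (hS : Subgroup.closure S = ⊤) {𝓔 : Set (Set G)} (h : IsNestedCutSystem 𝓔)
    (h𝓔 : ∀ g : G, ∀ C ∈ 𝓔, g • C ∈ 𝓔) :
    ∃ 𝓕 : Set (Set G), 𝓕.Finite ∧ ∀ C ∈ 𝓔, ∃ g : G, g • C ∈ 𝓕 := by
  refine ⟨⋃ s ∈ S, {C | C ∈ 𝓔 ∧ (1 : G) ∈ C ∧ s ∉ C} ∪ {C | C ∈ 𝓔 ∧ s ∈ C ∧ (1 : G) ∉ C},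
    hSfin.biUnion fun s _ => (h.finite_between 1 s).union (h.finite_between s 1), fun C hC => ?_⟩
  obtain ⟨a, ha⟩ := h.nonempty C hC
  obtain ⟨b, hb⟩ := h.nonempty _ (h.compl_mem C hC)
  obtain ⟨x, y, hxy, hx, hy⟩ :=
    exists_adj_of_mem_of_notMem (preconnected_mulCayley hS) ha hb
  obtain ⟨-, s, hs, rfl | rfl⟩ := (mulCayley_adj' ..).1 hxy
  · refine ⟨x⁻¹, mem_biUnion hs (.inl ⟨h𝓔 _ C hC, ?_, ?_⟩)⟩ <;>
      simpa [mem_smul_set_iff_inv_smul_mem] using ‹_›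
  · refine ⟨y⁻¹, mem_biUnion hs (.inr ⟨h𝓔 _ C hC, ?_, ?_⟩)⟩ <;>
      simpa [mem_smul_set_iff_inv_smul_mem] using ‹_›

universe u

theorem exists_isCofiniteTree {G : Type u} [Group G] [Group.FG G] (F : Subgroup G)
    [F.FiniteIndex] {ι : Type*} (e : F ≃* FreeGroup ι) :
    ∃ (T : Type u) (_ : MulAction G T) (Γ : SimpleGraph T), IsCofiniteTree F Γ := by
  classical
  obtain ⟨S, hS⟩ := Group.FG.out (G := G)
  obtain ⟨k, hsep⟩ := isSeparableFamily_axisEndPairs S.finite_toSet hS e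
  have h := hsep.isNestedCutSystem
  have h𝓔 (g : G) (C) (hC : C ∈ optimalCutSystem (mulCayley (S : Set G)) (axisEndPairs F)) :=
    (isInvariant_mulCayley (S : Set G)).smul_mem_optimalCutSystem
      (fun g _ => smul_mem_axisEndPairs g) g hC
  obtain ⟨𝓕, h𝓕, horb⟩ := exists_finite_cuts_smul_mem S.finite_toSet hS h h𝓔
  obtain ⟨D, hD, hcover⟩ := exists_finite_darts_dualTree h h𝓔 h𝓕 horb
  let := dualVertexMulAction h𝓔
  refine ⟨_, inferInstance, dualTree _, isTree_dualTree h, isInvariant_dualTree h𝓔, ?_,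
    ⟨D, hD, hcover⟩, exists_finite_vertices_of_darts (isTree_dualTree h).1 hD hcover⟩
  intro f hf O hO
  by_contra hne
  obtain ⟨C, hC, hCsep⟩ := hsep.exists_mem_optimalCutSystem_separates ⟨1, f, hf, hne, rfl⟩
  exact O.2.smul_ne_self hC hCsep (congr_arg Subtype.val hO)

end TreeOfVirtuallyFree

section Transversal

open Set

variable {G V H : Type*} [Group G] [MulAction G V] [Group H] {F : Subgroup G}
  {Γ : SimpleGraph V} {X : Set G} {Y : Set V}

theorem forall_of_preconnected (hΓ : Γ.Preconnected) {p : V → Prop}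
    (hp : ∀ u v, Γ.Adj u v → p u → p v) {x : V} (hx : p x) (y : V) : p y := by
  by_contra hy
  obtain ⟨u, v, huv, hu, hv⟩ := exists_adj_of_mem_of_notMem (C := {v | p v}) hΓ hx hy
  exact hv (hp u v huv hu)

theorem forall_mem_of_induce_preconnected (hY : (Γ.induce Y).Preconnected) {p : V → Prop}
    (hp : ∀ u ∈ Y, ∀ v ∈ Y, Γ.Adj u v → p u → p v) {x : V} (hxY : x ∈ Y) (hx : p x) :
    ∀ y ∈ Y, p y := fun y hy =>
  forall_of_preconnected hY (p := fun v => p v) (fun u v huv => hp u u.2 v v.2 huv)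
    (x := ⟨x, hxY⟩) hx ⟨y, hy⟩

/-- Triviality of the first cohomology of `Γ` with coefficients in `H`: every cocycle on the
oriented edges is a coboundary. -/
def HasTrivialCohomology (Γ : SimpleGraph V) (H : Type*) [Group H] : Prop :=
  ∀ c : V → V → H, (∀ u v, Γ.Adj u v → c u v * c v u = 1) →
    ∃ ψ : V → H, ∀ u v, Γ.Adj u v → ψ v = ψ u * c u v

/-- Connected `G`-graphs on whose vertices the subgroup `F` acts freely and cofinitely, and whose
first cohomology modulo two vanishes. Trees are the main examples, but unlike trees this class is
stable under folding. -/
structure IsFreeCofinite (F : Subgroup G) (Γ : SimpleGraph V) : Prop where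
  isInvariant : IsInvariant G Γ
  connected : Γ.Connected
  cohomology : HasTrivialCohomology Γ (Multiplicative (ZMod 2))
  eq_one_of_smul_eq : ∀ h ∈ F, ∀ x : V, h • x = x → h = 1
  exists_finite_vertices : ∃ W : Set V, W.Finite ∧ ∀ x : V, ∃ h ∈ F, h • x ∈ W

/-- Sets of vertices meeting each free `F`-orbit at most once. -/
def IsPartialTransversal (F : Subgroup G) (Y : Set V) : Prop :=
  ∀ y ∈ Y, ∀ h ∈ F, h • y ∈ Y → h = 1

/-- Finite connected transversals of the orbits of `F` on the vertices. -/
structure IsConnectedTransversal (F : Subgroup G) (Γ : SimpleGraph V) (Y : Set V) : Prop where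
  connected : (Γ.induce Y).Connected
  finite : Y.Finite
  exists_smul_mem : ∀ v : V, ∃ h ∈ F, h • v ∈ Y
  isPartialTransversal : IsPartialTransversal F Y

theorem IsConnectedTransversal.nonempty (hY : IsConnectedTransversal F Γ Y) : Y.Nonempty :=
  nonempty_coe_sort.1 hY.connected.nonempty

theorem IsConnectedTransversal.exists_inv_smul_mem (hY : IsConnectedTransversal F Γ Y) (v : V) :
    ∃ g : G, g⁻¹ • v ∈ Y := by
  obtain ⟨h, -, hv⟩ := hY.exists_smul_mem v
  exact ⟨h⁻¹, by rwa [inv_inv]⟩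

theorem IsPartialTransversal.finite_and_ncard_le (hY : IsPartialTransversal F Y) {W : Set V}
    (hW : W.Finite) (hcover : ∀ x : V, ∃ h ∈ F, h • x ∈ W) :
    Y.Finite ∧ Y.ncard ≤ W.ncard := by
  choose w hwF hwW using hcover
  have hinj : InjOn (fun v => w v • v) Y := by
    intro a ha b hb hab
    have h : ((w b)⁻¹ * w a) • a = b := by
      rw [mul_smul, inv_smul_eq_iff]
      exact hab
    rw [← h, hY a ha _ (F.mul_mem (F.inv_mem (hwF b)) (hwF a)) (h.symm ▸ hb), one_smul]
  exact ⟨Finite.of_finite_image (hW.subset (image_subset_iff.2 fun v _ => hwW v)) hinj,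
    ncard_le_ncard_of_injOn _ (fun v _ => hwW v) hinj hW⟩

theorem IsPartialTransversal.insert (hY : IsPartialTransversal F Y) {v : V}
    (hfree : ∀ h ∈ F, h • v = v → h = 1) (hv : ∀ h ∈ F, h • v ∉ Y) :
    IsPartialTransversal F (insert v Y) := by
  rintro y (rfl | hy) h hh (hhy | hhy)
  · exact hfree h hh hhy
  · exact absurd hhy (hv h hh)
  · refine absurd ?_ (hv h⁻¹ (F.inv_mem hh))
    rwa [← hhy, inv_smul_smul]
  · exact hY y hy h hh hhy

theorem IsFreeCofinite.exists_isConnectedTransversal (h : IsFreeCofinite F Γ) :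
    ∃ Y : Set V, IsConnectedTransversal F Γ Y := by
  obtain ⟨W, hW, hcover⟩ := h.exists_finite_vertices
  obtain ⟨o⟩ := h.connected.nonempty
  obtain ⟨Y, ⟨hconn, hpart⟩, hmax⟩ := exists_forall_le_of_nonempty
    (s := {Y | (Γ.induce Y).Connected ∧ IsPartialTransversal F Y})
    ⟨{o}, SimpleGraph.Connected.of_subsingleton, by
      rintro y rfl k hk hky
      exact h.eq_one_of_smul_eq k hk y hky⟩
    (fun Y => W.ncard - Y.ncard)
  have hfin := (hpart.finite_and_ncard_le hW hcover).1
  refine ⟨Y, hconn, hfin, ?_, hpart⟩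
  by_contra! hnot
  obtain ⟨v₀, hv₀⟩ := hnot
  obtain ⟨a, ha⟩ := nonempty_coe_sort.1 hconn.nonempty
  obtain ⟨u, v, huv, ⟨k, hk, hku⟩, hv⟩ := exists_adj_of_mem_of_notMem
    (C := {v | ∃ k ∈ F, k • v ∈ Y}) h.connected.preconnected (x := a) (y := v₀)
    ⟨1, F.one_mem, by rwa [one_smul]⟩ (by rintro ⟨k, hk, hkv⟩; exact hv₀ k hk hkv)
  have hkv (l) (hl : l ∈ F) : l • k • v ∉ Y := fun hmem =>
    hv ⟨l * k, F.mul_mem hl hk, by rwa [mul_smul]⟩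
  have hpart' := hpart.insert (fun l hl => h.eq_one_of_smul_eq l hl _) hkv
  have hconn' : (Γ.induce (insert (k • v) Y)).Connected := by
    rw [insert_eq, union_comm]
    exact SimpleGraph.connected_induce_union hconn.preconnected .of_subsingleton hku rfl
      (h.isInvariant k u v huv)
  have hlt : (insert (k • v) Y).ncard = Y.ncard + 1 :=
    ncard_insert_of_notMem (by simpa using hkv 1 F.one_mem) hfin
  have hle := (hpart'.finite_and_ncard_le hW hcover).2
  have := hmax _ ⟨hconn', hpart'⟩
  omega

/-- The elements `x` such that `Y` and its translate `x • Y` meet or are joined by an edge. -/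
def touchingSet (G : Type*) [Group G] [MulAction G V] (Γ : SimpleGraph V) (Y : Set V) : Set G :=
  {x | ∃ y ∈ Y, ∃ y' ∈ Y, y' = x • y ∨ Γ.Adj y' (x • y)}

theorem inv_mul_mem_touchingSet (hΓ : IsInvariant G Γ) {g g' : G} {u v : V} (hu : g⁻¹ • u ∈ Y)
    (hv : g'⁻¹ • v ∈ Y) (huv : u = v ∨ Γ.Adj u v) : g⁻¹ * g' ∈ touchingSet G Γ Y := by
  refine ⟨_, hv, _, hu, ?_⟩
  rw [mul_smul, smul_inv_smul, smul_left_cancel_iff, hΓ.adj_smul_iff]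
  exact huv

theorem one_mem_touchingSet (hY : Y.Nonempty) : (1 : G) ∈ touchingSet G Γ Y := by
  obtain ⟨y, hy⟩ := hY
  exact ⟨y, hy, y, hy, .inl (one_smul G y).symm⟩

theorem inv_touchingSet (hΓ : IsInvariant G Γ) : (touchingSet G Γ Y)⁻¹ = touchingSet G Γ Y := by
  suffices h : ∀ x ∈ touchingSet G Γ Y, x⁻¹ ∈ touchingSet G Γ Y from
    Subset.antisymm (fun x hx => inv_inv x ▸ h _ hx) h
  rintro x ⟨y, hy, y', hy', h⟩
  refine ⟨y', hy', y, hy, h.imp (fun h => eq_inv_smul_iff.2 h.symm) fun h => ?_⟩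
  rw [← hΓ.adj_smul_iff x, smul_inv_smul]
  exact h.symm

theorem closure_touchingSet (hΓ : IsInvariant G Γ) (hconn : Γ.Preconnected)
    (hY : IsConnectedTransversal F Γ Y) : Subgroup.closure (touchingSet G Γ Y) = ⊤ := by
  refine eq_top_iff.2 fun g _ => ?_
  set K := Subgroup.closure (touchingSet G Γ Y)
  have mul_mem {k g' : G} {u v : V} (hk : k ∈ K) (hu : k⁻¹ • u ∈ Y) (hv : g'⁻¹ • v ∈ Y)
      (huv : u = v ∨ Γ.Adj u v) : g' ∈ K := by
    rw [← mul_inv_cancel_left k g']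
    exact K.mul_mem hk (Subgroup.subset_closure (inv_mul_mem_touchingSet hΓ hu hv huv))
  obtain ⟨y, hy⟩ := hY.nonempty
  obtain ⟨k, hk, hkg⟩ := forall_of_preconnected hconn (p := fun v => ∃ k ∈ K, k⁻¹ • v ∈ Y)
    (fun u v huv ⟨k, hk, hku⟩ => by
      obtain ⟨l, hl⟩ := hY.exists_inv_smul_mem v
      exact ⟨l, mul_mem hk hku hl (.inr huv), hl⟩)
    (x := y) ⟨1, K.one_mem, by simpa using hy⟩ (g • y)
  exact mul_mem hk hkg (by rwa [inv_smul_smul]) (.inl rfl)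

/-- Maps respecting all the products of two elements of `X` that lie in `X`. -/
def IsPartialHom (X : Set G) (j : G → H) : Prop :=
  ∀ a ∈ X, ∀ b ∈ X, a * b ∈ X → j (a * b) = j a * j b

/-- Homomorphisms from `G` to `H` may be prescribed on `X`, subject only to the relations
`a * b = c` with `a b c ∈ X`. When `X` generates `G` and `H` is arbitrary, this says that these
relations present `G`. -/
def HasExtensionProperty (X : Set G) (H : Type*) [Group H] : Prop :=
  ∀ j : G → H, IsPartialHom X j → ∃ φ : G →* H, ∀ x ∈ X, φ x = j x

theorem exists_monoidHom_of_mul_right (hX : Subgroup.closure X = ⊤) {s j : G → H}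
    (hs : ∀ g, ∀ x ∈ X, s (g * x) = s g * j x) : ∃ φ : G →* H, ∀ x ∈ X, φ x = j x := by
  let K : Subgroup G :=
    { carrier := {k | ∃ c : H, ∀ g, s (g * k) = s g * c}
      one_mem' := ⟨1, fun g => by rw [mul_one, mul_one]⟩
      mul_mem' := by
        rintro a b ⟨c, hc⟩ ⟨d, hd⟩
        exact ⟨c * d, fun g => by rw [← mul_assoc, hd, hc, mul_assoc]⟩
      inv_mem' := by
        rintro a ⟨c, hc⟩
        exact ⟨c⁻¹, fun g => by rw [eq_mul_inv_iff_mul_eq, ← hc, inv_mul_cancel_right]⟩ }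
  have hK (k : G) : k ∈ K := by
    have hXK : Subgroup.closure X ≤ K := (Subgroup.closure_le K).2 fun x hx => ⟨j x, (hs · x hx)⟩
    exact hXK (hX ▸ Subgroup.mem_top k)
  choose c hc using hK
  have hc_eq {k : G} {d : H} (hd : ∀ g, s (g * k) = s g * d) : c k = d :=
    mul_left_cancel ((hc k 1).symm.trans (hd 1))
  exact ⟨MonoidHom.mk' c fun a b => hc_eq fun g => by rw [← mul_assoc, hc, hc, mul_assoc],
    fun x hx => hc_eq (hs · x hx)⟩

theorem IsPartialHom.map_inv_mul {j : G → H} (hj : IsPartialHom (touchingSet G Γ Y) j)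
    (hΓ : IsInvariant G Γ) {a b c : G} {u v w : V} (hu : a⁻¹ • u ∈ Y) (hv : b⁻¹ • v ∈ Y)
    (hw : c⁻¹ • w ∈ Y) (huv : u = v ∨ Γ.Adj u v) (hvw : v = w ∨ Γ.Adj v w)
    (huw : u = w ∨ Γ.Adj u w) : j (a⁻¹ * c) = j (a⁻¹ * b) * j (b⁻¹ * c) := by
  have habc : a⁻¹ * b * (b⁻¹ * c) = a⁻¹ * c := by group
  rw [← habc, hj _ (inv_mul_mem_touchingSet hΓ hu hv huv) _
    (inv_mul_mem_touchingSet hΓ hv hw hvw)]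
  exact habc ▸ inv_mul_mem_touchingSet hΓ hu hw huw

theorem exists_forall_mul_touchingSet (hΓ : IsInvariant G Γ) (hY : IsConnectedTransversal F Γ Y)
    (hcoh : HasTrivialCohomology Γ H) {j : G → H} (hj : IsPartialHom (touchingSet G Γ Y) j) :
    ∃ s : G → H, ∀ g, ∀ x ∈ touchingSet G Γ Y, s (g * x) = s g * j x := by
  choose γ hγ using hY.exists_inv_smul_mem
  have hj_one : j 1 = 1 := by
    have h1 := one_mem_touchingSet (G := G) (Γ := Γ) hY.nonempty
    simpa using hj 1 h1 1 h1 (by simpa using h1)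
  obtain ⟨ψ, hψ⟩ := hcoh (fun u v => j ((γ u)⁻¹ * γ v)) fun u v huv => by
    rw [← hj.map_inv_mul hΓ (hγ u) (hγ v) (hγ u) (.inr huv) (.inr huv.symm) (.inl rfl),
      inv_mul_cancel, hj_one]
  -- The value at `g` of the map to be constructed, as seen from the vertex `v ∈ g • Y`.
  let val (g : G) (v : V) : H := ψ v * j ((γ v)⁻¹ * g)
  have hval {g g' : G} {u v : V} (hu : g⁻¹ • u ∈ Y) (hv : g'⁻¹ • v ∈ Y)
      (huv : u = v ∨ Γ.Adj u v) : val g' v = val g u * j (g⁻¹ * g') := by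
    simp only [val]
    rw [mul_assoc, ← hj.map_inv_mul hΓ (hγ u) hu hv (.inl rfl) huv huv]
    obtain rfl | huv := huv
    · rfl
    · rw [hψ u v huv, mul_assoc,
        ← hj.map_inv_mul hΓ (hγ u) (hγ v) hv (.inr huv) (.inl rfl) (.inr huv)]
  obtain ⟨y₀, hy₀⟩ := hY.nonempty
  have hval_const (g : G) : ∀ y ∈ Y, val g (g • y) = val g (g • y₀) :=
    forall_mem_of_induce_preconnected hY.connected.preconnected
      (fun a ha b hb hab hval_a => by
        rw [hval (g := g) (u := g • a) (by rwa [inv_smul_smul]) (by rwa [inv_smul_smul])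
          (.inr (hΓ g a b hab)), hval_a, inv_mul_cancel, hj_one, mul_one]) hy₀ rfl
  refine ⟨fun g => val g (g • y₀), ?_⟩
  rintro g x ⟨y, hy, y', hy', hyy'⟩
  calc val (g * x) ((g * x) • y₀)
      = val (g * x) ((g * x) • y) := (hval_const (g * x) y hy).symm
    _ = val g (g • y') * j (g⁻¹ * (g * x)) :=
        hval (by rwa [inv_smul_smul]) (by rwa [inv_smul_smul])
          (by rwa [mul_smul, smul_left_cancel_iff, hΓ.adj_smul_iff])
    _ = val g (g • y₀) * j x := by rw [hval_const g y' hy', inv_mul_cancel_left]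

theorem hasExtensionProperty_touchingSet (hΓ : IsInvariant G Γ) (hconn : Γ.Preconnected)
    (hY : IsConnectedTransversal F Γ Y) (hcoh : HasTrivialCohomology Γ H) :
    HasExtensionProperty (touchingSet G Γ Y) H := fun _ hj =>
  have ⟨_, hs⟩ := exists_forall_mul_touchingSet hΓ hY hcoh hj
  exists_monoidHom_of_mul_right (closure_touchingSet hΓ hconn hY) hs

end Transversal

section Bounds

open Set

theorem finite_monoidHom (K H : Type*) [Group K] [Group.FG K] [Group H] [Finite H] :
    Finite (K →* H) := by
  obtain ⟨S, hS⟩ := Group.FG.out (G := K)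
  refine .of_injective (fun (φ : K →* H) (s : S) => φ s) fun φ ψ hφψ => ?_
  exact MonoidHom.eq_of_eqOn_dense hS fun s hs => congrFun hφψ ⟨s, hs⟩

theorem finite_and_ncard_le_of_two_to_one {α β : Type*} [Finite β] {s : Set α} (f : α → β)
    (σ : α → α) (h : ∀ a ∈ s, ∀ b ∈ s, f a = f b → a = b ∨ a = σ b) :
    s.Finite ∧ s.ncard ≤ Nat.card (β × Bool) := by
  obtain rfl | ⟨a₀, -⟩ := s.eq_empty_or_nonempty
  · simp
  have : Nonempty α := ⟨a₀⟩
  let r (p : β × Bool) : α :=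
    if p.2 then Function.invFunOn f s p.1 else σ (Function.invFunOn f s p.1)
  have hr : s ⊆ range r := by
    intro a ha
    have hfa : ∃ b ∈ s, f b = f a := ⟨a, ha, rfl⟩
    obtain heq | heq := h a ha _ (Function.invFunOn_mem hfa) (Function.invFunOn_eq hfa).symm
    · exact ⟨(f a, true), heq.symm⟩
    · exact ⟨(f a, false), heq.symm⟩
  exact ⟨(finite_range r).subset hr,
    (ncard_le_ncard hr (finite_range r)).trans (Finite.card_range_le r)⟩

variable {G V A : Type*} [Group G] [MulAction G V] [CommGroup A] {F : Subgroup G}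
  {Γ : SimpleGraph V} {Y Z : Set V}

theorem IsPartialTransversal.smul [F.Normal] (hY : IsPartialTransversal F Y) (g : G) :
    IsPartialTransversal F (g • Y) := by
  rintro _ ⟨y, hy, rfl⟩ h hh hhy
  have h1 := hY y hy (g⁻¹ * h * g) (by simpa using Subgroup.Normal.conj_mem ‹_› h hh g⁻¹)
    (by simpa [mem_smul_set_iff_inv_smul_mem, mul_smul] using hhy)
  simpa [mul_assoc, inv_mul_eq_one] using h1

theorem induce_smul_preconnected (hΓ : IsInvariant G Γ) (hY : (Γ.induce Y).Preconnected) (g : G) :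
    (Γ.induce (g • Y)).Preconnected := by
  rintro ⟨_, x, hx, rfl⟩ ⟨_, y, hy, rfl⟩
  let φ : Γ.induce Y →g Γ.induce (g • Y) :=
    ⟨fun y => ⟨g • y.1, smul_mem_smul_set y.2⟩, fun hab => hΓ g _ _ hab⟩
  exact (hY ⟨x, hx⟩ ⟨y, hy⟩).map φ

namespace IsConnectedTransversal

/-- The element `f` of `F` such that `v` lies in the translate `f • Y`. -/
noncomputable def orbitCoord (hY : IsConnectedTransversal F Γ Y) (v : V) : F :=
  ⟨(hY.exists_smul_mem v).choose, (hY.exists_smul_mem v).choose_spec.1⟩⁻¹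

variable (hY : IsConnectedTransversal F Γ Y)

theorem orbitCoord_inv_smul_mem (v : V) : (hY.orbitCoord v)⁻¹ • v ∈ Y := by
  rw [orbitCoord, inv_inv]
  exact (hY.exists_smul_mem v).choose_spec.2

theorem orbitCoord_eq {v : V} {f : F} (hf : f⁻¹ • v ∈ Y) : hY.orbitCoord v = f := by
  refine inv_mul_eq_one.1 (Subtype.ext (hY.isPartialTransversal _ hf _ (SetLike.coe_mem _) ?_))
  change ((hY.orbitCoord v)⁻¹ * f) • f⁻¹ • v ∈ Y
  rw [mul_smul, smul_inv_smul]
  exact hY.orbitCoord_inv_smul_mem v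

theorem orbitCoord_smul (f : F) (v : V) : hY.orbitCoord (f • v) = f * hY.orbitCoord v :=
  hY.orbitCoord_eq (by
    rw [mul_inv_rev, mul_smul, inv_smul_smul]
    exact hY.orbitCoord_inv_smul_mem v)

theorem orbitCoord_eq_one_iff {v : V} : hY.orbitCoord v = 1 ↔ v ∈ Y :=
  ⟨fun h => by simpa [h] using hY.orbitCoord_inv_smul_mem v,
    fun h => hY.orbitCoord_eq (by rwa [inv_one, one_smul])⟩

theorem exists_monoidHom_of_cocycle (h : IsInvariant G Γ) (hconn : Γ.Preconnected)
    (hcoh : HasTrivialCohomology Γ A) {c : V → V → A}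
    (hc : ∀ u v, Γ.Adj u v → c u v * c v u = 1) (hcF : ∀ (f : F) u v, c (f • u) (f • v) = c u v)
    (hcY : ∀ u v, Γ.Adj u v → hY.orbitCoord u = hY.orbitCoord v → c u v = 1) :
    ∃ ρ : F →* A, ∀ u v, Γ.Adj u v → ρ ((hY.orbitCoord u)⁻¹ * hY.orbitCoord v) = c u v := by
  obtain ⟨χ, hχ⟩ := hcoh c hc
  obtain ⟨y₀, hy₀⟩ := hY.nonempty
  have hconst (f : F) (v : V) : χ (f • v) / χ v = χ (f • y₀) / χ y₀ := by
    refine forall_of_preconnected hconn (p := fun v => χ (f • v) / χ v = χ (f • y₀) / χ y₀)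
      (fun u v huv hu => ?_) rfl v
    rw [← hu, hχ u v huv, hχ (f • u) (f • v) (h (f : G) _ _ huv), hcF, mul_div_mul_right_eq_div]
  have hχY : ∀ y ∈ Y, χ y = χ y₀ :=
    forall_mem_of_induce_preconnected hY.connected.preconnected (fun a ha b hb hab hχa => by
      rw [hχ a b hab, hcY a b hab, mul_one, hχa]
      rw [hY.orbitCoord_eq_one_iff.2 ha, hY.orbitCoord_eq_one_iff.2 hb]) hy₀ rfl
  refine ⟨MonoidHom.mk' (fun f => χ (f • y₀) / χ y₀) fun a b => ?_, fun u v huv => ?_⟩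
  · rw [← hconst a (b • y₀), mul_smul, div_mul_div_cancel]
  · set τ := hY.orbitCoord
    calc χ (((τ u)⁻¹ * τ v) • y₀) / χ y₀
        = χ (((τ u)⁻¹ * τ v) • (τ v)⁻¹ • v) / χ ((τ v)⁻¹ • v) := (hconst _ _).symm
      _ = χ ((τ u)⁻¹ • v) / χ ((τ u)⁻¹ • u) := by
        rw [mul_smul, smul_inv_smul, hχY _ (hY.orbitCoord_inv_smul_mem v),
          hχY _ (hY.orbitCoord_inv_smul_mem u)]
      _ = c u v := by
        rw [hχ ((τ u)⁻¹ • u) ((τ u)⁻¹ • v) (h ((τ u)⁻¹ : F) _ _ huv), hcF, mul_div_cancel_left]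

end IsConnectedTransversal

/-- The oriented edges leaving `Y`. -/
def leavingEdges (Γ : SimpleGraph V) (Y : Set V) : Set (V × V) :=
  {e | Γ.Adj e.1 e.2 ∧ e.1 ∈ Y ∧ e.2 ∉ Y}

namespace IsConnectedTransversal

variable (hY : IsConnectedTransversal F Γ Y)

theorem exists_character_of_mem_leavingEdges (h : IsFreeCofinite F Γ) {e : V × V}
    (he : e ∈ leavingEdges Γ Y) :
    ∃ ρ : F →* Multiplicative (ZMod 2), ∀ u v, Γ.Adj u v →
      (ρ ((hY.orbitCoord u)⁻¹ * hY.orbitCoord v) ≠ 1 ↔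
        ∃ f : F, f • e = (u, v) ∨ f • e = (v, u)) := by
  classical
  let P (u v : V) : Prop := ∃ f : F, f • e = (u, v) ∨ f • e = (v, u)
  have hPsymm (u v : V) : P u v ↔ P v u := exists_congr fun _ => or_comm
  have hPsmul (f : F) (u v : V) : P (f • u) (f • v) ↔ P u v := by
    refine ⟨fun ⟨k, hk⟩ => ⟨f⁻¹ * k, ?_⟩, fun ⟨k, hk⟩ => ⟨f * k, ?_⟩⟩
    · simpa only [mul_smul, inv_smul_eq_iff, Prod.smul_mk] using hk
    · simpa only [mul_smul, smul_eq_iff_eq_inv_smul f, Prod.smul_mk, inv_smul_smul] using hk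
  have hPY (u v : V) (huv : hY.orbitCoord u = hY.orbitCoord v) : ¬P u v := by
    have hne : hY.orbitCoord e.1 ≠ hY.orbitCoord e.2 := by
      rw [hY.orbitCoord_eq_one_iff.2 he.2.1, ne_comm, Ne, hY.orbitCoord_eq_one_iff]
      exact he.2.2
    rintro ⟨f, hf | hf⟩ <;> obtain ⟨rfl, rfl⟩ := Prod.mk.inj hf <;>
      rw [hY.orbitCoord_smul, hY.orbitCoord_smul, mul_right_inj] at huv
    exacts [hne huv, hne huv.symm]
  obtain ⟨ρ, hρ⟩ := hY.exists_monoidHom_of_cocycle h.isInvariant h.connected.preconnected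
    h.cohomology (c := fun u v => if P u v then Multiplicative.ofAdd 1 else 1)
    (fun u v _ => by
      simp only [hPsymm v u]
      split_ifs <;> decide)
    (fun f u v => by simp only [hPsmul])
    (fun u v _ huv => if_neg (hPY u v huv))
  refine ⟨ρ, fun u v huv => ?_⟩
  rw [hρ u v huv, ne_eq, ite_eq_right_iff, Classical.not_imp]
  exact and_iff_left (by decide)

theorem finite_and_ncard_leavingEdges_le (hY : IsConnectedTransversal F Γ Y)
    (h : IsFreeCofinite F Γ) [Finite (F →* Multiplicative (ZMod 2))] :
    (leavingEdges Γ Y).Finite ∧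
      (leavingEdges Γ Y).ncard ≤ Nat.card ((F →* Multiplicative (ZMod 2)) × Bool) := by
  have hρ := fun e he => hY.exists_character_of_mem_leavingEdges h (e := e) he
  choose! ρ hρ using hρ
  refine finite_and_ncard_le_of_two_to_one ρ (fun e => (hY.orbitCoord e.2)⁻¹ • e.swap)
    fun e he e' he' heq => ?_
  have hτe := hY.orbitCoord_eq_one_iff.2 he.2.1
  obtain ⟨f, hf | hf⟩ := (hρ e' he' e.1 e.2 he.1).1
    (heq ▸ (hρ e he e.1 e.2 he.1).2 ⟨1, .inl (one_smul _ e)⟩)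
  · left
    have hτ := hY.orbitCoord_smul f e'.1
    rw [← Prod.smul_fst, hf, hτe, hY.orbitCoord_eq_one_iff.2 he'.2.1, mul_one] at hτ
    rw [← hτ, one_smul] at hf
    exact hf.symm
  · right
    have hτ := hY.orbitCoord_smul f e'.2
    rw [← Prod.smul_snd, hf, hτe] at hτ
    rw [eq_inv_of_mul_eq_one_left hτ.symm] at hf
    exact congr_arg Prod.swap hf.symm

theorem ncard_image_orbitCoord_le (hΓ : IsInvariant G Γ) (hE : (leavingEdges Γ Y).Finite)
    (hZ : (Γ.induce Z).Preconnected) (hZF : IsPartialTransversal F Z) :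
    (hY.orbitCoord '' Z).ncard ≤ (leavingEdges Γ Y).ncard + 1 := by
  set τ := hY.orbitCoord
  obtain rfl | ⟨z₀, hz₀⟩ := Z.eq_empty_or_nonempty
  · simp
  have : Nonempty V := ⟨z₀⟩
  have hexists : ∀ t ∈ τ '' Z \ {τ z₀}, ∃ e ∈ leavingEdges Γ Y, ∃ u ∈ Z, ∃ v, τ v = t ∧
      e = (τ u)⁻¹ • (u, v) := by
    rintro _ ⟨⟨z, hz, rfl⟩, hne⟩
    obtain ⟨⟨v, hv⟩, ⟨u, hu⟩, hvu, hvt, hut⟩ := exists_adj_of_mem_of_notMem hZ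
      (C := {v : Z | τ v = τ z}) (x := ⟨z, hz⟩) (y := ⟨z₀, hz₀⟩) rfl (Ne.symm hne)
    refine ⟨_, ⟨hΓ ((τ u)⁻¹ : F) _ _ hvu.symm, hY.orbitCoord_inv_smul_mem u, fun hmem => hut ?_⟩,
      u, hu, v, hvt, rfl⟩
    exact (hY.orbitCoord_eq hmem).symm.trans hvt
  choose! e he u hu v hv heq using hexists
  have hinj : InjOn e (τ '' Z \ {τ z₀}) := by
    intro s hs t ht hst
    rw [heq s hs, heq t ht, inv_smul_eq_iff, smul_smul, eq_comm, Prod.smul_mk,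
      Prod.mk_inj] at hst
    have h1 := hZF _ (hu t ht) _ (SetLike.coe_mem (τ (u s) * (τ (u t))⁻¹)) (by
      have hus := hu s hs
      rwa [← hst.1] at hus)
    rw [← hv s hs, ← hv t ht, ← hst.2, OneMemClass.coe_eq_one.1 h1, one_smul]
  have hle := ncard_le_ncard_of_injOn e he hinj hE
  have := ncard_le_ncard_sdiff_add_ncard (τ '' Z) {τ z₀}
  rw [ncard_singleton] at this
  omega

theorem touchingSet_subset [F.Normal] :
    touchingSet G Γ Y ⊆ ⋃ q : G ⧸ F, (fun k : F => (k : G) * q.out) ''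
      (insert 1 ((fun e => hY.orbitCoord e.2) '' leavingEdges Γ Y) /
        hY.orbitCoord '' (q.out • Y)) := by
  rintro x ⟨y, hy, y', hy', hxy⟩
  set τ := hY.orbitCoord
  set g : G := (QuotientGroup.mk x : G ⧸ F).out
  have hgx : x * g⁻¹ ∈ F := by
    have h1 : g⁻¹ * x ∈ F := QuotientGroup.eq.1 (Quotient.out_eq (QuotientGroup.mk x : G ⧸ F))
    exact (Subgroup.Normal.mem_comm_iff ‹_›).1 h1
  have hτxy : τ (x • y) = ⟨x * g⁻¹, hgx⟩ * τ (g • y) := by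
    rw [← hY.orbitCoord_smul, Subgroup.mk_smul, mul_smul, inv_smul_smul]
  refine mem_iUnion.2 ⟨QuotientGroup.mk x, ⟨x * g⁻¹, hgx⟩,
    mem_div.2 ⟨τ (x • y), ?_, _, mem_image_of_mem _ (smul_mem_smul_set hy), ?_⟩, ?_⟩
  · by_cases hmem : x • y ∈ Y
    · exact .inl (hY.orbitCoord_eq_one_iff.2 hmem)
    · obtain rfl | hadj := hxy
      · exact absurd hy' hmem
      · exact .inr ⟨(y', x • y), ⟨hadj, hy', hmem⟩, rfl⟩
  · rw [hτxy, mul_div_cancel_right]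
  · exact inv_mul_cancel_right x g

theorem finite_and_ncard_touchingSet_le (hY : IsConnectedTransversal F Γ Y) [F.Normal]
    [Finite (G ⧸ F)] (hΓ : IsInvariant G Γ) (hE : (leavingEdges Γ Y).Finite) :
    (touchingSet G Γ Y).Finite ∧ (touchingSet G Γ Y).ncard ≤
      Nat.card (G ⧸ F) * ((leavingEdges Γ Y).ncard + 1) ^ 2 := by
  let S (q : G ⧸ F) : Set F := insert 1 ((fun e => hY.orbitCoord e.2) '' leavingEdges Γ Y) /
    hY.orbitCoord '' (q.out • Y)
  have hSfin (q : G ⧸ F) : (S q).Finite :=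
    ((hE.image _).insert 1).div ((hY.finite.smul_set).image _)
  have hS (q : G ⧸ F) : (S q).ncard ≤ ((leavingEdges Γ Y).ncard + 1) ^ 2 := by
    rw [sq]
    refine natCard_div_le.trans (Nat.mul_le_mul ?_ ?_)
    · exact (ncard_insert_le _ _).trans (Nat.succ_le_succ (ncard_image_le hE))
    · exact hY.ncard_image_orbitCoord_le hΓ hE
        (induce_smul_preconnected hΓ hY.connected.preconnected _)
        (hY.isPartialTransversal.smul _)
  have hUfin : (⋃ q, (fun k : F => (k : G) * q.out) '' S q).Finite :=
    finite_iUnion fun q => (hSfin q).image _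
  refine ⟨hUfin.subset hY.touchingSet_subset, ?_⟩
  have := Fintype.ofFinite (G ⧸ F)
  calc (touchingSet G Γ Y).ncard
      ≤ (⋃ q ∈ Finset.univ, (fun k : F => (k : G) * q.out) '' S q).ncard := by
        simpa using ncard_le_ncard hY.touchingSet_subset hUfin
    _ ≤ ∑ q, ((fun k : F => (k : G) * q.out) '' S q).ncard := Finset.set_ncard_biUnion_le _ _
    _ ≤ ∑ _q : G ⧸ F, ((leavingEdges Γ Y).ncard + 1) ^ 2 :=
        Finset.sum_le_sum fun q _ => (ncard_image_le (hSfin q)).trans (hS q)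
    _ = Nat.card (G ⧸ F) * ((leavingEdges Γ Y).ncard + 1) ^ 2 := by simp

end IsConnectedTransversal

end Bounds

section DetectingSet

open Set

variable {G : Type*} [Group G] {ι : Type*}

theorem finite_pow {A : Set G} (hA : A.Finite) (n : ℕ) : (A ^ n).Finite := by
  lift A to Finset G using hA
  classical
  rw [← Finset.coe_pow]
  exact (A ^ n).finite_toSet

/-- A generating set `X` of `G` whose partial multiplication table is a set of defining relations
for `G`, as far as homomorphisms from `G` to itself are concerned. -/
structure IsPresentingSet (X : Set G) : Prop where
  closure_eq_top : Subgroup.closure X = ⊤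
  hasExtensionProperty : HasExtensionProperty X G

/-- The coincidences and the products that occur among the entries of a tuple. -/
def mulPattern (x : ι → G) : Set (ι × ι) × Set (ι × ι × ι) :=
  ({p | x p.1 = x p.2}, {p | x p.1 * x p.2.1 = x p.2.2})

variable {x x' : ι → G}

theorem exists_monoidHom_of_mulPattern_eq (hx : IsPresentingSet (range x))
    (hxx' : mulPattern x = mulPattern x') : ∃ φ : G →* G, ∀ i, φ (x i) = x' i := by
  have h_eq {i k : ι} (h : x i = x k) : x' i = x' k :=
    (hxx' ▸ h : (i, k) ∈ (mulPattern x').1)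
  have h_mul {i k l : ι} (h : x i * x k = x l) : x' i * x' k = x' l :=
    (hxx' ▸ h : (i, k, l) ∈ (mulPattern x').2)
  obtain ⟨φ, hφ⟩ := hx.hasExtensionProperty (Function.extend x x' 1) <| by
    have h_extend (i : ι) : Function.extend x x' 1 (x i) = x' i :=
      Function.FactorsThrough.extend_apply (fun _ _ => h_eq) 1 i
    rintro _ ⟨i, rfl⟩ _ ⟨k, rfl⟩ ⟨l, hl⟩
    rw [← hl, h_extend, h_extend, h_extend, h_mul hl.symm]
  exact ⟨φ, fun i => (hφ _ (mem_range_self i)).trans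
    (Function.FactorsThrough.extend_apply (fun _ _ => h_eq) 1 i)⟩

theorem exists_mulAut_of_mulPattern_eq (hx : IsPresentingSet (range x))
    (hx' : IsPresentingSet (range x')) (hxx' : mulPattern x = mulPattern x') :
    ∃ α : MulAut G, ∀ i, α (x i) = x' i := by
  obtain ⟨φ, hφ⟩ := exists_monoidHom_of_mulPattern_eq hx hxx'
  obtain ⟨ψ, hψ⟩ := exists_monoidHom_of_mulPattern_eq hx' hxx'.symm
  have hψφ : ψ.comp φ = MonoidHom.id G :=
    MonoidHom.eq_of_eqOn_dense hx.closure_eq_top <| forall_mem_range.2 fun i => by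
      rw [MonoidHom.comp_apply, hφ, hψ, MonoidHom.id_apply]
  have hφψ : φ.comp ψ = MonoidHom.id G :=
    MonoidHom.eq_of_eqOn_dense hx'.closure_eq_top <| forall_mem_range.2 fun i => by
      rw [MonoidHom.comp_apply, hψ, hφ, MonoidHom.id_apply]
  exact ⟨φ.toMulEquiv ψ hψφ hφψ, hφ⟩

theorem exists_range_fin_eq {α : Type*} {X : Set α} {N : ℕ} (hX : X.Finite) (hne : X.Nonempty)
    (hN : X.ncard ≤ N) : ∃ x : Fin N → α, range x = X := by
  have := hX.to_subtype
  have := hne.to_subtype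
  have e := Finite.equivFin X
  have hf : Function.Injective fun a => Fin.castLE hN (e a) :=
    (Fin.castLE_injective hN).comp e.injective
  exact ⟨Subtype.val ∘ Function.invFun _,
    by rw [(Function.invFun_surjective hf).range_comp, Subtype.range_coe]⟩

/-- Up to automorphisms there are finitely many presenting sets of bounded size, and up to inner
automorphisms, which do not matter for kernels, finitely many automorphisms. -/
theorem exists_finite_detecting_pow (hout : OutFinite G) (N L : ℕ) :
    ∃ D : Set G, D.Finite ∧ 1 ∉ D ∧ ∀ θ : G →* G, (∀ f ∈ D, θ f ≠ 1) →
      ∀ X : Set G, X.Finite → X.Nonempty → X.ncard ≤ N → IsPresentingSet X →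
        ∀ z ∈ X ^ L, θ z = 1 → z = 1 := by
  let P := Set (Fin N × Fin N) × Set (Fin N × Fin N × Fin N)
  let Q := MulAut G ⧸ (MulAut.conj : G →* MulAut G).range
  have : (MulAut.conj : G →* MulAut G).range.FiniteIndex := hout
  have : Finite Q := inferInstance
  have hrep (p : P) : ∃ x : Fin N → G, ∀ x' : Fin N → G, IsPresentingSet (range x') →
      mulPattern x' = p → IsPresentingSet (range x) ∧ mulPattern x = p := by
    by_cases h : ∃ x : Fin N → G, IsPresentingSet (range x) ∧ mulPattern x = p
    · exact h.imp fun x hx _ _ _ => hx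
    · exact ⟨1, fun x' hx' hp => (h ⟨x', hx', hp⟩).elim⟩
  choose rep hrep using hrep
  refine ⟨(⋃ p : P, ⋃ q : Q, q.out '' range (rep p) ^ L) \ {1}, ?_, fun h => h.2 rfl, ?_⟩
  · exact (finite_iUnion fun p => finite_iUnion fun q =>
      (finite_pow (finite_range _) L).image _).sdiff
  intro θ hθ X hXfin hXne hXN hX z hz hθz
  obtain ⟨x', rfl⟩ := exists_range_fin_eq hXfin hXne hXN
  obtain ⟨hx, hxx'⟩ := hrep _ x' hX rfl
  obtain ⟨α, hα⟩ := exists_mulAut_of_mulPattern_eq hx hX hxx'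
  rw [← funext hα, range_comp' α, ← image_pow] at hz
  obtain ⟨w, hw, rfl⟩ := hz
  let β : MulAut G := (α : Q).out
  obtain ⟨g, hg⟩ : ∃ g, MulAut.conj g = β⁻¹ * α := QuotientGroup.eq.1 (Quotient.out_eq (α : Q))
  have hαw : α w = β g * β w * (β g)⁻¹ := by
    rw [← eq_inv_mul_iff_mul_eq.1 hg]
    simp only [MulAut.mul_apply, MulAut.conj_apply, map_mul, map_inv]
  by_contra hne
  refine hθ (β w) ⟨mem_iUnion₂.2 ⟨_, α, w, hw, rfl⟩, fun hβw : β w = 1 => hne ?_⟩ ?_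
  · rw [hαw, hβw, mul_one, mul_inv_cancel]
  · rwa [hαw, map_mul, map_mul, map_inv, conj_eq_one_iff] at hθz

end DetectingSet

section FiniteClosure

open Set

variable {G H : Type*} [Group G] [Group H] {A : Set G}

theorem exists_pow_eq_pow_succ (hA : A.Finite) (h1 : 1 ∈ A) {n : ℕ} (hn : (A ^ n).ncard ≤ n) :
    ∃ m, A ^ m = A ^ (m + 1) := by
  by_contra! hne
  have hmono : StrictMono fun m => (A ^ m).ncard := strictMono_nat_of_lt_succ fun m =>
    ncard_lt_ncard ((pow_subset_pow_right h1 m.le_succ).ssubset_of_ne (hne m)) (finite_pow hA _)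
  have hlt : n + (A ^ 0).ncard ≤ (A ^ n).ncard := hmono.add_le_nat n 0
  rw [pow_zero, ← singleton_one, ncard_singleton] at hlt
  omega

theorem closure_subset_pow (h1 : 1 ∈ A) (hinv : A⁻¹ = A) {m : ℕ} (hm : A ^ m = A ^ (m + 1)) :
    (Subgroup.closure A : Set G) ⊆ A ^ m := by
  intro g hg
  have hmul {x y : G} (hx : x ∈ A ^ m) (hy : y ∈ A) : x * y ∈ A ^ m := by
    rw [hm, pow_succ]
    exact mul_mem_mul hx hy
  induction hg using Subgroup.closure_induction_right with
  | one => exact one_mem_pow h1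
  | mul_right x _ y hy ih => exact hmul ih hy
  | mul_inv_cancel x _ y hy ih => exact hmul ih (hinv ▸ inv_mem_inv.2 hy)

/-- The powers of `A` become stationary as soon as they have no room left in `T`. -/
theorem finite_closure_of_mapsTo (hA : A.Finite) (h1 : 1 ∈ A) (hinv : A⁻¹ = A) (θ : G →* H)
    {T : Set H} (hT : T.Finite) {n : ℕ} (hn : T.ncard ≤ n)
    (hθ : MapsTo θ (Subgroup.closure A) T) (hker : ∀ z ∈ A ^ (2 * n), θ z = 1 → z = 1) :
    (Subgroup.closure A : Set G).Finite := by
  have hinj : InjOn θ (A ^ n) := by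
    intro a ha b hb hab
    refine inv_mul_eq_one.1 (hker _ ?_ (by rw [map_mul, map_inv, hab, inv_mul_cancel]))
    rw [two_mul, pow_add]
    refine mul_mem_mul ?_ hb
    rwa [← hinv, inv_pow, inv_mem_inv]
  have hpow : A ^ n ⊆ Subgroup.closure A := fun a ha =>
    Subgroup.closure_pow_le (Subgroup.subset_closure ha)
  obtain ⟨m, hm⟩ := exists_pow_eq_pow_succ hA h1
    ((ncard_le_ncard_of_injOn θ (fun a ha => hθ (hpow ha)) hinj hT).trans hn)
  exact (finite_pow hA m).subset (closure_subset_pow h1 hinv hm)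

end FiniteClosure

section LocallyInjective

variable {V U : Type*} {Γ : SimpleGraph V} {Δ : SimpleGraph U}

/-- Backtracking can only be created where two neighbours of a vertex are identified. -/
theorem isChain_edges_map (φ : Γ →g Δ)
    (hφ : ∀ v w₁ w₂, Γ.Adj v w₁ → Γ.Adj v w₂ → φ w₁ = φ w₂ → w₁ = w₂) {a b : V}
    (p : Γ.Walk a b) (hp : p.IsPath) : (p.map φ).edges.IsChain (· ≠ ·) := by
  induction p with
  | nil => exact .nil
  | @cons a b c hab q ih =>
    obtain ⟨hq, haq⟩ := (SimpleGraph.Walk.cons_isPath_iff _ _).1 hp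
    cases q with
    | nil => exact .singleton _
    | @cons _ d _ hbd q =>
      refine .cons_cons (fun hedge => ?_) (ih hq)
      have had : φ a = φ d := by
        obtain ⟨h, -⟩ | ⟨h, -⟩ := Sym2.eq_iff.1 hedge
        · exact absurd h (φ.map_adj hab).ne
        · exact h
      obtain rfl := hφ b a d hab.symm hbd had
      exact haq (List.mem_cons_of_mem _ q.start_mem_support)

theorem injective_of_isAcyclic (hΓ : Γ.Preconnected) (hΔ : Δ.IsAcyclic) (φ : Γ →g Δ)
    (hφ : ∀ v w₁ w₂, Γ.Adj v w₁ → Γ.Adj v w₂ → φ w₁ = φ w₂ → w₁ = w₂) :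
    Function.Injective φ := by
  intro a b hab
  obtain ⟨p, hp⟩ := (hΓ a b).exists_isPath
  have hmap := (hΔ.isPath_iff_isChain _).2 (isChain_edges_map φ hφ p hp)
  cases p with
  | nil => rfl
  | cons h q =>
    refine absurd ?_ ((SimpleGraph.Walk.cons_isPath_iff _ _).1 hmap).2
    rw [hab]
    exact SimpleGraph.Walk.end_mem_support _

end LocallyInjective

section Folding

open Set

variable {G H V : Type*} [Group G] [Group H] [MulAction G V] {F : Subgroup G} {Γ : SimpleGraph V}
  {v w₁ w₂ : V}

/-- The identifications forced by identifying `w₁` with `w₂` equivariantly. -/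
def foldRel (G : Type*) [Group G] [MulAction G V] (w₁ w₂ : V) (a b : V) : Prop :=
  ∃ g : G, a = g • w₁ ∧ b = g • w₂

/-- The vertices of the graph obtained by folding `w₁` and `w₂` together equivariantly. The graph
itself is `Γ.map mk`; it drops the edges that become loops. -/
def Folding (G : Type*) [Group G] [MulAction G V] (w₁ w₂ : V) : Type _ := Quot (foldRel G w₁ w₂)

namespace Folding

/-- The projection to the folded graph. -/
def mk (a : V) : Folding G w₁ w₂ := Quot.mk _ a

instance : MulAction G (Folding G w₁ w₂) where
  smul g := Quot.map (g • ·) <| by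
    rintro _ _ ⟨k, rfl, rfl⟩
    exact ⟨g * k, (mul_smul _ _ _).symm, (mul_smul _ _ _).symm⟩
  one_smul := Quot.ind fun x => congrArg mk (one_smul G x)
  mul_smul g k := Quot.ind fun x => congrArg mk (mul_smul g k x)

theorem mk_surjective : Function.Surjective (mk : V → Folding G w₁ w₂) := Quot.mk_surjective

theorem smul_mk (g : G) (a : V) : g • (mk a : Folding G w₁ w₂) = mk (g • a) := rfl

theorem mk_smul_eq (g : G) : (mk (g • w₁) : Folding G w₁ w₂) = mk (g • w₂) :=
  Quot.sound ⟨g, rfl, rfl⟩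

theorem mk_eq : (mk w₁ : Folding G w₁ w₂) = mk w₂ := by
  simpa only [one_smul] using mk_smul_eq (w₁ := w₁) (w₂ := w₂) (1 : G)

theorem lift_eq_of_mk_eq {α : Type*} {f : V → α} (hf : ∀ g : G, f (g • w₁) = f (g • w₂)) {a b : V}
    (hab : (mk a : Folding G w₁ w₂) = mk b) : f a = f b := by
  have hrel (x y : V) (hxy : foldRel G w₁ w₂ x y) : f x = f y := by
    obtain ⟨g, rfl, rfl⟩ := hxy
    exact hf g
  exact congrArg (Quot.lift f hrel) hab

theorem eq_of_mk_eq {a b : V} (hab : (mk a : Folding G w₁ w₂) = mk b)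
    (hb₁ : ∀ g : G, g • w₁ ≠ b) (hb₂ : ∀ g : G, g • w₂ ≠ b) : a = b :=
  (lift_eq_of_mk_eq (f := (· = b)) (fun g => by simp only [hb₁, hb₂]) hab).mpr rfl

/-- The elements moving one of the two folded vertices to one of them. -/
def moves (G : Type*) [Group G] [MulAction G V] (w₁ w₂ : V) : Set G :=
  {t | ∃ a ∈ ({w₁, w₂} : Set V), t • a ∈ ({w₁, w₂} : Set V)}

theorem one_mem_moves : (1 : G) ∈ moves G w₁ w₂ := ⟨w₁, .inl rfl, .inl (one_smul G w₁)⟩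

theorem inv_moves : (moves G w₁ w₂)⁻¹ = moves G w₁ w₂ := by
  have hsub : (moves G w₁ w₂)⁻¹ ⊆ moves G w₁ w₂ := fun t ⟨a, ha, hta⟩ =>
    ⟨t⁻¹ • a, hta, by rwa [smul_inv_smul]⟩
  exact hsub.antisymm (inv_subset.1 hsub)

theorem stabilizer_le_closure_moves :
    MulAction.stabilizer G (mk w₁ : Folding G w₁ w₂) ≤ Subgroup.closure (moves G w₁ w₂) := by
  intro g hg
  set K := Subgroup.closure (moves G w₁ w₂)
  let C : Set V := {b | ∃ k ∈ K, ∃ a ∈ ({w₁, w₂} : Set V), k • a = b}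
  have mem_K {k : G} {a : V} (ha : a ∈ ({w₁, w₂} : Set V)) : k • a ∈ C → k ∈ K := by
    rintro ⟨l, hl, b, hb, hlb⟩
    rw [← mul_inv_cancel_left l k]
    refine K.mul_mem hl (Subgroup.subset_closure ⟨a, ha, ?_⟩)
    rwa [mul_smul, ← hlb, inv_smul_smul]
  have hC : (g • w₁ ∈ C) = (w₁ ∈ C) := lift_eq_of_mk_eq (f := (· ∈ C)) (fun k => propext
    ⟨fun h => ⟨k, mem_K (.inl rfl) h, w₂, .inr rfl, rfl⟩,
      fun h => ⟨k, mem_K (.inr rfl) h, w₁, .inl rfl, rfl⟩⟩) hg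
  exact mem_K (.inl rfl) (hC.mpr ⟨1, K.one_mem, w₁, .inl rfl, one_smul G w₁⟩)

theorem closure_moves_le_stabilizer :
    Subgroup.closure (moves G w₁ w₂) ≤ MulAction.stabilizer G (mk w₁ : Folding G w₁ w₂) := by
  have h_mk {a : V} (ha : a ∈ ({w₁, w₂} : Set V)) : (mk a : Folding G w₁ w₂) = mk w₁ := by
    obtain rfl | rfl := ha
    exacts [rfl, mk_eq.symm]
  refine (Subgroup.closure_le _).2 fun t ⟨a, ha, hta⟩ => ?_
  calc t • mk w₁ = t • mk a := by rw [h_mk ha]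
    _ = mk w₁ := h_mk hta

theorem image_conj_moves_subset {Y : Set V} (hΓ : IsInvariant G Γ)
    (hY : IsConnectedTransversal F Γ Y) (h₁ : v = w₁ ∨ Γ.Adj v w₁) (h₂ : v = w₂ ∨ Γ.Adj v w₂)
    {k : G} (hk : k⁻¹ • v ∈ Y) :
    MulAut.conj k⁻¹ '' moves G w₁ w₂ ⊆ touchingSet G Γ Y ^ 2 := by
  rintro _ ⟨t, ⟨a, ha, hta⟩, rfl⟩
  have h_near {b : V} (hb : b ∈ ({w₁, w₂} : Set V)) : v = b ∨ Γ.Adj v b := by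
    obtain rfl | rfl := hb
    exacts [h₁, h₂]
  obtain ⟨l, hl⟩ := hY.exists_inv_smul_mem (t • a)
  have htv : (t * k)⁻¹ • t • v ∈ Y := by rwa [mul_inv_rev, mul_smul, inv_smul_smul]
  have hfactor : MulAut.conj k⁻¹ t = k⁻¹ * l * (l⁻¹ * (t * k)) := by
    rw [MulAut.conj_apply]
    group
  rw [hfactor, sq]
  refine mul_mem_mul (inv_mul_mem_touchingSet hΓ hk hl (h_near hta))
    (inv_mul_mem_touchingSet hΓ hl htv ?_)
  rw [smul_left_cancel_iff, hΓ.adj_smul_iff, eq_comm, Γ.adj_comm]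
  exact h_near ha

theorem finite_stabilizer_mk {Y : Set V} (hΓ : IsInvariant G Γ)
    (hY : IsConnectedTransversal F Γ Y) (hXfin : (touchingSet G Γ Y).Finite)
    (h₁ : v = w₁ ∨ Γ.Adj v w₁) (h₂ : v = w₂ ∨ Γ.Adj v w₂) (θ : G →* H) {U : Type*}
    [MulAction H U] {f : V → U} (hf : ∀ (g : G) x, f (g • x) = θ g • f x) (hfw : f w₁ = f w₂)
    {n : ℕ} (hfin : (MulAction.stabilizer H (f w₁) : Set H).Finite)
    (hn : (MulAction.stabilizer H (f w₁) : Set H).ncard ≤ n)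
    (hker : ∀ z ∈ touchingSet G Γ Y ^ (4 * n), θ z = 1 → z = 1) :
    (MulAction.stabilizer G (mk w₁ : Folding G w₁ w₂) : Set G).Finite := by
  obtain ⟨k, hk⟩ := hY.exists_inv_smul_mem v
  have hconj := image_conj_moves_subset hΓ hY h₁ h₂ hk
  have hmoves : (moves G w₁ w₂).Finite := Finite.of_finite_image
    ((finite_pow hXfin 2).subset hconj) (MulAut.conj k⁻¹).injective.injOn
  refine (finite_closure_of_mapsTo hmoves one_mem_moves inv_moves θ hfin hn ?_ ?_).subset
    stabilizer_le_closure_moves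
  · intro g hg
    have hg' : (mk (g • w₁) : Folding G w₁ w₂) = mk w₁ := closure_moves_le_stabilizer hg
    change θ g • f w₁ = f w₁
    rw [← hf]
    exact lift_eq_of_mk_eq (fun g => by rw [hf, hf, hfw]) hg'
  · intro z hz hθz
    refine (map_eq_one_iff _ (MulAut.conj k⁻¹).injective).1 (hker _ ?_ ?_)
    · have hpow := pow_subset_pow_left hconj (mem_image_of_mem (MulAut.conj k⁻¹) hz |>
        (image_pow (MulAut.conj k⁻¹) _ _).subset)
      rwa [← pow_mul, ← mul_assoc] at hpow
    · rw [MulAut.conj_apply, map_mul, map_mul, hθz, mul_one, ← map_mul, mul_inv_cancel, map_one]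

theorem exists_cover {W : Set V} (hW : W.Finite) (hcover : ∀ x : V, ∃ h ∈ F, h • x ∈ W)
    (hne : w₁ ≠ w₂)
    (hfree : ∀ h ∈ F, h • (mk w₁ : Folding G w₁ w₂) = mk w₁ → h = 1) :
    ∃ W' : Set (Folding G w₁ w₂), W'.Finite ∧ W'.ncard < W.ncard ∧
      ∀ x, ∃ h ∈ F, h • x ∈ W' := by
  obtain ⟨h₁, hh₁, hw₁⟩ := hcover w₁
  obtain ⟨h₂, hh₂, hw₂⟩ := hcover w₂
  have hne' : h₁ • w₁ ≠ h₂ • w₂ := by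
    intro he
    have hw : (h₂⁻¹ * h₁) • w₁ = w₂ := by rw [mul_smul, he, inv_smul_smul]
    have h_one := hfree _ (F.mul_mem (F.inv_mem hh₂) hh₁) (by rw [smul_mk, hw, mk_eq])
    exact hne (by rw [← hw, h_one, one_smul])
  have hW' : (W \ {h₂ • w₂}).Finite := hW.sdiff
  refine ⟨mk '' (W \ {h₂ • w₂}), hW'.image _, (ncard_image_le hW').trans_lt
    (ncard_sdiff_singleton_lt_of_mem hw₂ hW), mk_surjective.forall.2 fun x => ?_⟩
  obtain ⟨h, hh, hx⟩ := hcover x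
  by_cases hxw : h • x = h₂ • w₂
  · refine ⟨h₁ * h₂⁻¹ * h, F.mul_mem (F.mul_mem hh₁ (F.inv_mem hh₂)) hh, h₁ • w₁, ⟨hw₁, hne'⟩, ?_⟩
    rw [mul_smul, smul_mk h, hxw, smul_mk, mul_smul, inv_smul_smul, mk_smul_eq]
  · exact ⟨h, hh, h • x, ⟨hx, hxw⟩, rfl⟩

theorem eq_one_of_smul_eq [F.Normal] (hF : ∀ h ∈ F, ∀ x : V, h • x = x → h = 1)
    (hfree : ∀ h ∈ F, h • (mk w₁ : Folding G w₁ w₂) = mk w₁ → h = 1) :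
    ∀ h ∈ F, ∀ x : Folding G w₁ w₂, h • x = x → h = 1 := by
  have h_orbit (l : G) {h : G} (hh : h ∈ F)
      (hl : h • (mk (l • w₁) : Folding G w₁ w₂) = mk (l • w₁)) : h = 1 := by
    rw [← smul_mk, ← inv_smul_eq_iff, smul_smul, smul_smul] at hl
    have hconj : l⁻¹ * h * l ∈ F := by
      simpa only [inv_inv] using ‹F.Normal›.conj_mem h hh l⁻¹
    have h_one : l⁻¹ * h * l⁻¹⁻¹ = 1 := by
      rw [inv_inv]
      exact hfree _ hconj hl
    exact conj_eq_one_iff.1 h_one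
  intro h hh
  refine mk_surjective.forall.2 fun x hx => ?_
  by_cases hx₁ : ∃ l : G, l • w₁ = x
  · obtain ⟨l, rfl⟩ := hx₁
    exact h_orbit l hh hx
  by_cases hx₂ : ∃ l : G, l • w₂ = x
  · obtain ⟨l, rfl⟩ := hx₂
    exact h_orbit l hh (by rwa [mk_smul_eq])
  · push Not at hx₁ hx₂
    exact hF h hh x (eq_of_mk_eq hx hx₁ hx₂)

theorem connected_map (hΓ : Γ.Connected) :
    (Γ.map (mk : V → Folding G w₁ w₂)).Connected := by
  have := hΓ.nonempty.map (mk : V → Folding G w₁ w₂)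
  refine ⟨mk_surjective.forall₂.2 fun a => ?_⟩
  refine forall_of_preconnected hΓ.preconnected (fun b c hbc ih => ?_) (.refl _)
  by_cases he : (mk b : Folding G w₁ w₂) = mk c
  · rwa [← he]
  · exact ih.trans (SimpleGraph.Adj.reachable ⟨he, b, c, hbc, rfl, rfl⟩)

theorem isInvariant_map (hΓ : IsInvariant G Γ) :
    IsInvariant G (Γ.map (mk : V → Folding G w₁ w₂)) := by
  rintro g _ _ ⟨hne, a, b, hab, rfl, rfl⟩
  exact ⟨fun h => hne (smul_left_cancel g h), g • a, g • b, hΓ g a b hab, rfl, rfl⟩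

theorem hasTrivialCohomology_map (hΓ : IsInvariant G Γ) (h₁ : v = w₁ ∨ Γ.Adj v w₁)
    (h₂ : v = w₂ ∨ Γ.Adj v w₂) (hcoh : HasTrivialCohomology Γ H) :
    HasTrivialCohomology (Γ.map (mk : V → Folding G w₁ w₂)) H := by
  classical
  intro c hc
  let m : V → Folding G w₁ w₂ := mk
  obtain ⟨ψ, hψ⟩ := hcoh (fun a b => if m a = m b then 1 else c (m a) (m b)) fun a b hab => by
    by_cases hm : m a = m b
    · rw [if_pos hm, if_pos hm.symm, one_mul]
    · rw [if_neg hm, if_neg (Ne.symm hm)]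
      exact hc _ _ ⟨hm, a, b, hab, rfl, rfl⟩
  have hψ_near (g : G) {w : V} (hw : v = w ∨ Γ.Adj v w) :
      ψ (g • w) = ψ (g • v) * if m (g • v) = m (g • w) then 1 else c (m (g • v)) (m (g • w)) := by
    obtain rfl | hw := hw
    · rw [if_pos rfl, mul_one]
    · exact hψ _ _ (hΓ g _ _ hw)
  refine ⟨Quot.lift ψ ?_, ?_⟩
  · rintro _ _ ⟨g, rfl, rfl⟩
    have hm : m (g • w₁) = m (g • w₂) := mk_smul_eq g
    rw [hψ_near g h₁, hψ_near g h₂, hm]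
  · rintro _ _ ⟨hne, a, b, hab, rfl, rfl⟩
    exact (hψ a b hab).trans (by rw [if_neg hne]; rfl)

theorem isFreeCofinite_map [F.Normal] (h : IsFreeCofinite F Γ) (h₁ : v = w₁ ∨ Γ.Adj v w₁)
    (h₂ : v = w₂ ∨ Γ.Adj v w₂)
    (hfree : ∀ h ∈ F, h • (mk w₁ : Folding G w₁ w₂) = mk w₁ → h = 1) :
    IsFreeCofinite F (Γ.map (mk : V → Folding G w₁ w₂)) where
  isInvariant := isInvariant_map h.isInvariant
  connected := connected_map h.connected
  cohomology := hasTrivialCohomology_map h.isInvariant h₁ h₂ h.cohomology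
  eq_one_of_smul_eq := eq_one_of_smul_eq h.eq_one_of_smul_eq hfree
  exists_finite_vertices := by
    obtain ⟨W, hW, hcover⟩ := h.exists_finite_vertices
    refine ⟨mk '' W, hW.image _, mk_surjective.forall.2 fun x => ?_⟩
    obtain ⟨k, hk, hkx⟩ := hcover x
    exact ⟨k, hk, mem_image_of_mem mk hkx⟩

end Folding

/-- Maps from a `G`-graph to an `H`-graph that are equivariant along `θ : G →* H` and send each
edge to an edge or a vertex. -/
structure IsFoldingMap (θ : G →* H) {U : Type*} [MulAction H U] (Γ : SimpleGraph V)
    (Δ : SimpleGraph U) (f : V → U) : Prop where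
  map_smul : ∀ (g : G) x, f (g • x) = θ g • f x
  map_adj : ∀ a b, Γ.Adj a b → f a = f b ∨ Δ.Adj (f a) (f b)

namespace IsFoldingMap

variable {U : Type*} [MulAction H U] {Δ : SimpleGraph U} {θ : G →* H} {f : V → U}

theorem injective (hf : IsFoldingMap θ Γ Δ f) (hΓ : Γ.Preconnected) (hΔ : Δ.IsAcyclic)
    (hlocal : ∀ v w₁ w₂, (v = w₁ ∨ Γ.Adj v w₁) → (v = w₂ ∨ Γ.Adj v w₂) → f w₁ = f w₂ → w₁ = w₂) :
    Function.Injective f :=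
  injective_of_isAcyclic hΓ hΔ ⟨f, fun {a b} hab => (hf.map_adj a b hab).resolve_left fun h =>
    hab.ne (hlocal a a b (.inl rfl) (.inr hab) h)⟩
    fun v w₁ w₂ h₁ h₂ => hlocal v w₁ w₂ (.inr h₁) (.inr h₂)

theorem exists_lift (hf : IsFoldingMap θ Γ Δ f) {w₁ w₂ : V} (hw : f w₁ = f w₂) :
    ∃ f' : Folding G w₁ w₂ → U, IsFoldingMap θ (Γ.map Folding.mk) Δ f' := by
  refine ⟨Quot.lift f ?_, fun g => Folding.mk_surjective.forall.2 fun x => hf.map_smul g x, ?_⟩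
  · rintro _ _ ⟨g, rfl, rfl⟩
    rw [hf.map_smul, hf.map_smul, hw]
  · rintro _ _ ⟨-, a, b, hab, rfl, rfl⟩
    exact hf.map_adj a b hab

theorem injective_monoidHom (hf : IsFoldingMap θ Γ Δ f) (hinj : Function.Injective f) {Y : Set V}
    (hY : Y.Nonempty) {n : ℕ} (hn : n ≠ 0) (hker : ∀ z ∈ touchingSet G Γ Y ^ n, θ z = 1 → z = 1) :
    Function.Injective θ := by
  refine (injective_iff_map_eq_one θ).2 fun g hg => ?_
  obtain ⟨y, hy⟩ := hY
  have hgy : g • y = y := hinj (by rw [hf.map_smul, hg, one_smul])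
  exact hker g (subset_pow (one_mem_touchingSet ⟨y, hy⟩) hn ⟨y, hy, y, hy, .inl hgy.symm⟩) hg

end IsFoldingMap

/-- A bound, depending only on `F`, for the size of the touching sets of connected transversals. -/
noncomputable def presentationBound (F : Subgroup G) : ℕ :=
  Nat.card (G ⧸ F) * (Nat.card ((F →* Multiplicative (ZMod 2)) × Bool) + 1) ^ 2

theorem IsFreeCofinite.finite_and_ncard_touchingSet_le [F.Normal] [Finite (G ⧸ F)]
    [Finite (F →* Multiplicative (ZMod 2))] (h : IsFreeCofinite F Γ) {Y : Set V}
    (hY : IsConnectedTransversal F Γ Y) :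
    (touchingSet G Γ Y).Finite ∧ (touchingSet G Γ Y).ncard ≤ presentationBound F := by
  obtain ⟨hE, hE_le⟩ := hY.finite_and_ncard_leavingEdges_le h
  obtain ⟨hX, hX_le⟩ := hY.finite_and_ncard_touchingSet_le h.isInvariant hE
  exact ⟨hX, hX_le.trans (Nat.mul_le_mul_left _ (Nat.pow_le_pow_left (Nat.succ_le_succ hE_le) 2))⟩

/-- Fold the domain until the map to the forest `Δ` becomes locally injective. Each fold decreases
the number of `F`-orbits, so the process stops; the kernel stays detectable throughout because the
folded graphs present `G` by sets of bounded size. -/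
theorem injective_of_isFoldingMap.{u, v} {G : Type u} [Group G] {F : Subgroup G} [F.Normal]
    [Finite (G ⧸ F)] [Finite (F →* Multiplicative (ZMod 2))]
    (htf : ∀ h ∈ F, IsOfFinOrder h → h = 1) {H : Type*} [Group H] {θ : G →* H} {U : Type*}
    [MulAction H U] {Δ : SimpleGraph U} (hΔ : Δ.IsAcyclic) {n : ℕ}
    (hstab : ∀ u : U, (MulAction.stabilizer H u : Set H).Finite ∧
      (MulAction.stabilizer H u : Set H).ncard ≤ n)
    (hker : ∀ X : Set G, X.Finite → X.Nonempty → X.ncard ≤ presentationBound F →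
      IsPresentingSet X → ∀ z ∈ X ^ (4 * n), θ z = 1 → z = 1)
    {V : Type v} [MulAction G V] {Γ : SimpleGraph V} (hΓ : IsFreeCofinite F Γ)
    (hcoh : HasTrivialCohomology Γ G) {f : V → U} (hf : IsFoldingMap θ Γ Δ f) {W : Set V}
    (hW : W.Finite) (hcover : ∀ x : V, ∃ h ∈ F, h • x ∈ W) : Function.Injective θ := by
  obtain ⟨Y, hY⟩ := hΓ.exists_isConnectedTransversal
  obtain ⟨hXfin, hXcard⟩ := hΓ.finite_and_ncard_touchingSet_le hY
  have hkerX := hker _ hXfin ⟨1, one_mem_touchingSet hY.nonempty⟩ hXcard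
    ⟨closure_touchingSet hΓ.isInvariant hΓ.connected.preconnected hY,
      hasExtensionProperty_touchingSet hΓ.isInvariant hΓ.connected.preconnected hY hcoh⟩
  by_cases hlocal : ∀ v w₁ w₂, (v = w₁ ∨ Γ.Adj v w₁) → (v = w₂ ∨ Γ.Adj v w₂) →
    f w₁ = f w₂ → w₁ = w₂
  · obtain ⟨y, -⟩ := hY.nonempty
    have hn : 0 < n :=
      ((ncard_pos (hstab (f y)).1).2 ⟨1, one_smul H (f y)⟩).trans_le (hstab (f y)).2
    exact hf.injective_monoidHom (hf.injective hΓ.connected.preconnected hΔ hlocal) hY.nonempty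
      (by omega) hkerX
  push Not at hlocal
  obtain ⟨v, w₁, w₂, h₁, h₂, hfw, hne⟩ := hlocal
  have hfin := Folding.finite_stabilizer_mk hΓ.isInvariant hY hXfin h₁ h₂ θ hf.map_smul hfw
    (hstab _).1 (hstab _).2 hkerX
  have hfree (h : G) (hh : h ∈ F) (hw : h • (Folding.mk w₁ : Folding G w₁ w₂) = Folding.mk w₁) :
      h = 1 := by
    have := hfin.to_subtype
    exact htf h hh (Submonoid.isOfFinOrder_coe.2 (isOfFinOrder_of_finite
      (⟨h, hw⟩ : MulAction.stabilizer G (Folding.mk w₁ : Folding G w₁ w₂))))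
  obtain ⟨W', hW', hlt, hcover'⟩ := Folding.exists_cover hW hcover hne hfree
  obtain ⟨f', hf'⟩ := hf.exists_lift hfw
  exact injective_of_isFoldingMap htf hΔ hstab hker
    (Folding.isFreeCofinite_map hΓ h₁ h₂ hfree)
    (Folding.hasTrivialCohomology_map hΓ.isInvariant h₁ h₂ hcoh) hf' hW' hcover'
termination_by W.ncard
decreasing_by exact hlt

end Folding

section Cohomology

variable {V : Type*} {Γ : SimpleGraph V} {H : Type*} [Group H]

/-- The product of the values of `c` along the successive oriented edges of a walk. -/
def walkProd (c : V → V → H) {a : V} : ∀ {b : V}, Γ.Walk a b → H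
  | _, .nil => 1
  | _, .cons (v := b) _ p => c a b * walkProd c p

theorem walkProd_concat (c : V → V → H) {a b d : V} (p : Γ.Walk a b) (h : Γ.Adj b d) :
    walkProd c (p.concat h) = walkProd c p * c b d := by
  induction p with
  | nil => simp [SimpleGraph.Walk.concat_nil, walkProd]
  | cons _ p ih => simp [SimpleGraph.Walk.concat_cons, walkProd, ih, mul_assoc]

/-- In a tree, a cocycle is the coboundary of its products along the paths from a base point. -/
theorem hasTrivialCohomology_of_isTree (hΓ : Γ.IsTree) : HasTrivialCohomology Γ H := by
  classical
  intro c hc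
  obtain ⟨o⟩ := hΓ.connected.nonempty
  choose P hP hPu using hΓ.existsUnique_path
  have key : ∀ u v, Γ.Adj u v → v ∉ (P o u).support →
      walkProd c (P o v) = walkProd c (P o u) * c u v := fun u v huv hv => by
    rw [← walkProd_concat c (P o u) huv, hPu o v _ ((hP o u).concat hv huv)]
  refine ⟨fun v => walkProd c (P o v), fun u v huv => ?_⟩
  by_cases hv : v ∈ (P o u).support
  · have hu : u ∉ (P o v).support := by
      rw [← hPu o v _ ((hP o u).takeUntil hv)]
      exact SimpleGraph.Walk.endpoint_notMem_support_takeUntil (hP o u) hv huv.ne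
    beta_reduce
    rw [key v u huv.symm hu, mul_assoc, hc v u huv.symm, mul_one]
  · exact key u v huv hv

/-- If the edge `ab` is not a bridge, then its indicator is a cocycle modulo two which is not a
coboundary. -/
theorem isTree_of_hasTrivialCohomology (hΓ : Γ.Connected)
    (hcoh : HasTrivialCohomology Γ (Multiplicative (ZMod 2))) : Γ.IsTree := by
  classical
  refine ⟨hΓ, SimpleGraph.isAcyclic_iff_forall_adj_isBridge.2 fun a b hab => ?_⟩
  rw [SimpleGraph.isBridge_iff]
  intro hreach
  obtain ⟨ψ, hψ⟩ := hcoh (fun u v => if s(u, v) = s(a, b) then Multiplicative.ofAdd 1 else 1) (by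
    intro u v _
    rw [Sym2.eq_swap (a := v)]
    split_ifs
    · decide
    · exact one_mul 1)
  have hconst : ∀ x, Relation.ReflTransGen (Γ.deleteEdges {s(a, b)}).Adj a x → ψ x = ψ a := by
    intro x hx
    induction hx with
    | refl => rfl
    | @tail x y _ hxy ih =>
      rw [SimpleGraph.deleteEdges_adj] at hxy
      rw [hψ x y hxy.1, if_neg (c := s(x, y) = s(a, b)) hxy.2, mul_one, ih]
  have hab' := hψ a b hab
  rw [if_pos rfl, hconst b ((SimpleGraph.reachable_iff_reflTransGen a b).1 hreach),
    left_eq_mul] at hab'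
  exact absurd hab' (by decide)

end Cohomology

section Subdivision

open Set

variable {T : Type*} {Γ : SimpleGraph T}

/-- The nonempty cliques of a graph, that is, the vertices of its barycentric subdivision when the
graph is triangle-free. -/
def nonemptyCliques (Γ : SimpleGraph T) : Set (Set T) := {A | A.Nonempty ∧ Γ.IsClique A}

/-- The comparability graph of the nonempty cliques under inclusion. For a triangle-free graph it
is the barycentric subdivision. -/
def subdivision (Γ : SimpleGraph T) : SimpleGraph (nonemptyCliques Γ) where
  Adj A B := A < B ∨ B < A
  symm := ⟨fun _ _ => Or.symm⟩
  loopless := ⟨fun A h => h.elim (lt_irrefl A) (lt_irrefl A)⟩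

/-- A vertex, as a vertex of the subdivision. -/
def vertexClique (Γ : SimpleGraph T) (u : T) : nonemptyCliques Γ :=
  ⟨{u}, singleton_nonempty u, pairwise_singleton u _⟩

/-- An edge, as a vertex of the subdivision. -/
def edgeClique {u v : T} (h : Γ.Adj u v) : nonemptyCliques Γ :=
  ⟨{u, v}, insert_nonempty u {v}, SimpleGraph.isClique_pair.2 fun _ => h⟩

theorem edgeClique_symm {u v : T} (h : Γ.Adj u v) : edgeClique h.symm = edgeClique h :=
  Subtype.ext (pair_comm v u)

theorem vertexClique_le {A : nonemptyCliques Γ} {u : T} (hu : u ∈ A.1) : vertexClique Γ u ≤ A :=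
  singleton_subset_iff.2 hu

theorem edgeClique_ne_vertexClique {u v : T} (h : Γ.Adj u v) (w : T) :
    edgeClique h ≠ vertexClique Γ w := by
  intro he
  have hmem : ∀ x ∈ ({u, v} : Set T), x = w := fun x hx => (congrArg Subtype.val he).subset hx
  exact h.ne ((hmem u (by simp)).trans (hmem v (by simp)).symm)

theorem subdivision_adj_left {u v : T} (h : Γ.Adj u v) :
    (subdivision Γ).Adj (vertexClique Γ u) (edgeClique h) :=
  Or.inl ((vertexClique_le (mem_insert u {v})).lt_of_ne (edgeClique_ne_vertexClique h u).symm)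

theorem subdivision_adj_right {u v : T} (h : Γ.Adj u v) :
    (subdivision Γ).Adj (edgeClique h) (vertexClique Γ v) := by
  rw [← edgeClique_symm h]
  exact (subdivision_adj_left h.symm).symm

theorem eq_vertexClique_or_exists_eq_edgeClique (hΓ : Γ.CliqueFree 3) (A : nonemptyCliques Γ)
    {u : T} (hu : u ∈ A.1) :
    A = vertexClique Γ u ∨ ∃ (v : T) (h : Γ.Adj u v), A = edgeClique h := by
  classical
  refine or_iff_not_imp_left.2 fun hA => ?_
  obtain ⟨v, hv, hvu⟩ : ∃ v ∈ A.1, v ≠ u := by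
    contrapose! hA
    exact le_antisymm (fun v hv => hA v hv) (vertexClique_le hu)
  have huv : Γ.Adj u v := A.2.2 hu hv hvu.symm
  refine ⟨v, huv, le_antisymm (fun w hw => ?_) (pair_subset hu hv)⟩
  by_contra hw'
  obtain ⟨hwu, hwv⟩ : w ≠ u ∧ w ≠ v := not_or.1 hw'
  exact hΓ {u, v, w} (SimpleGraph.is3Clique_triple_iff.2
    ⟨huv, A.2.2 hu hw hwu.symm, A.2.2 hv hw hwv.symm⟩)

theorem finite_of_mem_nonemptyCliques (hΓ : Γ.CliqueFree 3) (A : nonemptyCliques Γ) :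
    A.1.Finite := by
  obtain ⟨u, hu⟩ := A.2.1
  obtain rfl | ⟨v, huv, rfl⟩ := eq_vertexClique_or_exists_eq_edgeClique hΓ A hu
  · exact finite_singleton u
  · exact toFinite {u, v}

theorem exists_eq_vertexClique_of_lt (hΓ : Γ.CliqueFree 3) {A B : nonemptyCliques Γ} (h : A < B) :
    ∃ u ∈ B.1, A = vertexClique Γ u := by
  obtain ⟨u, hu⟩ := A.2.1
  refine ⟨u, h.le hu, ?_⟩
  obtain hA | ⟨v, huv, rfl⟩ := eq_vertexClique_or_exists_eq_edgeClique hΓ A hu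
  · exact hA
  have hv : v ∈ B.1 := h.le (mem_insert_of_mem u rfl)
  obtain rfl | ⟨w, huw, rfl⟩ := eq_vertexClique_or_exists_eq_edgeClique hΓ B (h.le hu)
  · exact absurd hv huv.ne'
  · obtain rfl : v = w := hv.resolve_left huv.ne'
    exact absurd h (lt_irrefl _)

theorem subdivision_connected (hΓ : Γ.Connected) : (subdivision Γ).Connected := by
  obtain ⟨o⟩ := hΓ.nonempty
  have hvertex : ∀ v, (subdivision Γ).Reachable (vertexClique Γ o) (vertexClique Γ v) :=
    forall_of_preconnected hΓ.preconnected (fun u v huv hu => hu.trans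
      ((subdivision_adj_left huv).reachable.trans (subdivision_adj_right huv).reachable))
      (SimpleGraph.Reachable.refl _)
  refine SimpleGraph.connected_iff_exists_forall_reachable _ |>.2 ⟨vertexClique Γ o, fun A => ?_⟩
  obtain ⟨u, hu⟩ := A.2.1
  refine (hvertex u).trans ?_
  obtain h | h := (vertexClique_le hu).eq_or_lt
  · rw [h]
  · exact SimpleGraph.Adj.reachable (Or.inl h)

/-- A cocycle `c` on the subdivision induces one on `Γ`, by multiplying its values along the two
halves of an edge; a primitive of the latter extends over the midpoints of the edges. -/
theorem HasTrivialCohomology.subdivision {H : Type*} [Group H] (hΓ : Γ.CliqueFree 3)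
    (hcoh : HasTrivialCohomology Γ H) : HasTrivialCohomology (subdivision Γ) H := by
  classical
  intro c hc
  obtain ⟨Ψ, hΨ⟩ := hcoh (fun u v => if h : Γ.Adj u v then
      c (vertexClique Γ u) (edgeClique h) * c (edgeClique h) (vertexClique Γ v) else 1) (by
    intro u v huv
    rw [dif_pos huv, dif_pos huv.symm, edgeClique_symm huv, mul_assoc,
      ← mul_assoc (c (edgeClique huv) (vertexClique Γ v)), hc _ _ (subdivision_adj_right huv),
      one_mul, hc _ _ (subdivision_adj_left huv)])
  choose r hr using fun A : nonemptyCliques Γ => A.2.1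
  let ψ : nonemptyCliques Γ → H := fun A =>
    if A = vertexClique Γ (r A) then Ψ (r A) else Ψ (r A) * c (vertexClique Γ (r A)) A
  have hvertex : ∀ u, ψ (vertexClique Γ u) = Ψ u := fun u => by
    have hu : r (vertexClique Γ u) = u := hr (vertexClique Γ u)
    simp only [ψ, hu, if_true]
  have hedge : ∀ A : nonemptyCliques Γ, ∀ u ∈ A.1, A ≠ vertexClique Γ u →
      ψ A = Ψ u * c (vertexClique Γ u) A := by
    intro A u hu hA
    obtain ⟨v, huv, rfl⟩ := (eq_vertexClique_or_exists_eq_edgeClique hΓ A hu).resolve_left hA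
    simp only [ψ, if_neg (edgeClique_ne_vertexClique huv _)]
    obtain h | h : r (edgeClique huv) = u ∨ r (edgeClique huv) = v := hr (edgeClique huv)
    · rw [h]
    · rw [h, hΨ u v huv, dif_pos huv, mul_assoc, mul_assoc, hc _ _ (subdivision_adj_right huv),
        mul_one]
  have hlt : ∀ A B : nonemptyCliques Γ, A < B → ψ B = ψ A * c A B := by
    intro A B hAB
    obtain ⟨u, hu, rfl⟩ := exists_eq_vertexClique_of_lt hΓ hAB
    rw [hvertex, hedge B u hu hAB.ne']
  refine ⟨ψ, fun A B hAB => hAB.elim (hlt A B) fun hBA => ?_⟩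
  rw [hlt B A hBA, mul_assoc, hc B A hAB.symm, mul_one]

theorem subdivision_isTree (hΓ : Γ.IsTree) : (subdivision Γ).IsTree :=
  isTree_of_hasTrivialCohomology (subdivision_connected hΓ.connected)
    (.subdivision (hΓ.isAcyclic.cliqueFree le_rfl) (hasTrivialCohomology_of_isTree hΓ))

end Subdivision

section Center

open Set

variable {T : Type*} {Γ : SimpleGraph T}

/-- The vertices minimising the largest distance to the points of a finite set `Q`. -/
def relativeCenter (Γ : SimpleGraph T) (Q : Finset T) : Set T :=
  {x | ∀ y, Q.sup (Γ.dist x) ≤ Q.sup (Γ.dist y)}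

theorem relativeCenter_nonempty [Nonempty T] (Q : Finset T) : (relativeCenter Γ Q).Nonempty := by
  obtain ⟨x, -, hx⟩ := exists_forall_le_of_nonempty univ_nonempty fun x : T => Q.sup (Γ.dist x)
  exact ⟨x, fun y => hx y (mem_univ y)⟩

theorem dist_lt_of_mem_support {x z q : T} {p : Γ.Walk x q} (hp : p.length = Γ.dist x q)
    (hz : z ∈ p.support) (hzx : z ≠ x) : Γ.dist z q < Γ.dist x q := by
  classical
  have hlen := congrArg SimpleGraph.Walk.length (p.take_spec hz)
  rw [SimpleGraph.Walk.length_append] at hlen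
  have hpos : (p.takeUntil z hz).length ≠ 0 := fun h =>
    hzx (SimpleGraph.Walk.eq_of_length_eq_zero h).symm
  have := SimpleGraph.dist_le (p.dropUntil z hz)
  omega

theorem dist_lt_max_of_separates (hΓ : Γ.Connected) {x y z : T}
    (hz : ∀ p : Γ.Walk x y, z ∈ p.support) (hzx : z ≠ x) (hzy : z ≠ y) (q : T) :
    Γ.dist z q < max (Γ.dist x q) (Γ.dist y q) := by
  obtain ⟨p, hp⟩ := hΓ.exists_walk_length_eq_dist x q
  obtain ⟨p', hp'⟩ := hΓ.exists_walk_length_eq_dist y q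
  obtain h | h := (SimpleGraph.Walk.mem_support_append_iff p p'.reverse).1 (hz _)
  · exact lt_max_of_lt_left (dist_lt_of_mem_support hp h hzx)
  · rw [SimpleGraph.Walk.support_reverse, List.mem_reverse] at h
    exact lt_max_of_lt_right (dist_lt_of_mem_support hp' h hzy)

theorem mem_support_of_isPath (hΓ : Γ.IsTree) {x y z : T} {p : Γ.Walk x y} (hp : p.IsPath)
    (hz : z ∈ p.support) (q : Γ.Walk x y) : z ∈ q.support := by
  classical
  refine q.support_bypass_subset_support ?_
  rwa [(hΓ.existsUnique_path x y).unique q.bypass_isPath hp]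

/-- A point strictly between two points of the center would be closer to `Q`. -/
theorem relativeCenter_isClique (hΓ : Γ.IsTree) {Q : Finset T} (hQ : Q.Nonempty) :
    Γ.IsClique (relativeCenter Γ Q) := by
  intro x hx y hy hxy
  by_contra hadj
  obtain ⟨P, hP, -⟩ := hΓ.existsUnique_path x y
  cases P with
  | nil => exact hxy rfl
  | @cons _ z _ hxz P =>
    have hz := mem_support_of_isPath hΓ hP (List.mem_cons_of_mem x P.start_mem_support)
    have hzy : z ≠ y := fun h => hadj (h ▸ hxz)
    obtain ⟨q, hq, hzq⟩ := Finset.exists_mem_eq_sup Q hQ (Γ.dist z)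
    have hlt : Q.sup (Γ.dist z) < Q.sup (Γ.dist x) := calc
      Q.sup (Γ.dist z) = Γ.dist z q := hzq
      _ < max (Γ.dist x q) (Γ.dist y q) :=
        dist_lt_max_of_separates hΓ.connected hz hxz.ne' hzy q
      _ ≤ Q.sup (Γ.dist x) := max_le (Finset.le_sup hq) ((Finset.le_sup hq).trans (hy x))
    exact hlt.not_ge (hx z)

variable {G : Type*} [Group G] [MulAction G T]

theorem IsInvariant.dist_smul_le (hinv : IsInvariant G Γ) (hΓ : Γ.Connected) (g : G) (x y : T) :
    Γ.dist (g • x) (g • y) ≤ Γ.dist x y := by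
  obtain ⟨p, hp⟩ := hΓ.exists_walk_length_eq_dist x y
  let φ : Γ →g Γ := ⟨fun x => g • x, fun h => hinv g _ _ h⟩
  rw [← hp, ← p.length_map φ]
  exact SimpleGraph.dist_le (p.map φ)

theorem IsInvariant.smul_mem_relativeCenter (hinv : IsInvariant G Γ) (hΓ : Γ.Connected)
    {Q : Finset T} {g : G} (hQ : ∀ q ∈ Q, g⁻¹ • q ∈ Q) {x : T} (hx : x ∈ relativeCenter Γ Q) :
    g • x ∈ relativeCenter Γ Q := by
  refine fun y => le_trans (Finset.sup_le fun q hq => ?_) (hx y)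
  rw [← smul_inv_smul g q]
  exact (hinv.dist_smul_le hΓ g x _).trans (Finset.le_sup (f := Γ.dist x) (hQ q hq))

theorem exists_forall_smul_eq_of_finite (hΓ : Γ.IsTree) (hinv : IsInvariant G Γ)
    (P : Subgroup G) [Finite P] : ∃ A ∈ nonemptyCliques Γ, ∀ g ∈ P, g • A = A := by
  classical
  have : Nonempty T := hΓ.connected.nonempty
  let o := Classical.arbitrary T
  have hfin : (MulAction.orbit P o).Finite := finite_range _
  have hQ : ∀ g ∈ P, ∀ q ∈ hfin.toFinset, g • q ∈ hfin.toFinset := by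
    intro g hg q hq
    rw [hfin.mem_toFinset] at hq ⊢
    exact MulAction.mem_orbit_of_mem_orbit (⟨g, hg⟩ : P) hq
  have hsub : ∀ g ∈ P, g • relativeCenter Γ hfin.toFinset ⊆ relativeCenter Γ hfin.toFinset := by
    rintro g hg _ ⟨x, hx, rfl⟩
    exact hinv.smul_mem_relativeCenter hΓ.connected (hQ g⁻¹ (inv_mem hg)) hx
  exact ⟨relativeCenter Γ hfin.toFinset, ⟨relativeCenter_nonempty _, relativeCenter_isClique hΓ
    (hfin.toFinset_nonempty.2 (MulAction.nonempty_orbit o))⟩, fun g hg =>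
    (hsub g hg).antisymm (subset_smul_set_iff.2 (hsub g⁻¹ (inv_mem hg)))⟩

end Center

section CliqueAction

open Set

variable {G T : Type*} [Group G] [MulAction G T] {Γ : SimpleGraph T} {F : Subgroup G}

/-- The action on the nonempty cliques of an invariant graph. -/
abbrev cliqueMulAction (hinv : IsInvariant G Γ) : MulAction G (nonemptyCliques Γ) :=
  let S : SubMulAction G (Set T) :=
    { carrier := nonemptyCliques Γ
      smul_mem' := by
        rintro g A ⟨hA, hclique⟩
        refine ⟨hA.smul_set, ?_⟩
        rintro _ ⟨x, hx, rfl⟩ _ ⟨y, hy, rfl⟩ hne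
        exact hinv g x y (hclique hx hy (ne_of_apply_ne _ hne)) }
  inferInstanceAs (MulAction G S)

theorem subdivision_isInvariant (hinv : IsInvariant G Γ) :
    letI := cliqueMulAction hinv
    IsInvariant G (subdivision Γ) := by
  let := cliqueMulAction hinv
  have hlt : ∀ (g : G) (A B : nonemptyCliques Γ), A < B → g • A < g • B := fun g A B hAB =>
    ⟨smul_set_mono hAB.1, fun h => hAB.2 (smul_set_subset_smul_set_iff.1 h)⟩
  exact fun g A B hAB => hAB.imp (hlt g A B) (hlt g B A)

/-- Some positive power of `h` fixes a point of `A`, so that `h` has finite order. -/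
theorem eq_one_of_smul_set_eq (htf : ∀ h ∈ F, IsOfFinOrder h → h = 1)
    (hfree : ∀ h ∈ F, ∀ x : T, h • x = x → h = 1) {A : Set T} (hA : A.Finite)
    (hne : A.Nonempty) {h : G} (hh : h ∈ F) (hsmul : h • A = A) : h = 1 := by
  obtain ⟨x, hx⟩ := hne
  have hpow : ∀ n : ℕ, h ^ n • x ∈ A := by
    intro n
    induction n with
    | zero => rwa [pow_zero, one_smul]
    | succ n ih =>
      rw [pow_succ', mul_smul, ← hsmul]
      exact smul_mem_smul_set ih
  obtain ⟨i, -, j, -, hij, heq⟩ :=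
    infinite_univ.exists_lt_map_eq_of_mapsTo (fun n _ => hpow n) hA
  refine htf h hh (isOfFinOrder_iff_pow_eq_one.2 ⟨j - i, Nat.sub_pos_of_lt hij, ?_⟩)
  refine hfree _ (F.pow_mem hh _) x (smul_left_cancel (h ^ i) ?_)
  rw [smul_smul, ← pow_add, Nat.add_sub_cancel' hij.le, heq]

theorem exists_finite_cover_of_finiteIndex [F.FiniteIndex] {W : Set T} (hW : W.Finite)
    (hcover : ∀ x : T, ∃ g : G, g • x ∈ W) :
    ∃ W' : Set T, W'.Finite ∧ ∀ x : T, ∃ h ∈ F, h • x ∈ W' := by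
  refine ⟨⋃ q : G ⧸ F, q.out⁻¹ • W, finite_iUnion fun q => hW.smul_set, fun x => ?_⟩
  obtain ⟨g, hg⟩ := hcover x
  have hq : ((g : G ⧸ F).out : G ⧸ F) = g := Quotient.out_eq _
  refine ⟨_, QuotientGroup.eq.1 hq, mem_iUnion.2 ⟨(g : G ⧸ F), ?_⟩⟩
  rw [mul_smul]
  exact smul_mem_smul_set hg

theorem isFreeCofinite_subdivision [F.FiniteIndex] (htf : ∀ h ∈ F, IsOfFinOrder h → h = 1)
    (hΓ : IsCofiniteTree F Γ) :
    letI := cliqueMulAction hΓ.isInvariant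
    IsFreeCofinite F (subdivision Γ) := by
  let := cliqueMulAction hΓ.isInvariant
  have h3 : Γ.CliqueFree 3 := hΓ.isTree.isAcyclic.cliqueFree le_rfl
  refine ⟨subdivision_isInvariant hΓ.isInvariant, subdivision_connected hΓ.isTree.connected,
    .subdivision h3 (hasTrivialCohomology_of_isTree hΓ.isTree), fun h hh A hA => ?_, ?_⟩
  · exact eq_one_of_smul_set_eq htf hΓ.eq_one_of_smul_eq (finite_of_mem_nonemptyCliques h3 A)
      A.2.1 hh (congrArg Subtype.val hA)
  obtain ⟨D, hD, hDcover⟩ := hΓ.exists_finite_darts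
  obtain ⟨W, hW, hWcover⟩ := hΓ.exists_finite_vertices
  have hfin : (Subtype.val ⁻¹' ((fun w => ({w} : Set T)) '' W ∪
      (fun p : T × T => ({p.1, p.2} : Set T)) '' D) : Set (nonemptyCliques Γ)).Finite :=
    ((hW.image _).union (hD.image _)).preimage Subtype.val_injective.injOn
  refine exists_finite_cover_of_finiteIndex hfin fun A => ?_
  obtain ⟨u, hu⟩ := A.2.1
  obtain rfl | ⟨v, huv, rfl⟩ := eq_vertexClique_or_exists_eq_edgeClique h3 A hu
  · obtain ⟨g, hg⟩ := hWcover u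
    exact ⟨g, Or.inl ⟨_, hg, smul_set_singleton.symm⟩⟩
  · obtain ⟨g, hg⟩ := hDcover u v huv
    refine ⟨g, Or.inr ⟨_, hg, ?_⟩⟩
    exact (image_pair (g • ·) u v).symm

end CliqueAction

section TreeOfTrees

open Set SimpleGraph

variable {V W U : Type*} {H : Type*} [Group H] {Γ : SimpleGraph V} {B : SimpleGraph W}
  {Δ : SimpleGraph U} {X : W → Set U}

theorem HasTrivialCohomology.exists_of_mem (hΓ : HasTrivialCohomology Γ H) {E : Set V}
    {c : V → V → H} (hc : ∀ u ∈ E, ∀ v ∈ E, Γ.Adj u v → c u v * c v u = 1) :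
    ∃ ψ : V → H, ∀ u ∈ E, ∀ v ∈ E, Γ.Adj u v → ψ v = ψ u * c u v := by
  classical
  obtain ⟨ψ, hψ⟩ := hΓ (fun u v => if u ∈ E ∧ v ∈ E then c u v else 1) (by
    intro u v huv
    by_cases h : u ∈ E ∧ v ∈ E
    · rw [if_pos h, if_pos h.symm, hc u h.1 v h.2 huv]
    · rw [if_neg h, if_neg (mt And.symm h), one_mul])
  exact ⟨ψ, fun u hu v hv huv => by rw [hψ u v huv, if_pos ⟨hu, hv⟩]⟩

theorem hasTrivialCohomology_induce {E : Set V}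
    (h : ∀ c : V → V → H, (∀ u ∈ E, ∀ v ∈ E, Γ.Adj u v → c u v * c v u = 1) →
      ∃ ψ : V → H, ∀ u ∈ E, ∀ v ∈ E, Γ.Adj u v → ψ v = ψ u * c u v) :
    HasTrivialCohomology (Γ.induce E) H := by
  classical
  intro c hc
  let c' : V → V → H := fun u v => if h : u ∈ E ∧ v ∈ E then c ⟨u, h.1⟩ ⟨v, h.2⟩ else 1
  have hc' : ∀ u v : E, c' u v = c u v := fun u v => dif_pos ⟨u.2, v.2⟩
  obtain ⟨ψ, hψ⟩ := h c' fun u hu v hv huv => by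
    rw [hc' ⟨u, hu⟩ ⟨v, hv⟩, hc' ⟨v, hv⟩ ⟨u, hu⟩, hc ⟨u, hu⟩ ⟨v, hv⟩ huv]
  exact ⟨fun u => ψ u, fun u v huv => (hψ u u.2 v v.2 huv).trans (by rw [hc'])⟩

/-- The total space of a family of sets of vertices `X a` indexed by the vertices `a` of a base
graph. The graph on it, induced by the box product, is a tree of trees in the sense of Bass and
Serre when the base and the fibres are trees and adjacent fibres share exactly one vertex. -/
def totalSpace (X : W → Set U) : Set (W × U) := {p | p.2 ∈ X p.1}

theorem induce_boxProd_connected (hB : B.Connected) (hX : ∀ a, (Δ.induce (X a)).Connected)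
    (hadj : ∀ a b, B.Adj a b → (X a ∩ X b).Nonempty) :
    ((B □ Δ).induce (totalSpace X)).Connected := by
  have hfibre : ∀ a (x y : X a), ((B □ Δ).induce (totalSpace X)).Reachable
      ⟨(a, x), x.2⟩ ⟨(a, y), y.2⟩ := fun a x y =>
    ((hX a).preconnected x y).map
      (⟨fun z => ⟨(a, z), z.2⟩, fun h => Or.inr ⟨h, rfl⟩⟩ :
        Δ.induce (X a) →g (B □ Δ).induce (totalSpace X))
  obtain ⟨o⟩ := hB.nonempty
  obtain ⟨z⟩ := (hX o).nonempty
  have hall : ∀ a (x : X a), ((B □ Δ).induce (totalSpace X)).Reachable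
      ⟨(o, z), z.2⟩ ⟨(a, x), x.2⟩ := by
    refine forall_of_preconnected hB.preconnected (fun a b hab ha x => ?_) (hfibre o z)
    obtain ⟨y, hya, hyb⟩ := hadj a b hab
    have hedge : ((B □ Δ).induce (totalSpace X)).Adj ⟨(a, y), hya⟩ ⟨(b, y), hyb⟩ :=
      Or.inl ⟨hab, rfl⟩
    exact ((ha ⟨y, hya⟩).trans hedge.reachable).trans (hfibre b ⟨y, hyb⟩ x)
  exact connected_iff_exists_forall_reachable _ |>.2 ⟨_, fun p => hall p.1.1 ⟨p.1.2, p.2⟩⟩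

/-- Primitives of a cocycle on the individual fibres are glued by means of a cocycle on `B`, which
measures their discrepancy at the common points of adjacent fibres. -/
theorem HasTrivialCohomology.induce_boxProd (hB : HasTrivialCohomology B H)
    (hΔ : HasTrivialCohomology Δ H) (hX : ∀ a b, B.Adj a b → ∃ x, X a ∩ X b = {x}) :
    HasTrivialCohomology ((B □ Δ).induce (totalSpace X)) H := by
  refine hasTrivialCohomology_induce fun c hc => ?_
  have hfibre : ∀ a, ∃ ψ : U → H, ∀ x ∈ X a, ∀ y ∈ X a, Δ.Adj x y →
      ψ y = ψ x * c (a, x) (a, y) := fun a =>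
    hΔ.exists_of_mem fun x hx y hy hxy => hc _ hx _ hy (Or.inr ⟨hxy, rfl⟩)
  choose ψ hψ using hfibre
  have hglue : ∀ a b, ∃ C : H, B.Adj a b → ∀ x ∈ X a ∩ X b,
      C = ψ a x * c (a, x) (b, x) * (ψ b x)⁻¹ := by
    intro a b
    by_cases hab : B.Adj a b
    · obtain ⟨x, hx⟩ := hX a b hab
      refine ⟨ψ a x * c (a, x) (b, x) * (ψ b x)⁻¹, fun _ y hy => ?_⟩
      obtain rfl : y = x := hx.subset hy
      rfl
    · exact ⟨1, fun h => absurd h hab⟩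
  choose C hC using hglue
  obtain ⟨Ψ, hΨ⟩ := hB C (by
    intro a b hab
    obtain ⟨x, hx⟩ := hX a b hab
    obtain ⟨hxa, hxb⟩ : x ∈ X a ∩ X b := hx.superset rfl
    have hcx : c (a, x) (b, x) * c (b, x) (a, x) = 1 :=
      hc (a, x) hxa (b, x) hxb (Or.inl ⟨hab, rfl⟩)
    rw [hC a b hab x ⟨hxa, hxb⟩, hC b a hab.symm x ⟨hxb, hxa⟩, eq_inv_of_mul_eq_one_left hcx]
    group)
  refine ⟨fun p => Ψ p.1 * ψ p.1 p.2, ?_⟩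
  rintro ⟨a, x⟩ (hx : x ∈ X a) ⟨b, y⟩ (hy : y ∈ X b) (⟨hab, rfl : x = y⟩ | ⟨hxy, rfl : a = b⟩)
  · simp only [hΨ a b hab, hC a b hab x ⟨hx, hy⟩, mul_assoc, inv_mul_cancel, mul_one]
  · simp only [hψ a x hx y hy hxy, mul_assoc]

theorem induce_boxProd_isTree (hB : B.IsTree) (hΔ : Δ.IsTree)
    (hX : ∀ a, (Δ.induce (X a)).Connected) (hadj : ∀ a b, B.Adj a b → ∃ x, X a ∩ X b = {x}) :
    ((B □ Δ).induce (totalSpace X)).IsTree :=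
  isTree_of_hasTrivialCohomology
    (induce_boxProd_connected hB.connected hX fun a b hab =>
      (hadj a b hab).elim fun _ hx => hx ▸ singleton_nonempty _)
    (.induce_boxProd (hasTrivialCohomology_of_isTree hB) (hasTrivialCohomology_of_isTree hΔ) hadj)

end TreeOfTrees

section PathHull

open Set

variable {U : Type*} {Δ : SimpleGraph U} {Q : Set U}

/-- The vertices lying on every walk between two suitable vertices of `Q`. In a tree it is the
smallest connected set containing `Q`. -/
def pathHull (Δ : SimpleGraph U) (Q : Set U) : Set U :=
  {x | ∃ a ∈ Q, ∃ b ∈ Q, ∀ p : Δ.Walk a b, x ∈ p.support}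

theorem subset_pathHull : Q ⊆ pathHull Δ Q :=
  fun a ha => ⟨a, ha, a, ha, fun p => p.start_mem_support⟩

theorem pathHull_mono {R : Set U} (h : Q ⊆ R) : pathHull Δ Q ⊆ pathHull Δ R :=
  fun _ ⟨a, ha, b, hb, hx⟩ => ⟨a, h ha, b, h hb, hx⟩

theorem pathHull_singleton (a : U) : pathHull Δ {a} = {a} := by
  refine Subset.antisymm ?_ subset_pathHull
  rintro x ⟨_, rfl, _, rfl, hx⟩
  exact List.mem_singleton.1 (hx .nil)

theorem pathHull_finite (hΔ : Δ.Connected) (hQ : Q.Finite) : (pathHull Δ Q).Finite := by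
  let p : ∀ a b, Δ.Walk a b := fun a b => (hΔ.preconnected a b).some
  refine (hQ.biUnion fun a _ => hQ.biUnion fun b _ => (p a b).support.finite_toSet).subset ?_
  rintro x ⟨a, ha, b, hb, hx⟩
  exact mem_biUnion ha (mem_biUnion hb (hx (p a b)))

theorem induce_pathHull_connected (hΔ : Δ.IsTree) (hQ : Q.Nonempty) :
    (Δ.induce (pathHull Δ Q)).Connected := by
  obtain ⟨o, ho⟩ := hQ
  have hreach : ∀ a (ha : a ∈ Q), ∀ b ∈ Q, ∀ x (hx : x ∈ pathHull Δ Q),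
      (∀ p : Δ.Walk a b, x ∈ p.support) →
      (Δ.induce (pathHull Δ Q)).Reachable ⟨a, subset_pathHull ha⟩ ⟨x, hx⟩ := by
    intro a ha b hb x hx hxp
    obtain ⟨p, hp, -⟩ := hΔ.existsUnique_path a b
    have hsub : {y | y ∈ p.support} ⊆ pathHull Δ Q := fun y hy =>
      ⟨a, ha, b, hb, mem_support_of_isPath hΔ hp hy⟩
    exact (p.connected_induce_support.preconnected ⟨a, p.start_mem_support⟩ ⟨x, hxp p⟩).map
      (Δ.induceHomOfLE hsub).toHom
  refine SimpleGraph.connected_iff_exists_forall_reachable _ |>.2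
    ⟨⟨o, subset_pathHull ho⟩, fun x => ?_⟩
  obtain ⟨a, ha, b, hb, hx⟩ := x.2
  exact (hreach o ho a ha a (subset_pathHull ha) fun p => p.end_mem_support).trans
    (hreach a ha b hb x x.2 hx)

theorem IsInvariant.smul_mem_pathHull {H : Type*} [Group H] [MulAction H U]
    (hinv : IsInvariant H Δ) (h : H) {x : U} (hx : x ∈ pathHull Δ Q) :
    h • x ∈ pathHull Δ (h • Q) := by
  obtain ⟨a, ha, b, hb, hx⟩ := hx
  refine ⟨h • a, smul_mem_smul_set ha, h • b, smul_mem_smul_set hb, fun p => ?_⟩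
  let φ : Δ →g Δ := ⟨fun x => h⁻¹ • x, fun hadj => hinv h⁻¹ _ _ hadj⟩
  have hmem := hx ((p.map φ).copy (inv_smul_smul h a) (inv_smul_smul h b))
  rw [SimpleGraph.Walk.support_copy, SimpleGraph.Walk.support_map, List.mem_map] at hmem
  obtain ⟨y, hy, rfl⟩ := hmem
  rwa [show h • φ y = y from smul_inv_smul h y]

end PathHull

section EquivariantMap

open Set

universe u v

variable {G H : Type*} [Group G] [Group H] {T : Type u} {U : Type v} [MulAction G T]
  [MulAction H U] {F : Subgroup G}

/-- On each orbit, the map is determined by a base point, which has to be sent to a fixed point of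
the image of its stabilizer. -/
theorem exists_equivariant_map (θ : G →* H) (hst : ∀ x : T, Finite (MulAction.stabilizer G x))
    (hfix : ∀ P : Subgroup H, Finite P → ∃ u : U, ∀ p ∈ P, p • u = u) :
    ∃ f : T → U, ∀ (g : G) x, f (g • x) = θ g • f x := by
  let r : T → T := fun x => (Quotient.mk (MulAction.orbitRel G T) x).out
  have hr : ∀ x, ∃ g : G, g • r x = x := fun x =>
    (MulAction.orbitRel G T).symm (Quotient.exact (Quotient.out_eq _))
  have hrg : ∀ (g : G) x, r (g • x) = r x := fun g x =>
    congrArg Quotient.out (Quotient.sound ⟨g, rfl⟩)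
  choose k hk using hr
  have hp : ∀ x : T, ∃ y : U, ∀ g : G, g • x = x → θ g • y = y := by
    intro x
    have := hst x
    have hfin : Finite ((MulAction.stabilizer G x).map θ) :=
      (toFinite (θ '' (MulAction.stabilizer G x : Set G))).to_subtype
    obtain ⟨y, hy⟩ := hfix _ hfin
    exact ⟨y, fun g hg => hy _ ⟨g, hg, rfl⟩⟩
  choose p hp using hp
  refine ⟨fun x => θ (k x) • p (r x), fun g x => ?_⟩
  have hstab : ((k (g • x))⁻¹ * (g * k x)) • r x = r x := by
    rw [mul_smul, mul_smul, hk, inv_smul_eq_iff, ← hrg g x, hk]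
  have hfixed := hp _ _ hstab
  rw [map_mul, mul_smul, map_inv, inv_smul_eq_iff, map_mul, mul_smul] at hfixed
  beta_reduce
  rw [hrg, hfixed]

end EquivariantMap

section TotalSpaceAction

open Set

variable {G H W U : Type*} [Group G] [Group H] [MulAction G W] [MulAction H U] {F : Subgroup G}
  {B : SimpleGraph W} {Δ : SimpleGraph U} {X : W → Set U} {θ : G →* H}

/-- The action on the total space of an equivariant family of sets, where `G` acts on the second
coordinate through `θ`. -/
abbrev totalSpaceMulAction (hX : ∀ (g : G) a, ∀ x ∈ X a, θ g • x ∈ X (g • a)) :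
    MulAction G (totalSpace X) :=
  let : MulAction G U := MulAction.compHom U θ
  let S : SubMulAction G (W × U) :=
    { carrier := totalSpace X
      smul_mem' := fun g p hp => hX g p.1 p.2 hp }
  inferInstanceAs (MulAction G S)

theorem isFreeCofinite_totalSpace (hB : IsFreeCofinite F B) (hΔ : IsInvariant H Δ)
    (hX : ∀ (g : G) a, ∀ x ∈ X a, θ g • x ∈ X (g • a)) (hfin : ∀ a, (X a).Finite)
    (htree : ((B □ Δ).induce (totalSpace X)).IsTree) :
    letI := totalSpaceMulAction hX
    IsFreeCofinite F ((B □ Δ).induce (totalSpace X)) := by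
  let := totalSpaceMulAction hX
  refine ⟨fun g p q hpq => ?_, htree.connected, hasTrivialCohomology_of_isTree htree,
    fun h hh p hp => hB.eq_one_of_smul_eq h hh p.1.1 (congrArg (fun q => q.1.1) hp), ?_⟩
  · exact hpq.imp (fun h => ⟨hB.isInvariant g _ _ h.1, congrArg (θ g • ·) h.2⟩)
      fun h => ⟨hΔ (θ g) _ _ h.1, congrArg (g • ·) h.2⟩
  · obtain ⟨W₀, hW₀, hcover⟩ := hB.exists_finite_vertices
    refine ⟨Subtype.val ⁻¹' ⋃ a ∈ W₀, (fun x => (a, x)) '' X a,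
      (hW₀.biUnion fun a _ => (hfin a).image _).preimage Subtype.val_injective.injOn,
      fun p => ?_⟩
    obtain ⟨h, hh, ha⟩ := hcover p.1.1
    exact ⟨h, hh, mem_biUnion ha ⟨θ h • p.1.2, hX h _ _ p.2, rfl⟩⟩

theorem isFoldingMap_totalSpace_snd (hX : ∀ (g : G) a, ∀ x ∈ X a, θ g • x ∈ X (g • a)) :
    letI := totalSpaceMulAction hX
    IsFoldingMap θ ((B □ Δ).induce (totalSpace X)) Δ fun p => p.1.2 :=
  letI := totalSpaceMulAction hX
  ⟨fun _ _ => rfl, fun _ _ h => h.imp And.right And.left⟩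

end TotalSpaceAction

section FoldingMap

open Set

universe u v

variable {G H : Type*} [Group G] [Group H] {T : Type u} {U : Type v} [MulAction G T]
  [MulAction H U] {F : Subgroup G}

/-- Each edge of `Γ` is subdivided so that it maps onto the path between the images of its
endpoints. -/
theorem exists_isFoldingMap [F.FiniteIndex] (htf : ∀ h ∈ F, IsOfFinOrder h → h = 1)
    {Γ : SimpleGraph T} (hΓ : IsCofiniteTree F Γ) {Δ : SimpleGraph U} (hΔ : Δ.IsTree)
    (hinv : IsInvariant H Δ) {θ : G →* H} {f : T → U} (hf : ∀ (g : G) x, f (g • x) = θ g • f x) :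
    ∃ (S : Type (max u v)) (_ : MulAction G S) (Λ : SimpleGraph S) (Φ : S → U),
      Λ.IsTree ∧ IsFreeCofinite F Λ ∧ IsFoldingMap θ Λ Δ Φ := by
  have h3 : Γ.CliqueFree 3 := hΓ.isTree.isAcyclic.cliqueFree le_rfl
  let X : nonemptyCliques Γ → Set U := fun A => pathHull Δ (f '' A)
  have hX : ∀ A B, (subdivision Γ).Adj A B → ∃ x, X A ∩ X B = {x} := by
    have hlt : ∀ A B : nonemptyCliques Γ, A < B → ∃ x, X A ∩ X B = {x} := by
      intro A B hAB
      have hsub : X A ⊆ X B := pathHull_mono (image_mono hAB.le)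
      obtain ⟨u, -, rfl⟩ := exists_eq_vertexClique_of_lt h3 hAB
      refine ⟨f u, ?_⟩
      rw [inter_eq_left.2 hsub]
      simp only [X, vertexClique, image_singleton, pathHull_singleton]
    exact fun A B hAB => hAB.elim (hlt A B) fun hBA => inter_comm (X A) (X B) ▸ hlt B A hBA
  have htree : ((subdivision Γ □ Δ).induce (totalSpace X)).IsTree :=
    induce_boxProd_isTree (subdivision_isTree hΓ.isTree) hΔ
      (fun A => induce_pathHull_connected hΔ (A.2.1.image f)) hX
  have hsmul : letI := cliqueMulAction hΓ.isInvariant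
      ∀ (g : G) A, ∀ x ∈ X A, θ g • x ∈ X (g • A) := by
    intro g A x hx
    have himage : f '' (g • A.1) = θ g • f '' A.1 := image_comm (hf g)
    change θ g • x ∈ pathHull Δ (f '' (g • A.1))
    rw [himage]
    exact hinv.smul_mem_pathHull (θ g) hx
  let := cliqueMulAction hΓ.isInvariant
  exact ⟨totalSpace X, totalSpaceMulAction hsmul, (subdivision Γ □ Δ).induce (totalSpace X),
    fun p => p.1.2, htree, isFreeCofinite_totalSpace (isFreeCofinite_subdivision htf hΓ) hinv hsmul
      (fun A => pathHull_finite hΔ.connected ((finite_of_mem_nonemptyCliques h3 A).image f)) htree,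
    isFoldingMap_totalSpace_snd hsmul⟩

end FoldingMap

section VirtuallyFreeGroup

open Set

universe u v w

variable {G : Type u} [Group G]

theorem finite_and_ncard_stabilizer_le {F : Subgroup G} [Finite (G ⧸ F)] {U : Type*}
    [MulAction G U] (hfree : ∀ h ∈ F, ∀ x : U, h • x = x → h = 1) (x : U) :
    (MulAction.stabilizer G x : Set G).Finite ∧
      (MulAction.stabilizer G x : Set G).ncard ≤ Nat.card (G ⧸ F) := by
  have hinj : InjOn (QuotientGroup.mk : G → G ⧸ F) (MulAction.stabilizer G x) :=
    fun a ha b hb hab => inv_mul_eq_one.1 <| hfree _ (QuotientGroup.eq.1 hab) x <|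
      (MulAction.stabilizer G x).mul_mem (inv_mem ha) hb
  refine ⟨.of_finite_image (toFinite _) hinj, ?_⟩
  simpa only [ncard_univ] using ncard_le_ncard_of_injOn _ (fun a _ => mem_univ _) hinj finite_univ

theorem exists_normal_mulEquiv_freeGroup (hvf : VirtuallyFree G) :
    ∃ F : Subgroup G, F.Normal ∧ F.FiniteIndex ∧ ∃ ι : Type u, Nonempty (F ≃* FreeGroup ι) := by
  obtain ⟨H, hH, ⟨hfree⟩⟩ := hvf
  exact ⟨H.normalCore, inferInstance, inferInstance, _,
    ⟨(Subgroup.subgroupOfEquivOfLe H.normalCore_le).symm.trans (IsFreeGroup.toFreeGroup _)⟩⟩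

/-- Let `Γ` be a tree on which `G` acts. An endomorphism `θ` is covered by an equivariant map from
`Γ` to its subdivision, which becomes a folding map after enlarging its domain. -/
theorem exists_finite_forall_injective [Group.FG G] (hvf : VirtuallyFree G) (hout : OutFinite G) :
    ∃ D : Set G, D.Finite ∧ 1 ∉ D ∧
      ∀ θ : G →* G, (∀ d ∈ D, θ d ≠ 1) → Function.Injective θ := by
  obtain ⟨F, _, _, ι, ⟨e⟩⟩ := exists_normal_mulEquiv_freeGroup hvf
  have htf := eq_one_of_isOfFinOrder e
  have : Finite (F →* Multiplicative (ZMod 2)) := finite_monoidHom F (Multiplicative (ZMod 2))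
  obtain ⟨T, _, Γ, hΓ⟩ := exists_isCofiniteTree F e
  obtain ⟨D, hD, hD1, hdetect⟩ :=
    exists_finite_detecting_pow hout (presentationBound F) (4 * Nat.card (G ⧸ F))
  refine ⟨D, hD, hD1, fun θ hθ => ?_⟩
  let := cliqueMulAction hΓ.isInvariant
  obtain ⟨f, hf⟩ := exists_equivariant_map (T := T) (U := nonemptyCliques Γ) θ
    (fun x => (finite_and_ncard_stabilizer_le hΓ.eq_one_of_smul_eq x).1) fun P _ =>
      have ⟨A, hA, hPA⟩ := exists_forall_smul_eq_of_finite hΓ.isTree hΓ.isInvariant P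
      ⟨⟨A, hA⟩, fun p hp => Subtype.ext (hPA p hp)⟩
  have hΔ := subdivision_isTree hΓ.isTree
  obtain ⟨S, _, Λ, Φ, hΛ, hΛF, hΦ⟩ :=
    exists_isFoldingMap htf hΓ hΔ (subdivision_isInvariant hΓ.isInvariant) hf
  obtain ⟨W, hW, hcover⟩ := hΛF.exists_finite_vertices
  exact injective_of_isFoldingMap htf hΔ.isAcyclic
    (finite_and_ncard_stabilizer_le (isFreeCofinite_subdivision htf hΓ).eq_one_of_smul_eq)
    (hdetect θ hθ) hΛF (hasTrivialCohomology_of_isTree hΛ) hΦ hW hcover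

theorem exists_finite_generating_hasExtensionProperty [Group.FG G] (hvf : VirtuallyFree G) :
    ∃ X : Set G, X.Finite ∧ 1 ∈ X ∧ X⁻¹ = X ∧ Subgroup.closure X = ⊤ ∧
      ∀ (H : Type w) [Group H], HasExtensionProperty X H := by
  obtain ⟨F, _, _, ι, ⟨e⟩⟩ := exists_normal_mulEquiv_freeGroup hvf
  have : Finite (F →* Multiplicative (ZMod 2)) := finite_monoidHom F (Multiplicative (ZMod 2))
  obtain ⟨T, _, Γ, hΓ⟩ := exists_isCofiniteTree F e
  obtain ⟨W, hW, hcover⟩ := hΓ.exists_finite_vertices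
  have hΓF : IsFreeCofinite F Γ := ⟨hΓ.isInvariant, hΓ.isTree.connected,
    hasTrivialCohomology_of_isTree hΓ.isTree, hΓ.eq_one_of_smul_eq,
    exists_finite_cover_of_finiteIndex hW hcover⟩
  obtain ⟨Y, hY⟩ := hΓF.exists_isConnectedTransversal
  have hconn := hΓ.isTree.connected.preconnected
  exact ⟨touchingSet G Γ Y, (hΓF.finite_and_ncard_touchingSet_le hY).1,
    one_mem_touchingSet hY.nonempty, inv_touchingSet hΓ.isInvariant,
    closure_touchingSet hΓ.isInvariant hconn hY, fun H _ =>
      hasExtensionProperty_touchingSet hΓ.isInvariant hconn hY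
        (hasTrivialCohomology_of_isTree hΓ.isTree)⟩

variable {X : Set G}

theorem exists_mem_pow_of_closure_eq_top (hinv : X⁻¹ = X) (hX : Subgroup.closure X = ⊤) (g : G) :
    ∃ n : ℕ, g ∈ X ^ n := by
  have hg : g ∈ Subgroup.closure X := hX ▸ Subgroup.mem_top g
  induction hg using Subgroup.closure_induction'' with
  | mem x hx => exact ⟨1, by rwa [pow_one]⟩
  | inv_mem x hx => exact ⟨1, by rwa [pow_one, ← hinv, inv_mem_inv]⟩
  | one => exact ⟨0, one_mem_one⟩
  | mul x y _ _ hx hy =>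
    obtain ⟨m, hm⟩ := hx
    obtain ⟨n, hn⟩ := hy
    exact ⟨m + n, pow_add X m n ▸ mul_mem_mul hm hn⟩

theorem HasExtensionProperty.pow {H : Type*} [Group H] (hext : HasExtensionProperty X H)
    (h1 : 1 ∈ X) {n : ℕ} (hn : n ≠ 0) : HasExtensionProperty (X ^ n) H := by
  intro j hj
  have hle : ∀ {k}, k ≤ n → X ^ k ⊆ X ^ n := pow_subset_pow_right h1
  have hX : X ⊆ X ^ n := subset_pow h1 hn
  obtain ⟨φ, hφ⟩ := hext j fun a ha b hb hab => hj a (hX ha) b (hX hb) (hX hab)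
  have hpow : ∀ k ≤ n, ∀ x ∈ X ^ k, φ x = j x := by
    intro k
    induction k with
    | zero =>
      rintro - x rfl
      exact hφ 1 h1
    | succ k ih =>
      intro hk x hx
      have hxn := hle hk hx
      rw [pow_succ] at hx
      obtain ⟨a, ha, b, hb, rfl⟩ := hx
      have hk' : k ≤ n := (Nat.le_succ k).trans hk
      beta_reduce at hxn ⊢
      rw [map_mul, hj a (hle hk' ha) b (hX hb) hxn, ih hk' a ha, hφ b hb]
  exact ⟨φ, hpow n le_rfl⟩

theorem exists_finite_superset_hasExtensionProperty [Group.FG G] (hvf : VirtuallyFree G)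
    {A : Set G} (hA : A.Finite) :
    ∃ Z : Set G, Z.Finite ∧ A ⊆ Z ∧ ∀ (H : Type w) [Group H], HasExtensionProperty Z H := by
  obtain ⟨X, hXfin, h1, hinv, hX, hext⟩ := exists_finite_generating_hasExtensionProperty.{u, w} hvf
  choose m hm using exists_mem_pow_of_closure_eq_top hinv hX
  obtain ⟨M, hM⟩ := (hA.image m).bddAbove
  exact ⟨X ^ (M + 1), finite_pow hXfin _, fun a ha =>
    pow_subset_pow_right h1 (Nat.le_succ_of_le (hM ⟨a, ha, rfl⟩)) (hm a),
    fun H _ => (hext H).pow h1 M.succ_ne_zero⟩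

end VirtuallyFreeGroup

section Logic

open FirstOrder.Language BoundedFormula

universe u w

variable {G : Type u} {H : Type w} [Group G] [Group H]

theorem isQF_iInf {L : FirstOrder.Language} {α β : Type*} {n : ℕ} [Finite β]
    {f : β → L.BoundedFormula α n} (hf : ∀ b, (f b).IsQF) : (iInf f).IsQF := by
  have hfoldr : ∀ l : List (L.BoundedFormula α n), (∀ φ ∈ l, φ.IsQF) →
      (l.foldr (· ⊓ ·) ⊤).IsQF := by
    intro l hl
    induction l with
    | nil => exact .top
    | cons φ l ih =>
      exact (hl φ List.mem_cons_self).inf (ih fun ψ hψ => hl ψ (List.mem_cons_of_mem φ hψ))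
  refine hfoldr _ fun φ hφ => ?_
  obtain ⟨b, -, rfl⟩ := List.mem_map.1 hφ
  exact hf b

theorem isExistentialQF_exs {α : Type*} : ∀ {n : ℕ} {φ : groupLang.BoundedFormula α n},
    IsExistentialQF φ → IsExistentialQF φ.exs
  | 0, _, h => h
  | _ + 1, φ, h => isExistentialQF_exs (φ := φ.ex) h.ex

/-- The clauses `y a * y b = y c` for `(a, b, c) ∈ R` and `y a ≠ 1` for `a ∈ P`, in the variables
`y 0, …, y (n - 1)`. -/
def partialTableClause {n : ℕ} (R : Set (Fin n × Fin n × Fin n)) (P : Set (Fin n)) :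
    R ⊕ P → groupLang.BoundedFormula Empty n
  | .inl r => (Functions.apply₂ (L := groupLang) GroupFunc.mul &r.1.1 &r.1.2.1).bdEqual &r.1.2.2
  | .inr a => (Term.bdEqual &a.1 (Constants.term (L := groupLang) GroupFunc.one)).not

/-- The existential sentence saying that some tuple satisfies all clauses of
`partialTableClause R P`. -/
noncomputable def partialTableSentence {n : ℕ} (R : Set (Fin n × Fin n × Fin n))
    (P : Set (Fin n)) : groupLang.Sentence :=
  (iInf (partialTableClause R P)).exs

theorem isExistentialQF_partialTableSentence {n : ℕ} (R : Set (Fin n × Fin n × Fin n))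
    (P : Set (Fin n)) : IsExistentialQF (partialTableSentence R P) := by
  refine isExistentialQF_exs (.of_isQF (isQF_iInf ?_))
  rintro (r | a)
  · exact (IsAtomic.equal _ _).isQF
  · exact (IsAtomic.equal _ _).isQF.not

theorem realize_partialTableSentence {n : ℕ} {R : Set (Fin n × Fin n × Fin n)}
    {P : Set (Fin n)} : H ⊨ partialTableSentence R P ↔
      ∃ y : Fin n → H, (∀ r ∈ R, y r.1 * y r.2.1 = y r.2.2) ∧ ∀ a ∈ P, y a ≠ 1 := by
  refine realize_exs.trans (exists_congr fun y => ?_)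
  rw [realize_iInf, Sum.forall, Subtype.forall, Subtype.forall]
  rfl

theorem exists_monoidHom_forall_ne_one [Group.FG G] (hvf : VirtuallyFree G)
    (hGH : ∀ φ : groupLang.Sentence, IsExistentialQF φ → G ⊨ φ → H ⊨ φ)
    {A : Set G} (hA : A.Finite) (h1 : 1 ∉ A) : ∃ φ : G →* H, ∀ a ∈ A, φ a ≠ 1 := by
  classical
  obtain ⟨Z, hZfin, hAZ, hext⟩ := exists_finite_superset_hasExtensionProperty.{u, w} hvf hA
  have := hZfin.to_subtype
  obtain ⟨n, ⟨e⟩⟩ := Finite.exists_equiv_fin Z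
  let v : Fin n → G := fun i => e.symm i
  have hv : ∀ z (hz : z ∈ Z), v (e ⟨z, hz⟩) = z := fun z hz =>
    congrArg Subtype.val (e.symm_apply_apply ⟨z, hz⟩)
  obtain ⟨y, hy, hy1⟩ := realize_partialTableSentence.1 <|
    hGH (partialTableSentence {r | v r.1 * v r.2.1 = v r.2.2} {i | v i ∈ A})
      (isExistentialQF_partialTableSentence _ _)
      (realize_partialTableSentence.2 ⟨v, fun _ hr => hr, fun i hi h => h1 (h ▸ hi)⟩)
  let j : G → H := fun g => if h : g ∈ Z then y (e ⟨g, h⟩) else 1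
  have hj : ∀ z (hz : z ∈ Z), j z = y (e ⟨z, hz⟩) := fun z hz => dif_pos hz
  have hjhom : IsPartialHom Z j := by
    intro a ha b hb hab
    rw [hj a ha, hj b hb, hj _ hab]
    refine (hy (e ⟨a, ha⟩, e ⟨b, hb⟩, e ⟨_, hab⟩) ?_).symm
    simp only [Set.mem_ofPred_eq, hv]
  obtain ⟨φ, hφ⟩ := hext H j hjhom
  refine ⟨φ, fun a ha => ?_⟩
  rw [hφ a (hAZ ha), hj a (hAZ ha)]
  exact hy1 _ (by rwa [Set.mem_ofPred_eq, hv])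

theorem exists_injective_monoidHom [Group.FG G] [Group.FG H] (hG : VirtuallyFree G)
    (hH : VirtuallyFree H) (hout : OutFinite G) (hGH : ExistentiallyEquivalent G H) :
    ∃ φ : G →* H, Function.Injective φ := by
  obtain ⟨D, hD, h1, hinj⟩ := exists_finite_forall_injective hG hout
  obtain ⟨φ, hφ⟩ := exists_monoidHom_forall_ne_one hG (fun χ h => (hGH χ h).1) hD h1
  obtain ⟨ψ, hψ⟩ := exists_monoidHom_forall_ne_one hH (fun χ h => (hGH χ h).2) (hD.image φ)
    fun ⟨d, hd, hd1⟩ => hφ d hd hd1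
  have hψφ : Function.Injective (ψ.comp φ) := hinj _ fun d hd => hψ _ ⟨d, hd, rfl⟩
  exact ⟨φ, .of_comp (f := ψ) hψφ⟩

/-- A group isomorphism, as an isomorphism of structures for the language of groups. -/
def groupLangEquiv (e : G ≃* H) : G ≃[groupLang] H where
  toEquiv := e.toEquiv
  map_fun' f x := by
    cases f with
    | mul => exact map_mul e _ _
    | inv => exact map_inv e _
    | one => exact map_one e
  map_rel' r _ := r.elim

end Logic

end VirtuallyFree

theorem coHopfian_outFinite_existEquiv_iff_elemEquiv_iff_iso_general
    (G : Type*) (G' : Type*) [Group G] [Group G']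
    (hfg : Group.FG G) (hfg' : Group.FG G')
    (hvf : VirtuallyFree G) (hvf' : VirtuallyFree G') (hco : CoHopfian G)
    (hout : OutFinite G) (hout' : OutFinite G') :
    List.TFAE [ExistentiallyEquivalent G G', G ≅[groupLang] G', Nonempty (G ≃* G')] := by
  tfae_have 2 → 1 := fun h φ _ => elementarilyEquivalent_iff.1 h φ
  tfae_have 3 → 2 := fun ⟨e⟩ =>
    StrongHomClass.elementarilyEquivalent (VirtuallyFree.groupLangEquiv e)
  tfae_have 1 → 3 := by
    intro h
    obtain ⟨φ, hφ⟩ := VirtuallyFree.exists_injective_monoidHom hvf hvf' hout h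
    obtain ⟨ψ, hψ⟩ := VirtuallyFree.exists_injective_monoidHom hvf' hvf hout'
      fun χ hχ => (h χ hχ).symm
    have hψφ : Function.Surjective (ψ.comp φ) := hco _ (hψ.comp hφ)
    exact ⟨(MulEquiv.ofBijective ψ ⟨hψ, .of_comp (g := φ) hψφ⟩).symm⟩
  tfae_finish

/-- Two finitely generated co-Hopfian virtually free groups with finite outer
automorphism groups are ∃-equivalent iff elementarily equivalent iff isomorphic. -/
theorem coHopfian_outFinite_existEquiv_iff_elemEquiv_iff_iso
    (G : Type*) (G' : Type*) [Group G] [Group G']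
    (hfg : Group.FG G) (hfg' : Group.FG G')
    (hvf : VirtuallyFree G) (hvf' : VirtuallyFree G')
    (hco : CoHopfian G) (hco' : CoHopfian G')
    (hout : OutFinite G) (hout' : OutFinite G') :
    List.TFAE [ExistentiallyEquivalent G G', G ≅[groupLang] G', Nonempty (G ≃* G')] :=
  coHopfian_outFinite_existEquiv_iff_elemEquiv_iff_iso_general G G' hfg hfg' hvf hvf' hco hout hout'
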